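/- Let M be a (σ,∇)-module over 𝓔^† which is a sub-(σ,∇)-module of M'⊗_{𝓔_+}𝓔^†, where M' is a (σ,∇)-module over 𝓔_+. Then there is a sub-(σ,∇)-module M'' of M' over 𝓔_+ such that M is equal to M''⊗_{𝓔_+}𝓔^† inside M'⊗_{𝓔_+}𝓔^†. -/

import Mathlib

/-!
STATEMENT 6: Let `M` be a `(σ,∇)`-module over `𝓔^† = Γ^†[1/p]` which is a
sub-`(σ,∇)`-module of `M'⊗_{𝓔_+}𝓔^†`, where `M'` is a `(σ,∇)`-module over
`𝓔_+ = Γ_+[1/p]`.  Then there is a sub-`(σ,∇)`-module `M''` of `M'` over `𝓔_+`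
such that `M = M''⊗_{𝓔_+}𝓔^†` inside `M'⊗_{𝓔_+}𝓔^†`.

As everything is finite free (𝓔^† is a field) we state this concretely:
`M'` is given by matrices `Φ', N'` over `𝓔_+` (with `Φ'` invertible up to a
power of `p` and the `(σ,∇)`-compatibility `dΦ' + N'·Φ' = c·(Φ'·σ(N'))`,
`c = q·u^{q−1}`, `q = p^f`); a rank-`l` sub-`(σ,∇)`-module of `M'⊗𝓔^†` is the
column span of an `n×l` matrix `V` over `𝓔^†` of rank `l` (i.e. admitting a
left inverse over `𝓔^†`) satisfying `Φ'·σ(V) = V·A` with `A` invertible up to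
a power of `p` over `𝓔^†`, and `dV + N'·V = V·C` over `𝓔^†`.  The conclusion
produces a matrix `W` with entries in `𝓔_+` with the analogous stability
properties over `𝓔_+`, whose `𝓔^†`-column span equals that of `V`, i.e.
`V = W·G` for an invertible `l×l` matrix `G` over `𝓔^†`.

`Γ` is the `p`-adic completion of `𝒪((u))` (`𝒪 = W(k)`) and the subring `Γ^†`
is carved out by the overconvergence condition `liminf_{i→−∞} v_p(x_i)/(−i) > 0`
on the coefficients, which are axiomatized as in the other statements.
-/

set_option synthInstance.maxHeartbeats 1000000
set_option maxHeartbeats 4000000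

noncomputable section

/-- `Γ`: the `p`-adic completion of the Laurent series ring `𝒪((u))`, `𝒪 = W(k)`. -/
abbrev GammaRing (p : ℕ) [Fact p.Prime] (k : Type*) [Field k] [CharP k p] : Type _ :=
  AdicCompletion (Ideal.span {(p : LaurentSeries (WittVector p k))})
    (LaurentSeries (WittVector p k))

/-- `𝓔 = Γ[1/p]`, the fraction field of `Γ` (ambient ring for `𝓔_+` and `𝓔^†`). -/
abbrev ERing (p : ℕ) [Fact p.Prime] (k : Type*) [Field k] [CharP k p] : Type _ :=
  FractionRing (GammaRing p k)

/-- The canonical map `Γ → 𝓔`. -/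
abbrev gammaToE (p : ℕ) [Fact p.Prime] (k : Type*) [Field k] [CharP k p] :
    GammaRing p k →+* ERing p k :=
  algebraMap (GammaRing p k) (ERing p k)

/-- The canonical map `𝒪((u)) → Γ`. -/
abbrev laurentToGamma (p : ℕ) [Fact p.Prime] (k : Type*) [Field k] [CharP k p] :
    LaurentSeries (WittVector p k) →+* GammaRing p k :=
  algebraMap (LaurentSeries (WittVector p k)) (GammaRing p k)

/-- The canonical map `Γ_+ = 𝒪[[u]] → 𝓔`. -/
abbrev psToE (p : ℕ) [Fact p.Prime] (k : Type*) [Field k] [CharP k p] :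
    PowerSeries (WittVector p k) →+* ERing p k :=
  ((gammaToE p k).comp (laurentToGamma p k)).comp
    (HahnSeries.ofPowerSeries ℤ (WittVector p k))

/-- The canonical map `𝒪 → 𝓔` (constant series). -/
abbrev wittToE (p : ℕ) [Fact p.Prime] (k : Type*) [Field k] [CharP k p] :
    WittVector p k →+* ERing p k :=
  ((gammaToE p k).comp (laurentToGamma p k)).comp
    (HahnSeries.C : WittVector p k →+* LaurentSeries (WittVector p k))

/-- The element `u` of `𝓔`. -/
def uE (p : ℕ) [Fact p.Prime] (k : Type*) [Field k] [CharP k p] : ERing p k :=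
  (gammaToE p k) (laurentToGamma p k (HahnSeries.single (1 : ℤ) (1 : WittVector p k)))

/-- `𝓔_+ = Γ_+[1/p]` inside `𝓔`. -/
def EPlusSet (p : ℕ) [Fact p.Prime] (k : Type*) [Field k] [CharP k p] :
    Set (ERing p k) :=
  {x | ∃ (g : PowerSeries (WittVector p k)) (j : ℕ), (p : ERing p k) ^ j * x = psToE p k g}

/-- The overconvergent subring `Γ^†` of `Γ`, as a set (in terms of the coefficient
structure `coeff`): `liminf_{i→−∞} v_p(x_i)/(−i) > 0`. -/
def GammaDagSet (p : ℕ) [Fact p.Prime] (k : Type*) [Field k] [CharP k p]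
    (coeff : ℤ → GammaRing p k →+ WittVector p k) : Set (GammaRing p k) :=
  {x | ∃ m : ℕ, 0 < m ∧ ∃ N : ℤ, ∀ i ≤ N,
    (p : WittVector p k) ^ ((-i).toNat / m) ∣ coeff i x}

/-- `𝓔^† = Γ^†[1/p]` inside `𝓔`. -/
def EDagSet (p : ℕ) [Fact p.Prime] (k : Type*) [Field k] [CharP k p]
    (coeff : ℤ → GammaRing p k →+ WittVector p k) : Set (ERing p k) :=
  {x | ∃ (y : GammaRing p k) (j : ℕ),
    y ∈ GammaDagSet p k coeff ∧ (p : ERing p k) ^ j * x = gammaToE p k y}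

/-!
A bounded overconvergent series converges on some annulus `ρ < |u| < 1`, so that `𝓔^†` is a subring
of the Robba ring `ℛ`, and `𝓔₊` consists of its bounded elements without terms of negative degree.
Let `Φ` be the matrix of the Frobenius of `M'`, and let the columns of `V` span `M`.

By Dwork's trick a change of basis over `ℛ₊`, the ring of the elements of `ℛ` without terms of
negative degree, makes `Φ` constant. Once `Φ` is constant, iterating `Φ · σ(V) = V · A` shows that
for every `m` the module `M` has a basis of vectors of series in `u ^ (q ^ m)`. The ratios between
the maximal minors of `V` do not depend on the basis, and a ratio of series in `u ^ (q ^ m)` for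
every `m` is a constant: `M` is spanned over `Frac ℛ` by constant vectors. Undoing the change of
basis turns these into vectors over `ℛ₊`, which by Cramer's rule may be chosen bounded, that is,
over `𝓔₊`.

Hence `M'' = M ∩ M'` has the same rank as `M`. It is saturated in `M'`, and `𝓔₊` is a principal
ideal domain by Weierstrass division, so `M''` is a direct summand of `M'` and `M` is its base
change. It inherits `F` and `∇` from `M` and `M'`.
-/

open Filter Topology Pointwise

namespace Robba

section Convolution

variable {K : Type*} [NormedField K] {r : ℝ} {x y z : ℤ → K}

/-- Absolute convergence of the bidirectional series `∑ xᵢ uⁱ` on the circle `|u| = r`. -/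
def ConvergesAt (r : ℝ) (x : ℤ → K) : Prop := Summable fun i => ‖x i‖ * r ^ i

/-- Convergence of `∑ xᵢ uⁱ` on some annulus `ρ < |u| < 1`. -/
def IsOverconvergent (x : ℤ → K) : Prop := ∀ᶠ r in 𝓝[<] (1 : ℝ), ConvergesAt r x

/-- The coefficients of the product of the bidirectional series `∑ xᵢ uⁱ` and `∑ yᵢ uⁱ`. -/
def convolution (x y : ℤ → K) (n : ℤ) : K := ∑' i, x i * y (n - i)

theorem eventually_pos_nhdsLT_one : ∀ᶠ r in 𝓝[<] (1 : ℝ), 0 < r :=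
  eventually_nhdsWithin_of_eventually_nhds (lt_mem_nhds one_pos)

theorem zpow_mul_zpow_sub (hr : 0 < r) (i n : ℤ) : r ^ i * r ^ (n - i) = r ^ n := by
  rw [← zpow_add₀ hr.ne', add_sub_cancel]

theorem ConvergesAt.summable_shear (hr : 0 < r) (hx : ConvergesAt r x) (hy : ConvergesAt r y) :
    Summable fun t : ℤ × ℤ => ‖x t.1‖ * ‖y (t.2 - t.1)‖ * r ^ t.2 := by
  let shear : ℤ × ℤ ≃ ℤ × ℤ :=
    { toFun t := (t.1, t.2 - t.1)
      invFun t := (t.1, t.1 + t.2)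
      left_inv t := by simp
      right_inv t := by simp }
  refine (shear.summable_iff.2 (Summable.mul_of_nonneg hx hy (fun i => by positivity)
    fun i => by positivity)).congr fun t => ?_
  simp only [shear, Function.comp_apply, Equiv.coe_fn_mk, ← zpow_mul_zpow_sub hr t.1 t.2]
  ring

theorem ConvergesAt.summable_norm_mul (hr : 0 < r) (hx : ConvergesAt r x)
    (hy : ConvergesAt r y) (n : ℤ) : Summable fun i => ‖x i * y (n - i)‖ := by
  refine (((hx.summable_shear hr hy).prod_symm.prod_factor n).mul_right (r ^ n)⁻¹).congr
    fun i => ?_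
  rw [norm_mul]
  exact mul_inv_cancel_right₀ (zpow_pos hr n).ne' _

theorem ConvergesAt.summable_mul [CompleteSpace K] (hr : 0 < r) (hx : ConvergesAt r x)
    (hy : ConvergesAt r y) (n : ℤ) : Summable fun i => x i * y (n - i) :=
  (hx.summable_norm_mul hr hy n).of_norm

theorem ConvergesAt.add (hr : 0 < r) (hx : ConvergesAt r x) (hy : ConvergesAt r y) :
    ConvergesAt r (x + y) := by
  refine (Summable.add hx hy).of_nonneg_of_le (fun i => by positivity) fun n => ?_
  rw [← add_mul]
  gcongr
  exact norm_add_le _ _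

theorem ConvergesAt.neg (hx : ConvergesAt r x) : ConvergesAt r (-x) := by
  simpa only [ConvergesAt, Pi.neg_apply, norm_neg] using hx

protected theorem ConvergesAt.convolution (hr : 0 < r) (hx : ConvergesAt r x)
    (hy : ConvergesAt r y) : ConvergesAt r (convolution x y) := by
  refine (hx.summable_shear hr hy).prod_symm.prod.of_nonneg_of_le (fun i => by positivity)
    fun n => ?_
  calc ‖∑' i, x i * y (n - i)‖ * r ^ n ≤ (∑' i, ‖x i * y (n - i)‖) * r ^ n := by
        gcongr
        exact norm_tsum_le_tsum_norm (hx.summable_norm_mul hr hy n)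
    _ = ∑' i, ‖x i‖ * ‖y (n - i)‖ * r ^ n := by simp only [← tsum_mul_right, norm_mul]

theorem convergesAt_single (r : ℝ) (n : ℤ) (a : K) : ConvergesAt r (Pi.single n a) :=
  summable_of_ne_finset_zero (s := {n}) fun i hi => by
    simp only [Pi.single_eq_of_ne (Finset.notMem_singleton.1 hi), norm_zero, zero_mul]

theorem ConvergesAt.exists_bound (hr : 0 < r) (hx : ConvergesAt r x) :
    ∃ B, ∀ i, ‖x i‖ * r ^ i ≤ B :=
  ⟨_, fun i => hx.le_tsum i fun _ _ => by positivity⟩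

theorem convolution_comm (x y : ℤ → K) : convolution x y = convolution y x := by
  ext n
  simp only [convolution]
  rw [← (Equiv.subLeft n).tsum_eq]
  simp only [Equiv.subLeft_apply, sub_sub_cancel, mul_comm]

theorem ConvergesAt.summable_convolution_assoc [CompleteSpace K] (hr : 0 < r)
    (hx : ConvergesAt r x) (hy : ConvergesAt r y) (hz : ConvergesAt r z) (n : ℤ) :
    Summable fun t : ℤ × ℤ => x t.1 * y (t.2 - t.1) * z (n - t.2) := by
  obtain ⟨B, hB⟩ := hz.exists_bound hr
  refine .of_norm <| ((hx.summable_shear hr hy).mul_right (B * (r ^ n)⁻¹)).of_nonneg_of_le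
    (fun _ => norm_nonneg _) fun t => ?_
  have hz_le : ‖z (n - t.2)‖ ≤ r ^ t.2 * (B * (r ^ n)⁻¹) := by
    have hrn := zpow_pos hr n
    have hB := hB (n - t.2)
    rw [zpow_sub₀ hr.ne'] at hB
    field_simp at hB ⊢
    exact hB
  rw [norm_mul, norm_mul, mul_assoc (‖x t.1‖ * ‖y (t.2 - t.1)‖)]
  gcongr

theorem ConvergesAt.convolution_assoc [CompleteSpace K] (hr : 0 < r)
    (hx : ConvergesAt r x) (hy : ConvergesAt r y) (hz : ConvergesAt r z) :
    convolution (convolution x y) z = convolution x (convolution y z) := by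
  ext n
  calc ∑' k, (∑' i, x i * y (k - i)) * z (n - k)
      = ∑' k, ∑' i, x i * y (k - i) * z (n - k) := by simp only [tsum_mul_right]
    _ = ∑' i, ∑' k, x i * y (k - i) * z (n - k) :=
      Summable.tsum_comm (f := fun i k => x i * y (k - i) * z (n - k))
        (hx.summable_convolution_assoc hr hy hz n)
    _ = ∑' i, x i * ∑' k, y k * z (n - i - k) := by
      refine tsum_congr fun i => ?_
      rw [← tsum_mul_left, ← (Equiv.addLeft i).tsum_eq]
      simp only [Equiv.coe_addLeft, add_sub_cancel_left, sub_add_eq_sub_sub, mul_assoc]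

theorem ConvergesAt.convolution_add [CompleteSpace K] (hr : 0 < r)
    (hx : ConvergesAt r x) (hy : ConvergesAt r y) (hz : ConvergesAt r z) :
    convolution x (y + z) = convolution x y + convolution x z := by
  ext n
  simp only [convolution, Pi.add_apply, mul_add]
  exact (hx.summable_mul hr hy n).tsum_add (hx.summable_mul hr hz n)

theorem single_convolution (n : ℤ) (a : K) (x : ℤ → K) (m : ℤ) :
    convolution (Pi.single n a) x m = a * x (m - n) := by
  rw [convolution, tsum_eq_single n fun i hi => by rw [Pi.single_eq_of_ne hi, zero_mul],
    Pi.single_eq_same]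

theorem zero_convolution (x : ℤ → K) : convolution 0 x = 0 := by
  ext n
  simp only [convolution, Pi.zero_apply, zero_mul, tsum_zero]

theorem IsOverconvergent.add (hx : IsOverconvergent x) (hy : IsOverconvergent y) :
    IsOverconvergent (x + y) := by
  filter_upwards [hx, hy, eventually_pos_nhdsLT_one] with r hx hy hr using hx.add hr hy

protected theorem IsOverconvergent.convolution (hx : IsOverconvergent x) (hy : IsOverconvergent y) :
    IsOverconvergent (convolution x y) := by
  filter_upwards [hx, hy, eventually_pos_nhdsLT_one] with r hx hy hr using hx.convolution hr hy

theorem isOverconvergent_single (n : ℤ) (a : K) : IsOverconvergent (Pi.single n a) :=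
  .of_forall fun r => convergesAt_single r n a

theorem IsOverconvergent.summable_mul [CompleteSpace K] (hx : IsOverconvergent x)
    (hy : IsOverconvergent y) (n : ℤ) : Summable fun i => x i * y (n - i) :=
  have ⟨_, hr, hx, hy⟩ := (eventually_pos_nhdsLT_one.and (hx.and hy)).exists
  hx.summable_mul hr hy n

theorem IsOverconvergent.convolution_assoc [CompleteSpace K] (hx : IsOverconvergent x)
    (hy : IsOverconvergent y) (hz : IsOverconvergent z) :
    convolution (convolution x y) z = convolution x (convolution y z) :=
  have ⟨_, hr, hx, hy, hz⟩ := (eventually_pos_nhdsLT_one.and (hx.and (hy.and hz))).exists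
  hx.convolution_assoc hr hy hz

theorem IsOverconvergent.convolution_add [CompleteSpace K] (hx : IsOverconvergent x)
    (hy : IsOverconvergent y) (hz : IsOverconvergent z) :
    convolution x (y + z) = convolution x y + convolution x z :=
  have ⟨_, hr, hx, hy, hz⟩ := (eventually_pos_nhdsLT_one.and (hx.and (hy.and hz))).exists
  hx.convolution_add hr hy hz

end Convolution

section Ring

variable (K : Type*) [NormedField K]

/-- The additive group of the overconvergent bidirectional sequences. -/
def overconvergentSubgroup : AddSubgroup (ℤ → K) where
  carrier := {x | IsOverconvergent x}
  add_mem' := IsOverconvergent.add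
  zero_mem' := Pi.single_zero (M := fun _ : ℤ => K) 0 ▸ isOverconvergent_single 0 0
  neg_mem' {x} (hx : IsOverconvergent x) := hx.mono fun _ h => h.neg

/-- The Robba ring over `K`: the bidirectional series over `K` that converge on some annulus
`ρ < |u| < 1`. -/
def RobbaRing : Type _ := overconvergentSubgroup K

instance : AddCommGroup (RobbaRing K) := inferInstanceAs (AddCommGroup (overconvergentSubgroup K))

variable {K}

/-- The sequence of the coefficients of an element of the Robba ring. -/
def coeff : RobbaRing K →+ (ℤ → K) := (overconvergentSubgroup K).subtype

/-- The element of the Robba ring with given coefficients. -/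
def mk (x : ℤ → K) (hx : IsOverconvergent x) : RobbaRing K := ⟨x, hx⟩

@[simp]
theorem coeff_mk (x : ℤ → K) (hx : IsOverconvergent x) : coeff (mk x hx) = x := rfl

theorem isOverconvergent_coeff (x : RobbaRing K) : IsOverconvergent (coeff x) := x.2

theorem coeff_injective : Function.Injective (coeff : RobbaRing K → ℤ → K) :=
  Subtype.val_injective

theorem coeff_ne_zero {x : RobbaRing K} : coeff x ≠ 0 ↔ x ≠ 0 :=
  map_ne_zero_iff coeff coeff_injective

variable [CompleteSpace K]

instance : CommRing (RobbaRing K) where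
  __ := (inferInstance : AddCommGroup (RobbaRing K))
  mul x y := mk (convolution (coeff x) (coeff y))
    ((isOverconvergent_coeff x).convolution (isOverconvergent_coeff y))
  one := mk (Pi.single 0 1) (isOverconvergent_single 0 1)
  mul_assoc x y z := coeff_injective <| (isOverconvergent_coeff x).convolution_assoc
    (isOverconvergent_coeff y) (isOverconvergent_coeff z)
  mul_comm x y := coeff_injective (convolution_comm _ _)
  one_mul x := coeff_injective <| funext fun m =>
    (single_convolution 0 1 (coeff x) m).trans (by rw [one_mul, sub_zero])
  mul_one x := coeff_injective <| (convolution_comm _ _).trans <| funext fun m =>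
    (single_convolution 0 1 (coeff x) m).trans (by rw [one_mul, sub_zero])
  left_distrib x y z := coeff_injective <| (isOverconvergent_coeff x).convolution_add
    (isOverconvergent_coeff y) (isOverconvergent_coeff z)
  right_distrib x y z := coeff_injective <| (convolution_comm _ _).trans <|
    ((isOverconvergent_coeff z).convolution_add (isOverconvergent_coeff x)
      (isOverconvergent_coeff y)).trans <|
    congrArg₂ (· + ·) (convolution_comm _ _) (convolution_comm _ _)
  zero_mul x := coeff_injective (zero_convolution _)
  mul_zero x := coeff_injective ((convolution_comm _ _).trans (zero_convolution _))

theorem coeff_one : coeff (1 : RobbaRing K) = Pi.single 0 1 := rfl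

theorem coeff_mul (x y : RobbaRing K) : coeff (x * y) = convolution (coeff x) (coeff y) := rfl

theorem coeff_sum_apply {ι : Type*} (s : Finset ι) (f : ι → RobbaRing K) (i : ℤ) :
    coeff (∑ a ∈ s, f a) i = ∑ a ∈ s, coeff (f a) i := by
  rw [map_sum, Finset.sum_apply]

/-- The constant series. -/
def const : K →+* RobbaRing K where
  toFun a := mk (Pi.single 0 a) (isOverconvergent_single 0 a)
  map_one' := rfl
  map_zero' := coeff_injective (Pi.single_zero 0)
  map_add' a b := coeff_injective (Pi.single_add (f := fun _ : ℤ => K) 0 a b)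
  map_mul' a b := coeff_injective <| funext fun i => by
    rw [coeff_mul, coeff_mk, coeff_mk, single_convolution, sub_zero, coeff_mk, Pi.single_apply,
      Pi.single_apply, mul_ite, mul_zero]

theorem coeff_const (a : K) : coeff (const a) = Pi.single 0 a := rfl

theorem coeff_const_mul (a : K) (x : RobbaRing K) (i : ℤ) :
    coeff (const a * x) i = a * coeff x i := by
  rw [coeff_mul, coeff_const, single_convolution, sub_zero]

theorem const_injective : Function.Injective (const : K → RobbaRing K) := fun _ _ h =>
  Pi.single_injective (M := fun _ : ℤ => K) 0 (congrArg coeff h)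

end Ring

section LeadingTerm

theorem exists_least_argmax {f : ℤ → ℝ} (hf : Tendsto f cofinite (𝓝 0)) {j : ℤ} (hj : 0 < f j) :
    ∃ a, 0 < f a ∧ (∀ i, f i ≤ f a) ∧ ∀ i < a, f i < f a := by
  have hfin : {i | f j ≤ f i}.Finite := by
    simpa only [eventually_cofinite, not_lt] using hf.eventually (gt_mem_nhds hj)
  obtain ⟨a, ha, hmax⟩ :=
    hfin.exists_maximalFor (fun i => toLex (f i, -i)) _ ⟨j, le_refl (f j)⟩
  have hlex : ∀ i, f i < f a ∨ f i = f a ∧ a ≤ i := by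
    intro i
    rcases lt_or_ge (f i) (f j) with hi | hi
    · exact Or.inl (hi.trans_le ha)
    · have := (le_total (toLex (f i, -i)) (toLex (f a, -a))).elim id (hmax hi)
      simpa only [Prod.Lex.toLex_le_toLex, neg_le_neg_iff] using this
  refine ⟨a, hj.trans_le ha, fun i => (hlex i).elim le_of_lt fun h => h.1.le, fun i hi => ?_⟩
  exact (hlex i).resolve_right fun h => hi.not_ge h.2

variable {K : Type*} [NormedField K]

theorem norm_tsum_lt_of_forall_norm_lt [IsUltrametricDist K] {g : ℤ → K} (hg : Summable g)
    {M : ℝ} (hM : 0 < M) (h : ∀ i, ‖g i‖ < M) : ‖∑' i, g i‖ < M := by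
  by_cases hg0 : ∀ j, g j = 0
  · simpa only [hg0, tsum_zero, norm_zero] using hM
  · push Not at hg0
    obtain ⟨j, hj⟩ := hg0
    obtain ⟨a, -, ha, -⟩ := exists_least_argmax
      (tendsto_norm_zero.comp hg.tendsto_cofinite_zero) (norm_pos_iff.2 hj)
    exact (IsUltrametricDist.norm_tsum_le_of_forall_le ha).trans_lt (h a)

theorem norm_tsum_eq_of_forall_ne_norm_lt [IsUltrametricDist K] {f : ℤ → K} (hf : Summable f)
    {a : ℤ} (ha : f a ≠ 0) (h : ∀ i ≠ a, ‖f i‖ < ‖f a‖) : ‖∑' i, f i‖ = ‖f a‖ := by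
  have hrest := hf.hasSum.update a 0
  have hlt : ‖∑' i, f i - f a‖ < ‖f a‖ := by
    rw [show ∑' i, f i - f a = 0 - f a + ∑' i, f i by ring, ← hrest.tsum_eq]
    refine norm_tsum_lt_of_forall_norm_lt hrest.summable (norm_pos_iff.2 ha) fun i => ?_
    rcases eq_or_ne i a with rfl | hi
    · simpa only [Function.update_self, norm_zero] using norm_pos_iff.2 ha
    · simpa only [Function.update_of_ne hi] using h i hi
  simpa only [sub_add_cancel, max_eq_right hlt.le] using
    IsUltrametricDist.norm_add_eq_max_of_norm_ne_norm hlt.ne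

variable {r : ℝ} {x y : ℤ → K} {a b : ℤ}

/-- The index `a` is the least one at which `‖xᵢ‖ rⁱ` attains its maximal value, and this value is
nonzero: the term `xₐ uᵃ` dominates the series on the circle `|u| = r`. -/
def IsLeading (r : ℝ) (x : ℤ → K) (a : ℤ) : Prop :=
  0 < ‖x a‖ * r ^ a ∧ (∀ i, ‖x i‖ * r ^ i ≤ ‖x a‖ * r ^ a) ∧
    ∀ i < a, ‖x i‖ * r ^ i < ‖x a‖ * r ^ a

theorem ConvergesAt.exists_isLeading (hr : 0 < r) (hx : ConvergesAt r x) (hx0 : x ≠ 0) :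
    ∃ a, IsLeading r x a :=
  have ⟨_, hj⟩ := Function.ne_iff.1 hx0
  exists_least_argmax hx.tendsto_cofinite_zero (mul_pos (norm_pos_iff.2 hj) (zpow_pos hr _))

theorem IsLeading.norm_mul_lt (hr : 0 < r) (hx : IsLeading r x a) (hy : IsLeading r y b) {i : ℤ}
    (hi : i ≠ a) : ‖x i * y (a + b - i)‖ < ‖x a * y b‖ := by
  obtain ⟨hxa, hx_le, hx_lt⟩ := hx
  obtain ⟨hyb, hy_le, hy_lt⟩ := hy
  refine lt_of_mul_lt_mul_right (a := r ^ (a + b)) ?_ (zpow_pos hr _).le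
  calc ‖x i * y (a + b - i)‖ * r ^ (a + b)
      = (‖x i‖ * r ^ i) * (‖y (a + b - i)‖ * r ^ (a + b - i)) := by
        rw [norm_mul, ← zpow_mul_zpow_sub hr i (a + b)]
        ring
    _ < (‖x a‖ * r ^ a) * (‖y b‖ * r ^ b) := by
        rcases lt_or_gt_of_ne hi with h | h
        · exact mul_lt_mul_of_lt_of_le_of_nonneg_of_pos (hx_lt i h) (hy_le _) (by positivity) hyb
        · exact mul_lt_mul_of_le_of_lt_of_nonneg_of_pos (hx_le i) (hy_lt _ (by lia))
            (by positivity) hxa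
    _ = ‖x a * y b‖ * r ^ (a + b) := by
        rw [norm_mul, zpow_add₀ hr.ne']
        ring

theorem IsLeading.norm_convolution [CompleteSpace K] [IsUltrametricDist K] (hr : 0 < r)
    (hx : ConvergesAt r x) (hy : ConvergesAt r y) (ha : IsLeading r x a) (hb : IsLeading r y b) :
    ‖convolution x y (a + b)‖ = ‖x a * y b‖ := by
  have hxa : x a ≠ 0 := norm_ne_zero_iff.1 (left_ne_zero_of_mul ha.1.ne')
  have hyb : y b ≠ 0 := norm_ne_zero_iff.1 (left_ne_zero_of_mul hb.1.ne')
  have h := norm_tsum_eq_of_forall_ne_norm_lt (hx.summable_mul hr hy (a + b)) (a := a)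
  simp only [add_sub_cancel_left] at h
  exact h (mul_ne_zero hxa hyb) fun i hi => ha.norm_mul_lt hr hb hi

theorem ConvergesAt.exists_norm_mul_norm_le [CompleteSpace K] [IsUltrametricDist K] (hr : 0 < r)
    (hx : ConvergesAt r x) (hy : ConvergesAt r y) (hx0 : x ≠ 0) (hy0 : y ≠ 0) :
    ∃ n, 0 < ‖convolution x y n‖ * r ^ n ∧
      ∀ i j, (‖x i‖ * r ^ i) * (‖y j‖ * r ^ j) ≤ ‖convolution x y n‖ * r ^ n := by
  obtain ⟨a, ha⟩ := hx.exists_isLeading hr hx0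
  obtain ⟨b, hb⟩ := hy.exists_isLeading hr hy0
  have hab : ‖convolution x y (a + b)‖ * r ^ (a + b) = (‖x a‖ * r ^ a) * (‖y b‖ * r ^ b) := by
    rw [ha.norm_convolution hr hx hy hb, norm_mul, zpow_add₀ hr.ne']
    ring
  refine ⟨a + b, hab ▸ mul_pos ha.1 hb.1, fun i j => hab ▸ ?_⟩
  exact mul_le_mul (ha.2.1 i) (hb.2.1 j) (by positivity) ha.1.le

end LeadingTerm

section Subrings

variable {K : Type*} [NormedField K] [CompleteSpace K]

instance [IsUltrametricDist K] : IsDomain (RobbaRing K) := by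
  have : Nontrivial (RobbaRing K) := const_injective.nontrivial
  have : NoZeroDivisors (RobbaRing K) := by
    refine ⟨fun {x y} h => ?_⟩
    by_contra! hxy
    obtain ⟨r, hr, hx, hy⟩ := (eventually_pos_nhdsLT_one.and
      ((isOverconvergent_coeff x).and (isOverconvergent_coeff y))).exists
    obtain ⟨n, hn, -⟩ :=
      hx.exists_norm_mul_norm_le hr hy (coeff_ne_zero.2 hxy.1) (coeff_ne_zero.2 hxy.2)
    simp [← coeff_mul, h] at hn
  exact NoZeroDivisors.to_isDomain _

variable (K) in
/-- The bounded Robba ring: the elements of the Robba ring with bounded coefficients. -/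
def boundedSubring [IsUltrametricDist K] : Subring (RobbaRing K) where
  carrier := {x | ∃ B, ∀ i, ‖coeff x i‖ ≤ B}
  mul_mem' := by
    rintro x y ⟨A, hA⟩ ⟨B, hB⟩
    refine ⟨A * B, fun n => IsUltrametricDist.norm_tsum_le_of_forall_le fun i => ?_⟩
    rw [norm_mul]
    exact mul_le_mul (hA _) (hB _) (norm_nonneg _) ((norm_nonneg _).trans (hA 0))
  add_mem' := by
    rintro x y ⟨A, hA⟩ ⟨B, hB⟩
    refine ⟨A + B, fun n => ?_⟩
    rw [map_add]
    exact (norm_add_le _ _).trans (add_le_add (hA n) (hB n))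
  one_mem' := ⟨1, fun i => by
    rw [coeff_one, Pi.single_apply]
    split_ifs <;> simp only [norm_one, norm_zero, le_refl, zero_le_one]⟩
  zero_mem' := ⟨0, fun i => by rw [map_zero, Pi.zero_apply, norm_zero]⟩
  neg_mem' := by
    rintro x ⟨A, hA⟩
    exact ⟨A, fun i => by rw [map_neg, Pi.neg_apply, norm_neg]; exact hA i⟩

/-- The nonzero coefficients of the series `x` are indexed by `S`. -/
def SupportedIn (S : Set ℤ) (x : RobbaRing K) : Prop := ∀ i ∉ S, coeff x i = 0

omit [CompleteSpace K] in
theorem SupportedIn.mono {S T : Set ℤ} (h : S ⊆ T) {x : RobbaRing K} (hx : SupportedIn S x) :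
    SupportedIn T x :=
  fun i hi => hx i fun hiS => hi (h hiS)

theorem SupportedIn.add {S : Set ℤ} {x y : RobbaRing K} (hx : SupportedIn S x)
    (hy : SupportedIn S y) : SupportedIn S (x + y) := fun n hn => by
  rw [map_add, Pi.add_apply, hx n hn, hy n hn, add_zero]

theorem SupportedIn.mul {S T : Set ℤ} {x y : RobbaRing K} (hx : SupportedIn S x)
    (hy : SupportedIn T y) : SupportedIn (S + T) (x * y) := by
  intro n hn
  refine (tsum_congr fun i => ?_).trans tsum_zero
  by_cases hi : i ∈ S
  · rw [hy _ fun hni => hn ⟨i, hi, n - i, hni, add_sub_cancel i n⟩, mul_zero]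
  · rw [hx i hi, zero_mul]

theorem supportedIn_const {S : Set ℤ} (hS : 0 ∈ S) (a : K) : SupportedIn S (const a) :=
  fun _ hi => Pi.single_eq_of_ne (M := fun _ : ℤ => K) (ne_of_mem_of_not_mem hS hi).symm a

variable (K) in
/-- The subring of the Robba ring formed by the series supported in `S`. -/
def supportedSubring (S : AddSubmonoid ℤ) : Subring (RobbaRing K) where
  carrier := {x | SupportedIn S x}
  mul_mem' hx hy := (hx.mul hy).mono (AddSubmonoid.coe_add_self_eq S).subset
  add_mem' := SupportedIn.add
  one_mem' := map_one (const (K := K)) ▸ supportedIn_const S.zero_mem 1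
  zero_mem' _ _ := rfl
  neg_mem' {x} hx i hi := by rw [map_neg, Pi.neg_apply, hx i hi, neg_zero]

variable (K) in
/-- The subring `ℛ₊` of the Robba ring formed by the series without terms of negative degree. -/
abbrev plusSubring : Subring (RobbaRing K) := supportedSubring K (AddSubmonoid.nonneg ℤ)

omit [CompleteSpace K] in
theorem eventually_forall_norm_mul_zpow_le {x : RobbaRing K} {A : ℝ}
    (hA : ∀ i, ‖coeff x i‖ ≤ A) :
    ∃ B, ∀ᶠ r in 𝓝[<] (1 : ℝ), ∀ i, ‖coeff x i‖ * r ^ i ≤ B := by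
  obtain ⟨s, ⟨hs, hs1⟩, hxs⟩ := ((eventually_pos_nhdsLT_one.and self_mem_nhdsWithin).and
    (isOverconvergent_coeff x)).exists
  obtain ⟨B, hB⟩ := hxs.exists_bound hs
  refine ⟨max A B, ?_⟩
  filter_upwards [Ioo_mem_nhdsLT hs1] with r hr i
  have hr0 := hs.trans hr.1
  rcases le_or_gt 0 i with hi | hi
  · refine (mul_le_of_le_one_right (norm_nonneg _) ?_).trans ((hA i).trans (le_max_left _ _))
    simpa only [one_zpow] using zpow_le_zpow_left₀ hi hr0.le hr.2.le
  · refine (mul_le_mul_of_nonneg_left ?_ (norm_nonneg _)).trans ((hB i).trans (le_max_right _ _))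
    simpa only [zpow_neg, inv_inv] using inv_anti₀ (zpow_pos hs (-i))
      (zpow_le_zpow_left₀ (neg_nonneg.2 hi.le) hs.le hr.1.le)

theorem mem_boundedSubring_of_mul_mem [IsUltrametricDist K] {x y : RobbaRing K} (hy : y ≠ 0)
    (hxy : x * y ∈ boundedSubring K) : x ∈ boundedSubring K := by
  rcases eq_or_ne x 0 with rfl | hx
  · exact zero_mem _
  obtain ⟨A, hA⟩ := hxy
  obtain ⟨B, hB⟩ := eventually_forall_norm_mul_zpow_le hA
  obtain ⟨j, hj⟩ := Function.ne_iff.1 (coeff_ne_zero.2 hy)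
  refine ⟨B / ‖coeff y j‖, fun i => (le_div_iff₀ (norm_pos_iff.2 hj)).2 ?_⟩
  have hzpow : ∀ m : ℤ, Tendsto (fun r : ℝ => r ^ m) (𝓝[<] 1) (𝓝 1) := fun m => by
    simpa only [one_zpow] using (continuousAt_zpow₀ (1 : ℝ) m
      (Or.inl one_ne_zero)).tendsto.mono_left nhdsWithin_le_nhds
  have hlim := ((hzpow i).const_mul ‖coeff x i‖).mul ((hzpow j).const_mul ‖coeff y j‖)
  rw [mul_one, mul_one] at hlim
  refine le_of_tendsto hlim ?_
  filter_upwards [hB, isOverconvergent_coeff x, isOverconvergent_coeff y,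
    eventually_pos_nhdsLT_one] with r hB hxr hyr hr
  obtain ⟨n, -, hn⟩ :=
    hxr.exists_norm_mul_norm_le hr hyr (coeff_ne_zero.2 hx) (coeff_ne_zero.2 hy)
  exact (hn i j).trans (hB n)

end Subrings

section Frobenius

variable {K : Type*} [NormedField K]

/-- The coefficients `∑ τ(xᵢ) u^{qi}` of the image of `∑ xᵢ uⁱ` under the Frobenius lift. -/
def expand (τ : K → K) (q : ℕ) (x : ℤ → K) : ℤ → K :=
  Function.extend (fun j : ℤ => q * j) (τ ∘ x) 0

variable {q : ℕ} [NeZero q]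

variable (q) in
theorem mul_left_injective_natCast : Function.Injective fun j : ℤ => (q : ℤ) * j :=
  mul_right_injective₀ (Nat.cast_ne_zero.2 (NeZero.ne q))

theorem expand_mul (τ : K → K) (x : ℤ → K) (j : ℤ) : expand τ q x (q * j) = τ (x j) :=
  (mul_left_injective_natCast q).extend_apply _ _ j

omit [NeZero q] in
theorem expand_of_not_dvd (τ : K → K) (x : ℤ → K) {i : ℤ} (hi : ¬ (q : ℤ) ∣ i) :
    expand τ q x i = 0 :=
  Function.extend_apply' _ _ i fun ⟨j, hj⟩ => hi ⟨j, hj.symm⟩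

theorem eq_expand_iff {τ : K → K} {x y : ℤ → K} :
    y = expand τ q x ↔ (∀ j, y (q * j) = τ (x j)) ∧ ∀ i, ¬ (q : ℤ) ∣ i → y i = 0 := by
  refine ⟨?_, fun ⟨hdvd, hndvd⟩ => funext fun i => ?_⟩
  · rintro rfl
    exact ⟨expand_mul τ x, fun i hi => expand_of_not_dvd τ x hi⟩
  · by_cases hi : (q : ℤ) ∣ i
    · obtain ⟨j, rfl⟩ := hi
      rw [hdvd, expand_mul]
    · rw [hndvd i hi, expand_of_not_dvd τ x hi]

theorem expand_single (τ : K →+* K) (n : ℤ) (a : K) :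
    expand τ q (Pi.single n a) = Pi.single (q * n) (τ a) := by
  refine (eq_expand_iff.2 ⟨fun j => ?_, fun i hi => ?_⟩).symm
  · simp only [Pi.single_apply, (mul_left_injective_natCast q).eq_iff, apply_ite τ, map_zero]
  · exact Pi.single_eq_of_ne (M := fun _ : ℤ => K) (fun h => hi ⟨n, h⟩) _

theorem expand_add (τ : K →+* K) (x y : ℤ → K) :
    expand τ q (x + y) = expand τ q x + expand τ q y := by
  refine (eq_expand_iff.2 ⟨fun j => ?_, fun i hi => ?_⟩).symm
  · simp only [Pi.add_apply, expand_mul, map_add]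
  · simp only [Pi.add_apply, expand_of_not_dvd _ _ hi, add_zero]

theorem expand_comp_sub (τ : K → K) (x : ℤ → K) (m : ℤ) :
    expand τ q (fun j => x (j - m)) = fun i => expand τ q x (i - q * m) := by
  refine (eq_expand_iff.2 ⟨fun j => ?_, fun i hi => ?_⟩).symm
  · rw [← mul_sub, expand_mul]
  · exact expand_of_not_dvd τ x fun hdvd => hi ((dvd_sub_left (dvd_mul_right _ m)).1 hdvd)

theorem expand_of_neg (τ : K →+* K) {x : ℤ → K} (hx : ∀ i < 0, x i = 0) {i : ℤ} (hi : i < 0) :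
    expand τ q x i = 0 := by
  by_cases h : (q : ℤ) ∣ i
  · obtain ⟨j, rfl⟩ := h
    rw [expand_mul, hx j (neg_of_mul_neg_right hi (Nat.cast_nonneg q)), map_zero]
  · exact expand_of_not_dvd _ _ h

omit [NeZero q] in
theorem tendsto_pow_nhdsLT_one (hq : q ≠ 0) : Tendsto (fun r : ℝ => r ^ q) (𝓝[<] 1) (𝓝[<] 1) := by
  refine tendsto_nhdsWithin_iff.2 ⟨?_, ?_⟩
  · simpa only [one_pow] using
      ((continuous_pow q).tendsto (1 : ℝ)).mono_left nhdsWithin_le_nhds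
  · filter_upwards [eventually_pos_nhdsLT_one, self_mem_nhdsWithin] with r hr hr1
    exact pow_lt_one₀ hr.le hr1 hq

theorem ConvergesAt.expand {τ : K → K} (hτ : ∀ a, ‖τ a‖ = ‖a‖) {r : ℝ} {x : ℤ → K}
    (hx : ConvergesAt (r ^ q) x) : ConvergesAt r (expand τ q x) := by
  refine ((mul_left_injective_natCast q).summable_iff fun i hi => ?_).1
    (hx.congr fun j => ?_)
  · rw [expand_of_not_dvd τ x fun ⟨j, hj⟩ => hi ⟨j, hj.symm⟩, norm_zero, zero_mul]
  · rw [Function.comp_apply, expand_mul, hτ, zpow_mul, zpow_natCast]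

theorem IsOverconvergent.expand {τ : K → K} (hτ : ∀ a, ‖τ a‖ = ‖a‖) {x : ℤ → K}
    (hx : IsOverconvergent x) : IsOverconvergent (expand τ q x) :=
  ((tendsto_pow_nhdsLT_one (NeZero.ne q)).eventually hx).mono fun _ => ConvergesAt.expand hτ

theorem expand_convolution {τ : K →+* K} (hτ : Continuous τ) {x y : ℤ → K}
    (hxy : ∀ n, Summable fun i => x i * y (n - i)) :
    expand τ q (convolution x y) = convolution (expand τ q x) (expand τ q y) := by
  have hconv (n : ℤ) : convolution (expand τ q x) (expand τ q y) n =
      ∑' j, τ (x j) * expand τ q y (n - q * j) := by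
    rw [convolution, ← (mul_left_injective_natCast q).tsum_eq]
    · exact tsum_congr fun j => by rw [expand_mul]
    · intro i hi
      by_contra hrange
      refine hi ?_
      simp only [expand_of_not_dvd τ x fun ⟨j, hj⟩ => hrange ⟨j, hj.symm⟩, zero_mul]
  refine (eq_expand_iff.2 ⟨fun m => ?_, fun n hn => ?_⟩).symm
  · rw [hconv, convolution, (hxy m).map_tsum τ hτ]
    exact tsum_congr fun j => by rw [← mul_sub, expand_mul, map_mul]
  · rw [hconv, ← tsum_zero]
    refine tsum_congr fun j => ?_
    rw [expand_of_not_dvd τ y fun h => hn ((dvd_sub_left (dvd_mul_right _ _)).1 h), mul_zero]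

variable [CompleteSpace K] {τ : K →+* K}

variable (q) in
/-- The Frobenius lift `∑ xᵢ uⁱ ↦ ∑ τ(xᵢ) u^{qi}` of the Robba ring. -/
def frobeniusLift (hτ : Isometry τ) : RobbaRing K →+* RobbaRing K where
  toFun x := mk (expand τ q (coeff x))
    ((isOverconvergent_coeff x).expand ((AddMonoidHomClass.isometry_iff_norm τ).1 hτ))
  map_one' := coeff_injective <| by
    rw [coeff_mk, coeff_one, expand_single, mul_zero, map_one]
  map_zero' := coeff_injective <| by
    rw [coeff_mk, map_zero, ← Pi.single_zero (M := fun _ : ℤ => K) 0, expand_single, map_zero,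
      mul_zero]
  map_add' x y := coeff_injective <| by
    rw [coeff_mk, map_add, map_add, expand_add, coeff_mk, coeff_mk]
  map_mul' x y := coeff_injective <| by
    rw [coeff_mk, coeff_mul, coeff_mul, coeff_mk, coeff_mk,
      expand_convolution hτ.continuous
        ((isOverconvergent_coeff x).summable_mul (isOverconvergent_coeff y))]

variable (hτ : Isometry τ)

theorem coeff_frobeniusLift (x : RobbaRing K) :
    coeff (frobeniusLift q hτ x) = expand τ q (coeff x) := rfl

theorem SupportedIn.frobeniusLift {S : Set ℤ} {x : RobbaRing K} (hx : SupportedIn S x) :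
    SupportedIn ((fun j => q * j) '' S) (frobeniusLift q hτ x) := by
  intro i hi
  rw [coeff_frobeniusLift]
  by_cases h : (q : ℤ) ∣ i
  · obtain ⟨j, rfl⟩ := h
    rw [expand_mul, hx j fun hj => hi ⟨j, hj, rfl⟩, map_zero]
  · exact expand_of_not_dvd _ _ h

theorem frobeniusLift_mem_plusSubring {x : RobbaRing K} (hx : x ∈ plusSubring K) :
    frobeniusLift q hτ x ∈ plusSubring K := by
  refine (SupportedIn.frobeniusLift hτ hx).mono ?_
  rintro _ ⟨j, hj, rfl⟩
  exact mul_nonneg (Nat.cast_nonneg q) (AddSubmonoid.mem_nonneg.1 hj)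

end Frobenius

section PlusSubring

variable {K : Type*} [NormedField K] [CompleteSpace K]

theorem coeff_of_neg (x : plusSubring K) {i : ℤ} (hi : i < 0) : coeff x.1 i = 0 :=
  x.2 i fun h => hi.not_ge (AddSubmonoid.mem_nonneg.1 h)

/-- The constant coefficient, as a ring homomorphism on `ℛ₊`. -/
def constantCoeff : plusSubring K →+* K where
  toFun x := coeff x.1 0
  map_one' := Pi.single_eq_same (M := fun _ : ℤ => K) 0 1
  map_zero' := rfl
  map_add' _ _ := rfl
  map_mul' x y := by
    rw [Subring.coe_mul, coeff_mul, convolution, tsum_eq_single 0, sub_zero]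
    intro i hi
    rcases lt_or_gt_of_ne hi with h | h
    · rw [coeff_of_neg x h, zero_mul]
    · rw [coeff_of_neg y (by lia), mul_zero]

/-- The embedding of the constants into `ℛ₊`. -/
def constPlus : K →+* plusSubring K :=
  const.codRestrict _ fun a => supportedIn_const (zero_mem _) a

theorem coeff_mul_constPlus (x : plusSubring K) (a : K) (i : ℤ) :
    coeff (x * constPlus a).1 i = coeff x.1 i * a := by
  rw [mul_comm, mul_comm (coeff x.1 i)]
  exact coeff_const_mul a x.1 i

theorem plusSubring_ext {x y : plusSubring K} (h : ∀ n : ℕ, coeff x.1 n = coeff y.1 n) : x = y :=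
  Subtype.ext <| coeff_injective <| funext fun i => by
    rcases lt_or_ge i 0 with hi | hi
    · rw [coeff_of_neg x hi, coeff_of_neg y hi]
    · lift i to ℕ using hi
      exact h i

variable {q : ℕ} {τ : K →+* K} (hτ : Isometry τ)

variable (q) in
/-- The restriction of the Frobenius lift to `ℛ₊`. -/
def frobeniusPlus [NeZero q] : plusSubring K →+* plusSubring K :=
  (frobeniusLift q hτ).restrict _ _ fun _ => frobeniusLift_mem_plusSubring hτ

theorem coeff_mul_frobeniusPlus [NeZero q] (x y : plusSubring K) (N : ℕ) :
    coeff (x * frobeniusPlus q hτ y).1 N =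
      ∑ j ∈ Finset.range (N + 1), coeff x.1 (N - q * (j : ℕ)) * τ (coeff y.1 (j : ℕ)) := by
  have hexpand := expand_mul τ (coeff y.1) (q := q)
  rw [mul_comm, Subring.coe_mul, coeff_mul, convolution,
    ← ((mul_left_injective_natCast q).comp Nat.cast_injective).tsum_eq]
  · refine (tsum_congr fun j => ?_).trans (tsum_eq_sum fun j hj => ?_)
    · rw [Function.comp_apply, mul_comm]
      exact congrArg _ (hexpand j)
    · have hNj : N < q * j := (not_le.1 fun h => hj (Finset.mem_range_succ_iff.2 h)).trans_le
        (Nat.le_mul_of_pos_left j (NeZero.pos q))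
      rw [coeff_of_neg x (sub_neg.2 (mod_cast hNj)), zero_mul]
  · intro i hi
    by_contra hrange
    refine hi ?_
    suffices h : coeff (frobeniusPlus q hτ y).1 i = 0 by simp only [h, zero_mul]
    by_cases hqi : (q : ℤ) ∣ i
    · obtain ⟨j, rfl⟩ := hqi
      refine (hexpand j).trans ?_
      have hj : j < 0 := not_le.1 fun hj => hrange ⟨j.toNat, by simp [Int.toNat_of_nonneg hj]⟩
      rw [coeff_of_neg y hj, map_zero]
    · exact expand_of_not_dvd _ _ hqi

end PlusSubring

section PolynomialGrowth

theorem exists_le_pow_of_le_half {b : ℕ → ℝ} {c : ℝ} (h0 : b 0 ≤ 1)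
    (h : ∀ N ≠ 0, ∀ B, 0 ≤ B → (∀ j, 2 * j ≤ N → b j ≤ B) → b N ≤ c * B) :
    ∃ s : ℕ, ∀ N : ℕ, b N ≤ ((N : ℝ) + 1) ^ s := by
  obtain ⟨s, hs⟩ : ∃ s : ℕ, c * (3 / 4 : ℝ) ^ s ≤ 1 :=
    (((tendsto_pow_atTop_nhds_zero_of_lt_one (by norm_num) (by norm_num)).const_mul c).eventually
      (ge_mem_nhds (by norm_num))).exists
  refine ⟨s, fun N => ?_⟩
  induction N using Nat.strong_induction_on with
  | _ N ih =>
  rcases eq_or_ne N 0 with rfl | hN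
  · simpa using h0
  have hN1 : (1 : ℝ) ≤ N := mod_cast Nat.one_le_iff_ne_zero.2 hN
  calc b N ≤ c * (3 / 4 * ((N : ℝ) + 1)) ^ s := by
        refine h N hN _ (by positivity) fun j hj => (ih j (by lia)).trans ?_
        have hj' : (2 : ℝ) * j ≤ N := mod_cast hj
        gcongr
        linarith
    _ = c * (3 / 4) ^ s * ((N : ℝ) + 1) ^ s := by rw [mul_pow, mul_assoc]
    _ ≤ ((N : ℝ) + 1) ^ s := mul_le_of_le_one_left (by positivity) hs

variable {K : Type*} [NormedField K]

theorem summable_add_one_pow_mul_geometric (s : ℕ) {r : ℝ} (hr : 0 < r) (hr1 : r < 1) :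
    Summable fun N : ℕ => ((N : ℝ) + 1) ^ s * r ^ N := by
  have hnorm : ‖r‖ < 1 := by rwa [Real.norm_of_nonneg hr.le]
  have hsum : Summable fun N : ℕ => (N : ℝ) ^ s * r ^ N :=
    summable_pow_mul_geometric_of_norm_lt_one s hnorm
  refine (((summable_nat_add_iff 1).2 hsum).mul_right r⁻¹).congr fun N => ?_
  rw [Nat.cast_succ, pow_succ, mul_assoc, mul_assoc, mul_inv_cancel₀ hr.ne', mul_one]

theorem isOverconvergent_of_norm_le_pow {t : ℕ → K} {s : ℕ}
    (ht : ∀ N, ‖t N‖ ≤ ((N : ℝ) + 1) ^ s) :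
    IsOverconvergent (Function.extend (Nat.cast : ℕ → ℤ) t 0) := by
  filter_upwards [eventually_pos_nhdsLT_one, self_mem_nhdsWithin] with r hr hr1
  refine (Nat.cast_injective.summable_iff fun i hi => ?_).1 <|
    (summable_add_one_pow_mul_geometric s hr hr1).of_nonneg_of_le
      (fun N => mul_nonneg (norm_nonneg _) (zpow_nonneg hr.le _)) fun N => ?_
  · rw [Function.extend_apply' _ _ _ hi, Pi.zero_apply, norm_zero, zero_mul]
  · rw [Function.comp_apply, Nat.cast_injective.extend_apply, zpow_natCast]
    exact mul_le_mul_of_nonneg_right (ht N) (by positivity)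

theorem exists_plusSubring_coeff_eq [CompleteSpace K] {t : ℕ → K} {s : ℕ}
    (ht : ∀ N, ‖t N‖ ≤ ((N : ℝ) + 1) ^ s) :
    ∃ x : plusSubring K, ∀ N : ℕ, coeff x.1 N = t N :=
  ⟨⟨mk _ (isOverconvergent_of_norm_le_pow ht), fun i hi =>
    Function.extend_apply' _ _ i fun ⟨n, hn⟩ =>
      hi (hn ▸ AddSubmonoid.mem_nonneg.2 n.cast_nonneg)⟩,
    Nat.cast_injective.extend_apply t 0⟩

end PolynomialGrowth

section Dwork

attribute [local instance] Matrix.seminormedAddCommGroup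

variable {ι κ μ : Type*} [Fintype ι] [Fintype κ] [Fintype μ]

theorem norm_matrix_mul_le {K : Type*} [NormedField K] [IsUltrametricDist K]
    (X : Matrix ι κ K) (Y : Matrix κ μ K) : ‖X * Y‖ ≤ ‖X‖ * ‖Y‖ := by
  refine (Matrix.norm_le_iff (by positivity)).2 fun i j => ?_
  rw [Matrix.mul_apply]
  refine IsUltrametricDist.norm_sum_le_of_forall_le_of_nonneg (by positivity) fun m _ => ?_
  rw [norm_mul]
  exact mul_le_mul (X.norm_entry_le_entrywise_sup_norm) (Y.norm_entry_le_entrywise_sup_norm)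
    (norm_nonneg _) (norm_nonneg _)

theorem norm_matrix_sum_le {K α : Type*} [NormedField K] [IsUltrametricDist K] {s : Finset α}
    {X : α → Matrix ι κ K} {B : ℝ} (hB : 0 ≤ B) (hX : ∀ a ∈ s, ‖X a‖ ≤ B) :
    ‖∑ a ∈ s, X a‖ ≤ B := by
  refine (Matrix.norm_le_iff hB).2 fun i j => ?_
  rw [Matrix.sum_apply]
  exact IsUltrametricDist.norm_sum_le_of_forall_le_of_nonneg hB fun a ha =>
    (Matrix.norm_le_iff hB).1 (hX a ha) i j

theorem norm_matrix_map {K L : Type*} [NormedField K] [NormedField L] {τ : K → L}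
    (hτ : ∀ a, ‖τ a‖ = ‖a‖) (X : Matrix ι κ K) : ‖X.map τ‖ = ‖X‖ := by
  refine le_antisymm ((Matrix.norm_le_iff (norm_nonneg _)).2 fun i j => ?_)
    ((Matrix.norm_le_iff (norm_nonneg _)).2 fun i j => ?_)
  · exact (hτ _).trans_le X.norm_entry_le_entrywise_sup_norm
  · exact (hτ _).symm.trans_le (X.map τ).norm_entry_le_entrywise_sup_norm

variable [DecidableEq ι] {K : Type*} [NormedField K] {q : ℕ} {τ : K →+* K}

variable (q τ) in
/-- The coefficients of the solution `T` of `A · σ(T) = T · A₀` with `T₀ = 1`, where `A` has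
coefficients `A i` and `D` is the inverse of its constant coefficient. -/
def dworkCoeff (A : ℤ → Matrix ι ι K) (D : Matrix ι ι K) : ℕ → Matrix ι ι K
  | 0 => 1
  | N + 1 => (∑ j : Fin (N + 1), A ((N + 1 : ℕ) - q * (j : ℕ)) * (dworkCoeff A D j).map τ) * D

variable {A : ℤ → Matrix ι ι K} {D : Matrix ι ι K}

theorem dworkCoeff_of_ne_zero {N : ℕ} (hN : N ≠ 0) :
    dworkCoeff q τ A D N =
      (∑ j ∈ Finset.range N, A (N - q * (j : ℕ)) * (dworkCoeff q τ A D j).map τ) * D := by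
  obtain ⟨N, rfl⟩ := Nat.exists_eq_succ_of_ne_zero hN
  rw [dworkCoeff, Finset.sum_range]

theorem sum_mul_map_dworkCoeff [q.AtLeastTwo] (hA : ∀ i < 0, A i = 0) (hD : D * A 0 = 1) (N : ℕ) :
    ∑ j ∈ Finset.range (N + 1), A (N - q * (j : ℕ)) * (dworkCoeff q τ A D j).map τ =
      dworkCoeff q τ A D N * A 0 := by
  rcases eq_or_ne N 0 with rfl | hN
  · rw [Finset.sum_range_one, dworkCoeff, Matrix.map_one _ τ.map_zero τ.map_one, mul_one, one_mul,
      Nat.cast_zero, mul_zero, sub_zero]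
  · have hneg : (N : ℤ) - q * N < 0 := by
      have := Nat.mul_le_mul_right N (Nat.AtLeastTwo.prop (n := q))
      zify at this
      lia
    rw [Finset.sum_range_succ, hA _ hneg, zero_mul, add_zero, dworkCoeff_of_ne_zero hN, mul_assoc,
      hD, mul_one]

theorem exists_norm_dworkCoeff_le_pow [IsUltrametricDist K] [q.AtLeastTwo]
    (hτ : ∀ a, ‖τ a‖ = ‖a‖) (hA0 : ∀ i < 0, A i = 0) {C : ℝ} (hA : ∀ i, ‖A i‖ ≤ C) :
    ∃ s : ℕ, ∀ N : ℕ, ‖dworkCoeff q τ A D N‖ ≤ ((N : ℝ) + 1) ^ s := by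
  have hC : 0 ≤ C := (norm_nonneg _).trans (hA 0)
  refine exists_le_pow_of_le_half (c := C * ‖D‖) ?_ fun N hN B hB hle => ?_
  · rw [dworkCoeff]
    refine (Matrix.norm_le_iff zero_le_one).2 fun i j => ?_
    rw [Matrix.one_apply]
    split_ifs <;> simp only [norm_one, norm_zero, le_refl, zero_le_one]
  rw [dworkCoeff_of_ne_zero hN, mul_right_comm]
  refine (norm_matrix_mul_le _ _).trans (mul_le_mul_of_nonneg_right ?_ (norm_nonneg D))
  refine norm_matrix_sum_le (by positivity) fun j _ => ?_
  rcases lt_or_ge ((N : ℤ) - q * j) 0 with hneg | hpos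
  · rw [hA0 _ hneg, zero_mul, norm_zero]
    positivity
  · have hqj : q * j ≤ N := by zify; lia
    have hj : 2 * j ≤ N := (Nat.mul_le_mul_right j Nat.AtLeastTwo.prop).trans hqj
    refine (norm_matrix_mul_le _ _).trans ?_
    rw [norm_matrix_map hτ]
    exact mul_le_mul (hA _) (hle j hj) (norm_nonneg _) hC

variable [CompleteSpace K]

omit [DecidableEq ι] in
theorem exists_norm_map_coeff_le [IsUltrametricDist K] {A : Matrix ι κ (RobbaRing K)}
    (hA : ∀ a b, A a b ∈ boundedSubring K) : ∃ C, ∀ i, ‖A.map fun x => coeff x i‖ ≤ C := by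
  choose B hB using hA
  obtain ⟨C, hC⟩ := Finite.bddAbove_range fun ab : ι × κ => B ab.1 ab.2
  refine ⟨max C 0, fun i => (Matrix.norm_le_iff (le_max_right _ _)).2 fun a b => ?_⟩
  exact (hB a b i).trans ((hC ⟨(a, b), rfl⟩).trans (le_max_left _ _))

/-- Dwork's trick: the equation is solved coefficient by coefficient, and the coefficients of the
solution grow at most polynomially because the one of degree `N` depends only on those of degree
at most `N / q`. -/
theorem exists_mul_map_frobeniusPlus_eq [IsUltrametricDist K] [q.AtLeastTwo] (hτ : Isometry τ)
    {A : Matrix ι ι (plusSubring K)}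
    (hA : ∀ a b, (A a b : RobbaRing K) ∈ boundedSubring K) {D : Matrix ι ι K}
    (hD : D * A.map constantCoeff = 1) :
    ∃ T : Matrix ι ι (plusSubring K), T.map constantCoeff = 1 ∧
      A * T.map (frobeniusPlus q hτ) = T * (A.map constantCoeff).map constPlus := by
  obtain ⟨C, hC⟩ := exists_norm_map_coeff_le (A := A.map (plusSubring K).subtype) hA
  set Ac : ℤ → Matrix ι ι K := fun i => A.map fun x => coeff x.1 i
  have hneg : ∀ i < 0, Ac i = 0 := fun i hi => Matrix.ext fun a b => coeff_of_neg (A a b) hi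
  obtain ⟨s, hs⟩ := exists_norm_dworkCoeff_le_pow (q := q) (D := D)
    ((AddMonoidHomClass.isometry_iff_norm τ).1 hτ) hneg hC
  choose T hT using fun a b => exists_plusSubring_coeff_eq (t := fun N => dworkCoeff q τ Ac D N a b)
    fun N => (Matrix.norm_entry_le_entrywise_sup_norm _).trans (hs N)
  refine ⟨Matrix.of T, Matrix.ext fun a b => ?_, Matrix.ext fun a b => plusSubring_ext fun N => ?_⟩
  · exact (hT a b 0).trans (by rw [dworkCoeff])
  · have hsum := congrFun₂ (sum_mul_map_dworkCoeff (q := q) (τ := τ) hneg hD N) a b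
    simp only [Matrix.mul_apply, Matrix.sum_apply, Matrix.map_apply] at hsum ⊢
    simp only [AddSubmonoidClass.coe_finsetSum, coeff_sum_apply, coeff_mul_frobeniusPlus,
      coeff_mul_constPlus, Matrix.of_apply, hT]
    rw [Finset.sum_comm]
    exact hsum

end Dwork

section Trivialization

variable {K : Type*} [NormedField K] [CompleteSpace K]

variable (K) in
/-- The ideal of `ℛ₊` formed by the series divisible by `u ^ N`. -/
def orderIdeal (N : ℕ) : Ideal (plusSubring K) where
  carrier := {x | SupportedIn (Set.Ici (N : ℤ)) x.1}
  add_mem' := SupportedIn.add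
  zero_mem' _ _ := rfl
  smul_mem' x _ hy := (SupportedIn.mul x.2 hy).mono <|
    Set.add_subset_iff.2 fun _ hi _ hj => le_add_of_nonneg_of_le (AddSubmonoid.mem_nonneg.1 hi) hj

theorem mem_orderIdeal_one {x : plusSubring K} (hx : constantCoeff x = 0) : x ∈ orderIdeal K 1 :=
  fun i hi => by
    rcases (Int.lt_add_one_iff.1 (not_le.1 hi) : i ≤ 0).lt_or_eq with h | rfl
    · exact coeff_of_neg x h
    · exact hx

theorem eq_zero_of_forall_mem_orderIdeal {x : plusSubring K} (hx : ∀ N, x ∈ orderIdeal K (N + 1)) :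
    x = 0 :=
  plusSubring_ext fun n => hx n n (by simp)

variable {q : ℕ} [q.AtLeastTwo] {τ : K →+* K} (hτ : Isometry τ)

theorem frobeniusPlus_mem_orderIdeal {N : ℕ} {x : plusSubring K} (hx : x ∈ orderIdeal K (N + 1)) :
    frobeniusPlus q hτ x ∈ orderIdeal K (N + 1 + 1) := by
  refine (SupportedIn.frobeniusLift hτ hx).mono ?_
  rintro _ ⟨j, hj, rfl⟩
  have hq : (2 : ℤ) ≤ q := mod_cast Nat.AtLeastTwo.prop (n := q)
  simp only [Set.mem_Ici, Nat.cast_add, Nat.cast_one] at hj ⊢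
  nlinarith

variable {ι : Type*} [Fintype ι]

theorem eq_zero_of_eq_mul_map_frobeniusPlus_mul {Φ Ψ D : Matrix ι ι (plusSubring K)}
    (h : D = Φ * D.map (frobeniusPlus q hτ) * Ψ) (h0 : D.map constantCoeff = 0) : D = 0 := by
  have hmem : ∀ N a b, D a b ∈ orderIdeal K (N + 1) := by
    intro N
    induction N with
    | zero => exact fun a b => mem_orderIdeal_one (congrFun₂ h0 a b)
    | succ N ih =>
      intro a b
      rw [h, Matrix.mul_apply]
      refine sum_mem fun m _ => Ideal.mul_mem_right _ _ ?_
      rw [Matrix.mul_apply]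
      exact sum_mem fun m _ => Ideal.mul_mem_left _ _ (frobeniusPlus_mem_orderIdeal hτ (ih _ _))
  exact Matrix.ext fun a b => eq_zero_of_forall_mem_orderIdeal fun N => hmem N a b

theorem exists_trivialization [IsUltrametricDist K] [DecidableEq ι]
    {Φ Ψ : Matrix ι ι (plusSubring K)}
    (hΦ : ∀ a b, (Φ a b : RobbaRing K) ∈ boundedSubring K)
    (hΨ : ∀ a b, (Ψ a b : RobbaRing K) ∈ boundedSubring K) (hΦΨ : Φ * Ψ = 1) :
    ∃ (U U' : Matrix ι ι (plusSubring K)) (Φ₀ : Matrix ι ι K), U * U' = 1 ∧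
      Φ₀.map constPlus * U'.map (frobeniusPlus q hτ) = U' * Φ := by
  set Φ₀ := Φ.map constantCoeff with hΦ₀
  set Ψ₀ := Ψ.map constantCoeff with hΨ₀
  have hΨΦ₀ : Ψ₀ * Φ₀ = 1 := by
    rw [hΦ₀, hΨ₀, ← Matrix.map_mul, mul_eq_one_comm.1 hΦΨ,
      Matrix.map_one _ constantCoeff.map_zero constantCoeff.map_one]
  have hΦΨ₀ : Φ₀.map constPlus * Ψ₀.map constPlus = (1 : Matrix ι ι (plusSubring K)) := by
    rw [← Matrix.map_mul, mul_eq_one_comm.1 hΨΦ₀,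
      Matrix.map_one _ constPlus.map_zero constPlus.map_one]
  obtain ⟨U, hU0, hU⟩ := exists_mul_map_frobeniusPlus_eq (q := q) hτ hΦ hΨΦ₀
  obtain ⟨T, hT0, hT⟩ := exists_mul_map_frobeniusPlus_eq (q := q) hτ (A := Ψ.transpose)
    (D := Φ₀.transpose) (fun a b => hΨ b a) (by
      rw [Matrix.transpose_map, ← Matrix.transpose_mul, hΨΦ₀, Matrix.transpose_one])
  set U' := T.transpose with hU'
  have hU'Ψ : U'.map (frobeniusPlus q hτ) * Ψ = Ψ₀.map constPlus * U' := by
    have hTt := congrArg Matrix.transpose hT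
    rwa [Matrix.transpose_mul, Matrix.transpose_mul, Matrix.transpose_transpose] at hTt
  have hU'fix : U' = Φ₀.map constPlus * U'.map (frobeniusPlus q hτ) * Ψ := by
    rw [mul_assoc, hU'Ψ, ← mul_assoc, hΦΨ₀, one_mul]
  refine ⟨U, U', Φ₀, sub_eq_zero.1 (eq_zero_of_eq_mul_map_frobeniusPlus_mul (q := q) hτ
    (Φ := Φ) (Ψ := Ψ) ?_ ?_), ?_⟩
  · rw [Matrix.map_sub _ (map_sub _), Matrix.map_mul, Matrix.map_one _ (map_zero _) (map_one _),
      mul_sub, sub_mul, mul_one, hΦΨ, ← mul_assoc, hU, mul_assoc, mul_assoc, ← mul_assoc _ _ Ψ,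
      ← hU'fix]
  · rw [Matrix.map_sub _ (map_sub _), Matrix.map_mul, Matrix.map_one _ (map_zero _) (map_one _),
      hU0, hU', Matrix.transpose_map, hT0, Matrix.transpose_one, mul_one, sub_self]
  · conv_rhs => rw [hU'fix]
    rw [mul_assoc _ Ψ, mul_eq_one_comm.1 hΦΨ, mul_one]

end Trivialization

section Minors

variable {R m n : Type*} [CommRing R] [Fintype n]

theorem exists_det_submatrix_ne_zero [Nontrivial R] [Fintype m] [DecidableEq n]
    {L : Matrix n m R} {V : Matrix m n R} (h : L * V = 1) :
    ∃ I : n → m, (V.submatrix I id).det ≠ 0 := by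
  classical
  by_contra! hminors
  have hrows : L * V = fun i => ∑ a, L i a • V a := by
    ext i j
    simp only [Matrix.mul_apply, Finset.sum_apply, Pi.smul_apply, smul_eq_mul]
  have hexpand := (Matrix.detRowAlternating (n := n) (R := R)).toMultilinearMap.map_sum
    fun i a => L i a • V a
  refine one_ne_zero ((Matrix.det_one (n := n) (R := R)).symm.trans ?_)
  rw [← h, hrows]
  refine hexpand.trans (Finset.sum_eq_zero fun I _ => ?_)
  rw [MultilinearMap.map_smul_univ]
  exact smul_eq_zero_of_right _ (hminors I)

variable {S : Subring R}

theorem matrix_mul_mem {l : Type*} {X : Matrix l n R} {Y : Matrix n m R}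
    (hX : ∀ i j, X i j ∈ S) (hY : ∀ i j, Y i j ∈ S) (i : l) (j : m) : (X * Y) i j ∈ S := by
  rw [Matrix.mul_apply]
  exact sum_mem fun a _ => mul_mem (hX i a) (hY a j)

theorem exists_map_subtype_eq {l : Type*} {X : Matrix l m R} (hX : ∀ i j, X i j ∈ S) :
    ∃ Y : Matrix l m S, Y.map S.subtype = X :=
  ⟨fun i j => ⟨X i j, hX i j⟩, rfl⟩

variable [DecidableEq n] {X : Matrix n n R}

theorem matrix_det_mem (hX : ∀ i j, X i j ∈ S) : X.det ∈ S := by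
  obtain ⟨Y, rfl⟩ := exists_map_subtype_eq hX
  exact S.subtype.map_det Y ▸ (Y.det).2

theorem matrix_adjugate_mem (hX : ∀ i j, X i j ∈ S) (i j : n) : X.adjugate i j ∈ S := by
  obtain ⟨Y, rfl⟩ := exists_map_subtype_eq hX
  have h : (Y.map S.subtype).adjugate = Y.adjugate.map S.subtype :=
    (S.subtype.map_adjugate Y).symm
  exact h ▸ (Y.adjugate i j).2

end Minors

section Descent

variable {K : Type*} [NormedField K]

open Classical in
/-- The series formed by the terms of `x` whose degree lies in `S`. -/
def restrict (S : Set ℤ) (x : RobbaRing K) : RobbaRing K :=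
  mk (S.indicator (coeff x)) <| by
    filter_upwards [isOverconvergent_coeff x, eventually_pos_nhdsLT_one] with r hx hr
    refine Summable.of_nonneg_of_le (fun i => by positivity) (fun i => ?_) hx
    gcongr
    exact norm_indicator_le_norm_self _ _

theorem coeff_restrict (S : Set ℤ) (x : RobbaRing K) :
    coeff (restrict S x) = S.indicator (coeff x) := rfl

variable [CompleteSpace K]

theorem restrict_mul {S T : Set ℤ} {g : RobbaRing K} (hg : SupportedIn T g)
    (hST : ∀ t ∈ T, ∀ i, t + i ∈ S ↔ i ∈ S) (x : RobbaRing K) :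
    restrict S (g * x) = g * restrict S x := by
  refine coeff_injective (funext fun n => ?_)
  have hterm (i : ℤ) : coeff g i * S.indicator (coeff x) (n - i) =
      S.indicator (fun n => coeff g i * coeff x (n - i)) n := by
    by_cases hi : i ∈ T
    · have hn := hST i hi (n - i)
      rw [add_sub_cancel] at hn
      by_cases h : n ∈ S
      · rw [Set.indicator_of_mem h, Set.indicator_of_mem (hn.1 h)]
      · rw [Set.indicator_of_notMem h, Set.indicator_of_notMem (mt hn.2 h), mul_zero]
    · simp only [hg i hi, zero_mul, Set.indicator_zero]
  rw [coeff_restrict, coeff_mul, coeff_mul, convolution, coeff_restrict, tsum_congr hterm]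
  by_cases h : n ∈ S
  · simp only [Set.indicator_of_mem h, convolution]
  · simp only [Set.indicator_of_notMem h, tsum_zero]

variable (K) in
/-- The subring of the Robba ring formed by the series in `u ^ Q`. -/
abbrev multiplesSubring (Q : ℤ) : Subring (RobbaRing K) :=
  supportedSubring K (AddSubgroup.zmultiples Q).toAddSubmonoid

theorem restrict_dvd_sub_mul {Q : ℤ} {g : RobbaRing K} (hg : g ∈ multiplesSubring K Q) (s : ℤ)
    (x : RobbaRing K) : restrict {i | Q ∣ i - s} (g * x) = g * restrict {i | Q ∣ i - s} x :=
  restrict_mul hg (fun t ht i => by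
    have ht : Q ∣ t := Int.mem_zmultiples_iff.1 ht
    rw [Set.mem_ofPred_eq, add_sub_assoc, dvd_add_right ht, Set.mem_ofPred_eq]) x

theorem eventually_not_pow_dvd {q : ℕ} [q.AtLeastTwo] {i : ℤ} (hi : i ≠ 0) :
    ∀ᶠ m : ℕ in atTop, ¬ (q : ℤ) ^ m ∣ i := by
  have hq : 1 < q := Nat.AtLeastTwo.prop
  filter_upwards [eventually_ge_atTop i.natAbs] with m hm hdvd
  have hle := Nat.le_of_dvd (Int.natAbs_pos.2 hi) (Int.natAbs_dvd_natAbs.2 hdvd)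
  rw [Int.natAbs_pow, Int.natAbs_natCast] at hle
  exact (Nat.lt_pow_self hq).not_ge (hle.trans hm)

theorem tendsto_coeff_restrict_mul {q : ℕ} [q.AtLeastTwo] (x y : RobbaRing K) (s n : ℤ) :
    Tendsto (fun m : ℕ => coeff (restrict {i | (q : ℤ) ^ m ∣ i - s} x * y) n) atTop
      (𝓝 (coeff x s * coeff y (n - s))) := by
  rw [← single_convolution s (coeff x s) (coeff y) n]
  obtain ⟨r, hr, hx, hy⟩ := (eventually_pos_nhdsLT_one.and
    ((isOverconvergent_coeff x).and (isOverconvergent_coeff y))).exists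
  refine tendsto_tsum_of_dominated_convergence (hx.summable_norm_mul hr hy n) (fun i => ?_)
    (.of_forall fun m i => ?_)
  · refine tendsto_const_nhds.congr' ?_
    rcases eq_or_ne i s with rfl | hi
    · refine .of_forall fun m => ?_
      have hmem : i ∈ {j | (q : ℤ) ^ m ∣ j - i} := by simp
      simp only [Pi.single_eq_same, coeff_restrict, Set.indicator_of_mem hmem]
    · filter_upwards [eventually_not_pow_dvd (q := q) (sub_ne_zero.2 hi)] with m hm
      have hmem : i ∉ {j | (q : ℤ) ^ m ∣ j - s} := hm
      simp only [Pi.single_eq_of_ne hi, coeff_restrict, Set.indicator_of_notMem hmem]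
  · rw [norm_mul, norm_mul, coeff_restrict]
    gcongr
    exact norm_indicator_le_norm_self _ _

/-- For every `s`, the terms of `z` and `y` whose degree is congruent to `s` modulo `q ^ m` have the
same ratio `z / y`; as `m` grows only the terms of degree `s` remain. -/
theorem exists_eq_const_mul [IsUltrametricDist K] {q : ℕ} [q.AtLeastTwo] {y z : RobbaRing K}
    (hy : y ≠ 0) (h : ∀ m : ℕ, ∃ g ≠ 0, g * z ∈ multiplesSubring K ((q : ℤ) ^ m) ∧
      g * y ∈ multiplesSubring K ((q : ℤ) ^ m)) :
    ∃ e : K, z = const e * y := by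
  have hrestrict (m : ℕ) (s : ℤ) : restrict {i | (q : ℤ) ^ m ∣ i - s} z * y =
      restrict {i | (q : ℤ) ^ m ∣ i - s} y * z := by
    obtain ⟨g, hg, hgz, hgy⟩ := h m
    have heq := congrArg (restrict {i | (q : ℤ) ^ m ∣ i - s}) (mul_right_comm g z y)
    rw [restrict_dvd_sub_mul hgz, restrict_dvd_sub_mul hgy] at heq
    exact mul_left_cancel₀ hg (by linear_combination -heq)
  have hcross (s t : ℤ) : coeff z s * coeff y t = coeff y s * coeff z t := by
    have hz := tendsto_coeff_restrict_mul (q := q) z y s (t + s)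
    have hy := tendsto_coeff_restrict_mul (q := q) y z s (t + s)
    simp only [hrestrict, add_sub_cancel_right] at hz hy
    exact tendsto_nhds_unique hz hy
  obtain ⟨s, hs⟩ := Function.ne_iff.1 (coeff_ne_zero.2 hy)
  refine ⟨coeff z s / coeff y s, coeff_injective (funext fun t => ?_)⟩
  rw [coeff_const_mul, div_mul_eq_mul_div, hcross, mul_div_cancel_left₀ _ hs]

variable {ι κ : Type*} [Fintype ι] [Fintype κ] [DecidableEq κ] {q : ℕ} [q.AtLeastTwo] {τ : K →+* K}
  (hτ : Isometry τ)

theorem exists_mul_mem_multiplesSubring {Φ₀ : Matrix ι ι K} {V : Matrix ι κ (RobbaRing K)}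
    {A A' : Matrix κ κ (RobbaRing K)} (hA : A * A' = 1)
    (hV : Φ₀.map const * V.map (frobeniusLift q hτ) = V * A) (m : ℕ) :
    ∃ B B' : Matrix κ κ (RobbaRing K), B * B' = 1 ∧
      ∀ i j, (V * B) i j ∈ multiplesSubring K ((q : ℤ) ^ m) := by
  induction m with
  | zero => exact ⟨1, 1, mul_one 1, fun i j k hk => (hk (by simp)).elim⟩
  | succ m ih =>
    obtain ⟨B, B', hB, hVB⟩ := ih
    refine ⟨A * B.map (frobeniusLift q hτ), B'.map (frobeniusLift q hτ) * A', ?_, ?_⟩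
    · rw [mul_assoc, ← mul_assoc _ _ A', ← Matrix.map_mul, hB,
        Matrix.map_one _ (map_zero _) (map_one _), one_mul, hA]
    · rw [← Matrix.mul_assoc, ← hV, Matrix.mul_assoc, ← Matrix.map_mul]
      refine matrix_mul_mem (fun i j => supportedIn_const (zero_mem _) _) fun i j => ?_
      refine (SupportedIn.frobeniusLift hτ (hVB i j)).mono ?_
      rintro _ ⟨t, ht, rfl⟩
      exact Int.mem_zmultiples_iff.2
        (pow_succ' (q : ℤ) m ▸ mul_dvd_mul_left _ (Int.mem_zmultiples_iff.1 ht))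

/-- Cramer's rule: the ratios between the entries of `V * adj V_I` and `det V_I` do not change when
`V` is replaced by `V * B`. -/
theorem exists_eq_map_const_mul [IsUltrametricDist K] {Φ₀ : Matrix ι ι K}
    {V : Matrix ι κ (RobbaRing K)} {A A' : Matrix κ κ (RobbaRing K)} (hA : A * A' = 1)
    (hV : Φ₀.map const * V.map (frobeniusLift q hτ) = V * A) {I : κ → ι}
    (hI : (V.submatrix I id).det ≠ 0) :
    ∃ E : Matrix ι κ K, V = E.map const * V.submatrix I id := by
  have hratio (a : ι) (b : κ) : ∃ e : K, (V * (V.submatrix I id).adjugate) a b =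
      const e * (V.submatrix I id).det := by
    refine exists_eq_const_mul (q := q) hI fun m => ?_
    obtain ⟨B, B', hB, hVB⟩ := exists_mul_mem_multiplesSubring hτ hA hV m
    have hVBI : (V * B).submatrix I id = V.submatrix I id * B :=
      Matrix.submatrix_mul_equiv V B I (Equiv.refl κ) id
    refine ⟨B.det, left_ne_zero_of_mul_eq_one (b := B'.det) ?_, ?_, ?_⟩
    · rw [← Matrix.det_mul, hB, Matrix.det_one]
    · have hadj : V * B * ((V * B).submatrix I id).adjugate =
          B.det • (V * (V.submatrix I id).adjugate) := by
        rw [hVBI, Matrix.adjugate_mul_distrib, Matrix.mul_assoc V, ← Matrix.mul_assoc B,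
          Matrix.mul_adjugate, Matrix.smul_mul, Matrix.one_mul, Matrix.mul_smul]
      have hmem := matrix_mul_mem hVB (matrix_adjugate_mem fun i j => hVB (I i) j) a b
      rw [← smul_eq_mul, ← Matrix.smul_apply, ← hadj]
      exact hmem
    · rw [mul_comm, ← Matrix.det_mul, ← hVBI]
      exact matrix_det_mem fun i j => hVB (I i) j
  choose E hE using hratio
  have hdet : (V.submatrix I id).det • V =
      (V.submatrix I id).det • (Matrix.map E const * V.submatrix I id) := by
    have hadj : V * (V.submatrix I id).adjugate = (V.submatrix I id).det • Matrix.map E const :=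
      Matrix.ext fun a b => (hE a b).trans (mul_comm _ _)
    rw [← Matrix.smul_mul, ← hadj, Matrix.mul_assoc, Matrix.adjugate_mul, Matrix.mul_smul,
      Matrix.mul_one]
  exact ⟨E, Matrix.ext fun a b => mul_left_cancel₀ hI (congrFun₂ hdet a b)⟩

variable [IsUltrametricDist K] [DecidableEq ι] {Φ Ψ : Matrix ι ι (RobbaRing K)}
  {V : Matrix ι κ (RobbaRing K)} {L : Matrix κ ι (RobbaRing K)} {A A' : Matrix κ κ (RobbaRing K)}

theorem exists_eq_plus_mul (hΦ : ∀ a b, Φ a b ∈ plusSubring K ⊓ boundedSubring K)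
    (hΨ : ∀ a b, Ψ a b ∈ plusSubring K ⊓ boundedSubring K) (hΦΨ : Φ * Ψ = 1) (hL : L * V = 1)
    (hA : A * A' = 1) (hF : Φ * V.map (frobeniusLift q hτ) = V * A) :
    ∃ (X : Matrix ι κ (RobbaRing K)) (B : Matrix κ κ (RobbaRing K)),
      (∀ a b, X a b ∈ plusSubring K) ∧ B.det ≠ 0 ∧ V = X * B := by
  obtain ⟨Φ, rfl⟩ := exists_map_subtype_eq fun a b => (hΦ a b).1
  obtain ⟨Ψ, rfl⟩ := exists_map_subtype_eq fun a b => (hΨ a b).1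
  have hΦΨ' : Φ * Ψ = 1 := Matrix.map_injective (plusSubring K).subtype_injective <|
    Matrix.map_mul.trans (hΦΨ.trans (Matrix.map_one _ (map_zero _) (map_one _)).symm)
  obtain ⟨U, U', Φ₀, hUU', hU'⟩ := exists_trivialization (q := q) hτ
    (fun a b => (hΦ a b).2) (fun a b => (hΨ a b).2) hΦΨ'
  replace hUU' : U.map (plusSubring K).subtype * U'.map (plusSubring K).subtype = 1 := by
    rw [← Matrix.map_mul, hUU', Matrix.map_one _ (map_zero _) (map_one _)]
  replace hU' : Φ₀.map const * (U'.map (plusSubring K).subtype).map (frobeniusLift q hτ) =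
      U'.map (plusSubring K).subtype * Φ.map (plusSubring K).subtype := by
    rw [← Matrix.map_mul, ← hU', Matrix.map_mul]
    rfl
  set V' := U'.map (plusSubring K).subtype * V with hV'
  have hVV' : U.map (plusSubring K).subtype * V' = V := by
    rw [hV', ← Matrix.mul_assoc, hUU', Matrix.one_mul]
  have hF' : Φ₀.map const * V'.map (frobeniusLift q hτ) = V' * A := by
    rw [hV', Matrix.map_mul, ← Matrix.mul_assoc, hU', Matrix.mul_assoc, hF, Matrix.mul_assoc]
  obtain ⟨I, hI⟩ := exists_det_submatrix_ne_zero (L := L * U.map (plusSubring K).subtype)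
    (V := V') (by rw [Matrix.mul_assoc, hVV', hL])
  obtain ⟨E, hE⟩ := exists_eq_map_const_mul hτ hA hF' hI
  exact ⟨U.map (plusSubring K).subtype * E.map const, V'.submatrix I id,
    matrix_mul_mem (fun a b => (U a b).2) fun a b => supportedIn_const (zero_mem _) _, hI,
    by rw [Matrix.mul_assoc, ← hE, hVV']⟩

/-- The matrix `P` is obtained from a basis with entries in `ℛ₊` by Cramer's rule: expressed in
terms of `V` it is, up to a scalar, the matrix `V * adj V_J`, so that it is bounded. -/
theorem exists_plus_mul_eq_smul (hΦ : ∀ a b, Φ a b ∈ plusSubring K ⊓ boundedSubring K)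
    (hΨ : ∀ a b, Ψ a b ∈ plusSubring K ⊓ boundedSubring K) (hΦΨ : Φ * Ψ = 1)
    (hV : ∀ a b, V a b ∈ boundedSubring K) (hL : L * V = 1) (hA : A * A' = 1)
    (hF : Φ * V.map (frobeniusLift q hτ) = V * A) :
    ∃ (P : Matrix ι κ (RobbaRing K)) (y : RobbaRing K) (T : Matrix κ κ (RobbaRing K)),
      (∀ a b, P a b ∈ plusSubring K ⊓ boundedSubring K) ∧ V * (L * P) = P ∧ y ≠ 0 ∧
        y • V = P * T := by
  obtain ⟨X, B, hX, hB, hVX⟩ := exists_eq_plus_mul hτ hΦ hΨ hΦΨ hL hA hF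
  obtain ⟨J, hJ⟩ := exists_det_submatrix_ne_zero hL
  set Y := X.submatrix J id with hY
  have hVJ : V.submatrix J id = Y * B := by
    rw [hVX]
    exact Matrix.submatrix_mul_equiv X B J (Equiv.refl κ) id
  have hadj : V * (V.submatrix J id).adjugate = B.det • (X * Y.adjugate) := by
    rw [hVJ, Matrix.adjugate_mul_distrib, hVX, Matrix.mul_assoc X, ← Matrix.mul_assoc B,
      Matrix.mul_adjugate, Matrix.smul_mul, Matrix.one_mul, Matrix.mul_smul]
  have hspan : B.det • (V * (L * (X * Y.adjugate))) = B.det • (X * Y.adjugate) := by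
    rw [← Matrix.mul_smul, ← Matrix.mul_smul, ← hadj, ← Matrix.mul_assoc L, hL, Matrix.one_mul]
  refine ⟨X * Y.adjugate, Y.det, Y * B, fun a b => ⟨?_, ?_⟩, ?_, ?_, ?_⟩
  · exact matrix_mul_mem hX (matrix_adjugate_mem fun i j => hX (J i) j) a b
  · have hbdd : (V * (V.submatrix J id).adjugate) a b ∈ boundedSubring K :=
      matrix_mul_mem hV (matrix_adjugate_mem fun i j => hV (J i) j) a b
    rw [hadj, Matrix.smul_apply, smul_eq_mul, mul_comm] at hbdd
    exact mem_boundedSubring_of_mul_mem hB hbdd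
  · exact Matrix.ext fun a b => mul_left_cancel₀ hB (congrFun₂ hspan a b)
  · rw [hVJ, Matrix.det_mul] at hJ
    exact left_ne_zero_of_mul hJ
  · rw [Matrix.mul_assoc, ← Matrix.mul_assoc _ Y, Matrix.adjugate_mul, Matrix.smul_mul,
      Matrix.one_mul, Matrix.mul_smul, ← hVX]

end Descent

section ValuationRing

variable {R F : Type*} [CommRing R] [IsDomain R] [ValuationRing R] [Field F] [Algebra R F]
  [IsFractionRing R F]

theorem exists_algebraMap_eq_or_inv_eq_nonunit (x : F) :
    (∃ a : R, algebraMap R F a = x) ∨ x ≠ 0 ∧ ∃ t : R, ¬IsUnit t ∧ algebraMap R F t = x⁻¹ := by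
  refine or_iff_not_imp_left.2 fun hx => ⟨fun h0 => hx ⟨0, by rw [h0, map_zero]⟩, ?_⟩
  obtain ⟨t, ht⟩ := (ValuationRing.isInteger_or_isInteger R x).resolve_left hx
  refine ⟨t, fun hu => hx ?_, ht⟩
  obtain ⟨t, rfl⟩ := hu
  exact ⟨↑t⁻¹, by rw [map_units_inv, ht, inv_inv]⟩

end ValuationRing

section FractionField

variable {𝒪 : Type*} [CommRing 𝒪] [IsDomain 𝒪] [IsDiscreteValuationRing 𝒪]

/-- The fraction field of a discrete valuation ring, normed by its adic absolute value; the base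
of the absolute value plays no role and is taken to be `2`. -/
instance fractionRingNormedField : NormedField (FractionRing 𝒪) :=
  AbsoluteValue.toNormedField <| IsDedekindDomain.HeightOneSpectrum.adicAbv
    (IsDiscreteValuationRing.maximalIdeal 𝒪) (b := 2) (by norm_num)

instance : IsUltrametricDist (FractionRing 𝒪) :=
  IsUltrametricDist.isUltrametricDist_of_isNonarchimedean_norm <|
    IsDedekindDomain.HeightOneSpectrum.isNonarchimedean_adicAbv
      (IsDiscreteValuationRing.maximalIdeal 𝒪) (by norm_num)

theorem norm_algebraMap_le_one (a : 𝒪) : ‖algebraMap 𝒪 (FractionRing 𝒪) a‖ ≤ 1 :=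
  IsDedekindDomain.HeightOneSpectrum.adicAbv_coe_le_one _ _ _

theorem norm_algebraMap_lt_one_iff {a : 𝒪} :
    ‖algebraMap 𝒪 (FractionRing 𝒪) a‖ < 1 ↔ a ∈ IsLocalRing.maximalIdeal 𝒪 :=
  IsDedekindDomain.HeightOneSpectrum.adicAbv_coe_lt_one_iff _ _ _

theorem norm_algebraMap_units (a : 𝒪ˣ) : ‖algebraMap 𝒪 (FractionRing 𝒪) a‖ = 1 :=
  (norm_algebraMap_le_one _).eq_of_not_lt fun h =>
    (IsLocalRing.mem_maximalIdeal _).1 (norm_algebraMap_lt_one_iff.1 h) a.isUnit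

theorem exists_algebraMap_eq_of_norm_le_one {x : FractionRing 𝒪} (hx : ‖x‖ ≤ 1) :
    ∃ a, algebraMap 𝒪 (FractionRing 𝒪) a = x := by
  refine (exists_algebraMap_eq_or_inv_eq_nonunit (R := 𝒪) x).elim id ?_
  rintro ⟨hx0, t, htu, ht⟩
  have hlt := norm_algebraMap_lt_one_iff.2 ((IsLocalRing.mem_maximalIdeal t).2 htu)
  rw [ht, norm_inv, inv_lt_one₀ (norm_pos_iff.2 hx0)] at hlt
  exact absurd hx hlt.not_ge

variable {ϖ : 𝒪} (hϖ : Irreducible ϖ)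
include hϖ

theorem norm_uniformizer_pos : 0 < ‖algebraMap 𝒪 (FractionRing 𝒪) ϖ‖ :=
  norm_pos_iff.2 <| (map_ne_zero_iff _ (IsFractionRing.injective _ _)).2 hϖ.ne_zero

theorem norm_uniformizer_lt_one : ‖algebraMap 𝒪 (FractionRing 𝒪) ϖ‖ < 1 :=
  norm_algebraMap_lt_one_iff.2 <| (IsLocalRing.mem_maximalIdeal ϖ).2 hϖ.not_isUnit

theorem norm_algebraMap_le_pow_iff (a : 𝒪) (j : ℕ) :
    ‖algebraMap 𝒪 (FractionRing 𝒪) a‖ ≤ ‖algebraMap 𝒪 (FractionRing 𝒪) ϖ‖ ^ j ↔ ϖ ^ j ∣ a := by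
  have hpos := norm_uniformizer_pos hϖ
  refine ⟨fun h => ?_, ?_⟩
  · have hle : ‖algebraMap 𝒪 (FractionRing 𝒪) a / algebraMap 𝒪 (FractionRing 𝒪) ϖ ^ j‖ ≤ 1 := by
      rwa [norm_div, norm_pow, div_le_one (pow_pos hpos j)]
    obtain ⟨b, hb⟩ := exists_algebraMap_eq_of_norm_le_one hle
    refine ⟨b, IsFractionRing.injective 𝒪 (FractionRing 𝒪) ?_⟩
    rw [map_mul, map_pow, hb, mul_div_cancel₀ _ (pow_ne_zero j (norm_pos_iff.1 hpos))]
  · rintro ⟨b, rfl⟩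
    rw [map_mul, norm_mul, map_pow, norm_pow]
    exact mul_le_of_le_one_right (pow_nonneg hpos.le j) (norm_algebraMap_le_one b)

theorem exists_algebraMap_eq_uniformizer_pow_mul (B : ℝ) :
    ∃ j : ℕ, ∀ x : FractionRing 𝒪, ‖x‖ ≤ B →
      ∃ a, algebraMap 𝒪 (FractionRing 𝒪) a = algebraMap 𝒪 (FractionRing 𝒪) ϖ ^ j * x := by
  have hB : 0 < max B 1 := lt_max_of_lt_right one_pos
  obtain ⟨j, hj⟩ := exists_pow_lt_of_lt_one (inv_pos.2 hB) (norm_uniformizer_lt_one hϖ)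
  refine ⟨j, fun x hx => exists_algebraMap_eq_of_norm_le_one ?_⟩
  rw [norm_mul, norm_pow]
  calc _ ≤ (max B 1)⁻¹ * max B 1 := by gcongr; exact hx.trans (le_max_left _ _)
    _ = 1 := inv_mul_cancel₀ hB.ne'

theorem tendsto_norm_uniformizer_pow :
    Tendsto (fun j => ‖algebraMap 𝒪 (FractionRing 𝒪) ϖ‖ ^ j) atTop (𝓝 0) :=
  tendsto_pow_atTop_nhds_zero_of_lt_one (norm_nonneg _) (norm_uniformizer_lt_one hϖ)

theorem eq_zero_of_forall_norm_le_pow {x : FractionRing 𝒪}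
    (h : ∀ j, ‖x‖ ≤ ‖algebraMap 𝒪 (FractionRing 𝒪) ϖ‖ ^ j) : x = 0 :=
  norm_le_zero_iff.1 <| ge_of_tendsto' (tendsto_norm_uniformizer_pow hϖ) h

omit [IsDomain 𝒪] [IsDiscreteValuationRing 𝒪] hϖ in
theorem smodEq_span_singleton_pow_iff {r x y : 𝒪} {j : ℕ} :
    x ≡ y [SMOD Ideal.span {r} ^ j • (⊤ : Submodule 𝒪 𝒪)] ↔ r ^ j ∣ x - y := by
  rw [SModEq.sub_mem, smul_eq_mul, Ideal.mul_top, Ideal.span_singleton_pow,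
    Ideal.mem_span_singleton]

theorem norm_algebraMap_sub_le_pow_iff (a b : 𝒪) (j : ℕ) :
    ‖algebraMap 𝒪 (FractionRing 𝒪) a - algebraMap 𝒪 (FractionRing 𝒪) b‖ ≤
      ‖algebraMap 𝒪 (FractionRing 𝒪) ϖ‖ ^ j ↔
    a ≡ b [SMOD Ideal.span {ϖ} ^ j • (⊤ : Submodule 𝒪 𝒪)] := by
  rw [← map_sub, norm_algebraMap_le_pow_iff hϖ, smodEq_span_singleton_pow_iff]

omit hϖ in
instance completeSpace_fractionRing [h𝒪 : IsPrecomplete (IsLocalRing.maximalIdeal 𝒪) 𝒪] :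
    CompleteSpace (FractionRing 𝒪) := by
  obtain ⟨ϖ, hϖ⟩ := IsDiscreteValuationRing.exists_irreducible 𝒪
  rw [hϖ.maximalIdeal_eq] at h𝒪
  have hpos := norm_uniformizer_pos hϖ
  rw [NormedField.completeSpace_iff_isComplete_closedBall,
    ← completeSpace_coe_iff_isComplete]
  refine Metric.complete_of_convergent_controlled_sequences
    (fun j => ‖algebraMap 𝒪 (FractionRing 𝒪) ϖ‖ ^ j) (fun j => pow_pos hpos j) fun u hu => ?_
  choose a ha using fun n =>
    exists_algebraMap_eq_of_norm_le_one (mem_closedBall_zero_iff.1 (u n).2)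
  have hcauchy {m n : ℕ} (hmn : m ≤ n) :
      a m ≡ a n [SMOD Ideal.span {ϖ} ^ m • (⊤ : Submodule 𝒪 𝒪)] := by
    rw [← norm_algebraMap_sub_le_pow_iff hϖ, ha, ha, ← dist_eq_norm]
    exact (hu m m n le_rfl hmn).le
  obtain ⟨b, hb⟩ := h𝒪.prec hcauchy
  refine ⟨⟨algebraMap 𝒪 _ b, mem_closedBall_zero_iff.2 (norm_algebraMap_le_one b)⟩,
    tendsto_iff_dist_tendsto_zero.2 <| squeeze_zero (fun _ => dist_nonneg) (fun n => ?_)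
      (tendsto_norm_uniformizer_pow hϖ)⟩
  rw [Subtype.dist_eq, dist_eq_norm, ← ha]
  exact (norm_algebraMap_sub_le_pow_iff hϖ _ _ _).2 (hb n)

theorem norm_algebraMap_map {τ : 𝒪 →+* 𝒪} (hτ : τ ϖ = ϖ) (a : 𝒪) :
    ‖algebraMap 𝒪 (FractionRing 𝒪) (τ a)‖ = ‖algebraMap 𝒪 (FractionRing 𝒪) a‖ := by
  rcases eq_or_ne a 0 with rfl | ha
  · rw [map_zero]
  obtain ⟨m, b, rfl⟩ := IsDiscreteValuationRing.eq_unit_mul_pow_irreducible ha hϖ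
  rw [map_mul, map_pow, hτ, map_mul, map_mul, norm_mul, norm_mul, norm_algebraMap_units]
  exact congrArg (· * _) (norm_algebraMap_units (b.map τ.toMonoidHom))

theorem injective_of_map_uniformizer {τ : 𝒪 →+* 𝒪} (hτ : τ ϖ = ϖ) : Function.Injective τ := by
  refine (injective_iff_map_eq_zero τ).2 fun a ha => IsFractionRing.injective 𝒪 (FractionRing 𝒪) ?_
  rw [map_zero, ← norm_eq_zero, ← norm_algebraMap_map hϖ hτ, ha, map_zero, norm_zero]

/-- The extension to the fraction field of a ring endomorphism fixing a uniformizer. -/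
def fractionRingMap {τ : 𝒪 →+* 𝒪} (hτ : τ ϖ = ϖ) : FractionRing 𝒪 →+* FractionRing 𝒪 :=
  IsFractionRing.lift (g := (algebraMap 𝒪 (FractionRing 𝒪)).comp τ) <|
    (IsFractionRing.injective 𝒪 (FractionRing 𝒪)).comp (injective_of_map_uniformizer hϖ hτ)

theorem fractionRingMap_algebraMap {τ : 𝒪 →+* 𝒪} (hτ : τ ϖ = ϖ) (a : 𝒪) :
    fractionRingMap hϖ hτ (algebraMap 𝒪 _ a) = algebraMap 𝒪 _ (τ a) :=
  IsFractionRing.lift_algebraMap _ a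

theorem isometry_fractionRingMap {τ : 𝒪 →+* 𝒪} (hτ : τ ϖ = ϖ) :
    Isometry (fractionRingMap hϖ hτ) := by
  refine AddMonoidHomClass.isometry_of_norm _ fun x => ?_
  obtain ⟨a, b, -, rfl⟩ := IsFractionRing.div_surjective (A := 𝒪) x
  rw [map_div₀, norm_div, norm_div, fractionRingMap_algebraMap, fractionRingMap_algebraMap,
    norm_algebraMap_map hϖ hτ, norm_algebraMap_map hϖ hτ]

end FractionField

section AdicCompletion

variable {R : Type*} [CommRing R] {r : R}

theorem exists_pow_dvd_sub_algebraMap (x : AdicCompletion (Ideal.span {r}) R) (j : ℕ) :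
    ∃ g : R, algebraMap R (AdicCompletion (Ideal.span {r}) R) r ^ j ∣ x - algebraMap R _ g := by
  obtain ⟨g, hg⟩ := Submodule.mkQ_surjective _ (AdicCompletion.eval (Ideal.span {r}) R j x)
  have hker : x - algebraMap R _ g ∈ (AdicCompletion.eval (Ideal.span {r}) R j).ker := by
    rw [LinearMap.mem_ker, map_sub, ← hg, sub_eq_zero]
    rfl
  rw [← AdicCompletion.pow_smul_top_eq_ker_eval (Submodule.fg_span_singleton r),
    Ideal.span_singleton_pow, Submodule.ideal_span_singleton_smul] at hker
  obtain ⟨y, -, hy⟩ := hker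
  refine ⟨g, y, ?_⟩
  rw [← hy, ← map_pow, ← Algebra.smul_def]
  rfl

theorem isAdicComplete_span_algebraMap :
    IsAdicComplete (Ideal.span {algebraMap R (AdicCompletion (Ideal.span {r}) R) r})
      (AdicCompletion (Ideal.span {r}) R) := by
  have h := AdicCompletion.isAdicComplete (M := R) (Submodule.fg_span_singleton r)
  rwa [← IsAdicComplete.map_algebraMap_iff (S := AdicCompletion (Ideal.span {r}) R),
    Ideal.map_span, Set.image_singleton] at h

end AdicCompletion

section RootCriterion

variable {R F : Type*} [CommRing R] [IsDomain R] [IsDiscreteValuationRing R] [Field F]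
  [Algebra R F] [IsFractionRing R F] {ϖ : R}

theorem exists_algebraMap_eq_of_pow_eq_one_add (hϖ : Irreducible ϖ) {m : ℕ} (hm : 2 ≤ m)
    {x z : F} (h : z ^ m = 1 + algebraMap R F ϖ * x ^ m) : ∃ a, algebraMap R F a = x := by
  have dvd_of_not_isUnit {a : R} (ha : ¬IsUnit a) : ϖ ∣ a := by
    rwa [← Ideal.mem_span_singleton, ← hϖ.maximalIdeal_eq, IsLocalRing.mem_maximalIdeal]
  refine (exists_algebraMap_eq_or_inv_eq_nonunit (R := R) x).elim id ?_
  rintro ⟨hx0, t, htu, ht⟩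
  have hroot : (z / x) ^ m = algebraMap R F (t ^ m + ϖ) := by
    rw [div_pow, h, map_add, map_pow, ht, inv_pow, add_div, one_div, mul_div_cancel_right₀]
    exact pow_ne_zero m hx0
  obtain ⟨w, hw⟩ := IsIntegrallyClosed.exists_algebraMap_eq_of_isIntegral_pow (R := R)
    (by omega : 0 < m) (hroot ▸ isIntegral_algebraMap)
  rw [← hw, ← map_pow] at hroot
  replace hroot := IsFractionRing.injective R F hroot
  have htm : ϖ ^ 2 ∣ t ^ m :=
    (pow_dvd_pow_of_dvd (dvd_of_not_isUnit htu) 2).trans (pow_dvd_pow t hm)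
  have hwϖ : ϖ ∣ w := hϖ.prime.dvd_of_dvd_pow <| hroot ▸
    dvd_add ((dvd_pow_self ϖ two_ne_zero).trans htm) dvd_rfl
  have hwm : ϖ ^ 2 ∣ t ^ m + ϖ :=
    hroot ▸ (pow_dvd_pow_of_dvd hwϖ 2).trans (pow_dvd_pow w hm)
  have hsq : ϖ * ϖ ∣ ϖ := sq ϖ ▸ (dvd_add_right htm).1 hwm
  exact (hϖ.not_isUnit <| isUnit_of_dvd_one <|
    (mul_dvd_mul_iff_left hϖ.ne_zero).1 (hsq.trans (mul_one ϖ).symm.dvd)).elim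

theorem exists_pow_succ_eq_one_add {p : ℕ} {R : Type*} [CommRing R]
    [IsAdicComplete (Ideal.span {(p : R)}) R] (y : R) : ∃ z : R, z ^ (p + 1) = 1 + p * y := by
  open Polynomial in
  obtain ⟨z, hz, -⟩ := HenselianRing.is_henselian (I := Ideal.span {(p : R)})
    (X ^ (p + 1) - C (1 + (p : R) * y)) (monic_X_pow_sub_C _ p.succ_ne_zero) 1 (by
      simp only [eval_sub, eval_pow, eval_X, eval_C, one_pow, sub_add_cancel_left, neg_mem_iff]
      exact Ideal.mul_mem_right _ _ (Ideal.mem_span_singleton_self _)) (by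
      have hp : Ideal.Quotient.mk (Ideal.span {(p : R)}) p = 0 :=
        Ideal.Quotient.eq_zero_iff_mem.2 (Ideal.mem_span_singleton_self _)
      rw [derivative_sub, derivative_C, sub_zero, derivative_X_pow]
      simp only [eval_mul, eval_C, eval_pow, eval_X, one_pow, mul_one]
      rw [Nat.cast_add, Nat.cast_one, map_add, hp, map_one, zero_add]
      exact isUnit_one)
  refine ⟨z, sub_eq_zero.1 ?_⟩
  simpa only [Polynomial.IsRoot.def, Polynomial.eval_sub, Polynomial.eval_pow, Polynomial.eval_X,
    Polynomial.eval_C] using hz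

/-- The subring `R` of `F` is cut out by a condition on the solvability of an equation, hence it is
stable under every endomorphism of `F`. -/
theorem exists_algebraMap_eq_map {p : ℕ} [IsAdicComplete (Ideal.span {(p : R)}) R]
    (hp : Irreducible (p : R)) (σ : F →+* F) (y : R) :
    ∃ a, algebraMap R F a = σ (algebraMap R F y) := by
  obtain ⟨z, hz⟩ := exists_pow_succ_eq_one_add (p := p) (y ^ (p + 1))
  have hp0 : p ≠ 0 := fun h0 => hp.ne_zero (by rw [h0, Nat.cast_zero])
  refine exists_algebraMap_eq_of_pow_eq_one_add hp (m := p + 1) (by omega)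
    (z := σ (algebraMap R F z)) ?_
  rw [← map_pow, ← map_pow, hz]
  simp only [map_add, map_one, map_mul, map_natCast, map_pow]

end RootCriterion

section OverconvergenceCriterion

variable {K : Type*} [NormedField K] {x : ℤ → K} {B : ℝ}

theorem convergesAt_of_norm_le {D ρ r : ℝ} (hρ : 0 < ρ) (hρr : ρ < r) (hr : r < 1)
    (hx : ∀ i, ‖x i‖ ≤ B) (hneg : ∀ᶠ t : ℕ in atTop, ‖x (-t)‖ ≤ D * ρ ^ t) : ConvergesAt r x := by
  have hr0 := hρ.trans hρr
  refine Summable.of_nat_of_neg ?_ ?_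
  · refine Summable.of_nonneg_of_le (fun n => by positivity) (fun n => ?_)
      ((summable_geometric_of_lt_one hr0.le hr).mul_left B)
    rw [zpow_natCast]
    gcongr
    exact hx n
  · have hgeom := (summable_geometric_of_lt_one (by positivity) ((div_lt_one hr0).2 hρr)).mul_left D
    refine Summable.of_norm_bounded_eventually_nat hgeom (hneg.mono fun t ht => ?_)
    rw [Real.norm_of_nonneg (by positivity), zpow_neg, zpow_natCast, div_pow, ← mul_div_assoc,
      div_eq_mul_inv]
    gcongr

theorem isOverconvergent_iff_of_norm_le (hx : ∀ i, ‖x i‖ ≤ B) :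
    IsOverconvergent x ↔
      ∃ ρ > 0, ρ < 1 ∧ ∃ D, ∀ᶠ t : ℕ in atTop, ‖x (-t)‖ ≤ D * ρ ^ t := by
  constructor
  · intro h
    obtain ⟨ρ, ⟨hρ0, hconv⟩, hρ1⟩ :=
      ((eventually_pos_nhdsLT_one.and h).and self_mem_nhdsWithin).exists
    obtain ⟨D, hD⟩ := hconv.exists_bound hρ0
    refine ⟨ρ, hρ0, hρ1, D, Eventually.of_forall fun t => ?_⟩
    have hle := hD (-t)
    rwa [zpow_neg, zpow_natCast, mul_inv_le_iff₀ (pow_pos hρ0 t)] at hle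
  · rintro ⟨ρ, hρ0, hρ1, D, hD⟩
    filter_upwards [Ioo_mem_nhdsLT hρ1] with r hr
    exact convergesAt_of_norm_le hρ0 hr.1 hr.2 hx hD

theorem pow_div_le_inv_mul_pow {ω ρ : ℝ} {m : ℕ} (hm : m ≠ 0) (hω : 0 ≤ ω) (hρ : 0 < ρ)
    (hρ1 : ρ ≤ 1) (h : ω ≤ ρ ^ m) (t : ℕ) : ω ^ (t / m) ≤ (ρ ^ m)⁻¹ * ρ ^ t := by
  rw [inv_mul_eq_div, le_div_iff₀ (by positivity)]
  calc ω ^ (t / m) * ρ ^ m ≤ (ρ ^ m) ^ (t / m) * ρ ^ m := by gcongr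
    _ = ρ ^ (m * (t / m) + m) := by rw [← pow_mul, ← pow_add]
    _ ≤ ρ ^ t := pow_le_pow_of_le_one hρ.le hρ1 <| by
      linarith [Nat.div_add_mod t m, Nat.mod_lt t (Nat.pos_of_ne_zero hm)]

theorem exists_eventually_mul_pow_le_pow_div {ω ρ : ℝ} (hω : 0 < ω) (hω1 : ω < 1) (hρ : 0 < ρ)
    (hρ1 : ρ < 1) (D : ℝ) : ∃ m : ℕ, 0 < m ∧ ∀ᶠ t in atTop, D * ρ ^ t ≤ ω ^ (t / m) := by
  obtain ⟨m, hm⟩ := exists_pow_lt_of_lt_one (pow_pos hω 2) hρ1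
  have hm0 : m ≠ 0 := by
    rintro rfl
    exact hm.not_ge (pow_le_one₀ hω.le hω1.le)
  have hlim : Tendsto (fun t : ℕ => max D 0 * ω ^ (t / m)) atTop (𝓝 (max D 0 * 0)) :=
    ((tendsto_pow_atTop_nhds_zero_of_lt_one hω.le hω1).comp
      (Nat.tendsto_div_const_atTop hm0)).const_mul _
  rw [mul_zero] at hlim
  refine ⟨m, Nat.pos_of_ne_zero hm0, (hlim.eventually_le_const one_pos).mono fun t ht => ?_⟩
  calc D * ρ ^ t ≤ max D 0 * ρ ^ (m * (t / m)) := mul_le_mul (le_max_left _ _)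
        (pow_le_pow_of_le_one hρ.le hρ1.le (Nat.mul_div_le t m)) (by positivity) (by positivity)
    _ ≤ max D 0 * (ω ^ 2) ^ (t / m) := by rw [pow_mul]; gcongr
    _ = max D 0 * ω ^ (t / m) * ω ^ (t / m) := by rw [← pow_mul, mul_comm 2, pow_mul]; ring
    _ ≤ ω ^ (t / m) := mul_le_of_le_one_left (by positivity) ht

theorem isOverconvergent_algebraMap_iff {𝒪 : Type*} [CommRing 𝒪] [IsDomain 𝒪]
    [IsDiscreteValuationRing 𝒪] {ϖ : 𝒪} (hϖ : Irreducible ϖ) (a : ℤ → 𝒪) :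
    IsOverconvergent (fun i => algebraMap 𝒪 (FractionRing 𝒪) (a i)) ↔
      ∃ m : ℕ, 0 < m ∧ ∃ N : ℤ, ∀ i ≤ N, ϖ ^ ((-i).toNat / m) ∣ a i := by
  have hω0 := norm_uniformizer_pos hϖ
  have hω1 := norm_uniformizer_lt_one hϖ
  rw [isOverconvergent_iff_of_norm_le fun i => norm_algebraMap_le_one (a i)]
  simp only [← norm_algebraMap_le_pow_iff hϖ]
  constructor
  · rintro ⟨ρ, hρ0, hρ1, D, hD⟩
    obtain ⟨m, hm, hle⟩ := exists_eventually_mul_pow_le_pow_div hω0 hω1 hρ0 hρ1 D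
    obtain ⟨T, hT⟩ := eventually_atTop.1 (hD.and hle)
    refine ⟨m, hm, -T, fun i hi => ?_⟩
    obtain ⟨hD, hle⟩ := hT (-i).toNat (by omega)
    rw [Int.toNat_of_nonneg (by omega), neg_neg] at hD
    exact hD.trans hle
  · rintro ⟨m, hm, N, hN⟩
    obtain ⟨ρ, ⟨hρ0, hρm⟩, hρ1⟩ := ((eventually_pos_nhdsLT_one.and <|
      ((continuous_pow m).tendsto' 1 1 (one_pow m)).mono_left nhdsWithin_le_nhds |>.eventually
        (lt_mem_nhds hω1)).and self_mem_nhdsWithin).exists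
    refine ⟨ρ, hρ0, hρ1, (ρ ^ m)⁻¹, (eventually_ge_atTop (-N).toNat).mono fun t ht => ?_⟩
    refine (hN (-t) (by omega)).trans ?_
    rw [neg_neg, Int.toNat_natCast]
    exact pow_div_le_inv_mul_pow hm.ne' hω0.le hρ0 (le_of_lt hρ1) hρm.le t

end OverconvergenceCriterion

section NullAtBot

variable {K : Type*} [NormedField K] [CompleteSpace K] [IsUltrametricDist K] {B C : ℝ}
  {x y : ℤ → K}

theorem summable_mul_sub_of_tendsto_atBot (hx : ∀ i, ‖x i‖ ≤ B) (hy : ∀ i, ‖y i‖ ≤ C)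
    (hx0 : Tendsto x atBot (𝓝 0)) (hy0 : Tendsto y atBot (𝓝 0)) (n : ℤ) :
    Summable fun i => x i * y (n - i) := by
  refine NonarchimedeanAddGroup.summable_of_tendsto_cofinite_zero ?_
  have hnull : Tendsto (fun i => x i * y (n - i)) atBot (𝓝 0) := by
    refine squeeze_zero_norm (a := fun i => ‖x i‖ * C) (fun i => ?_) ?_
    · rw [norm_mul]
      gcongr
      exact hy _
    · simpa only [norm_zero, zero_mul] using hx0.norm.mul_const C
  have hnull' : Tendsto (fun i => x i * y (n - i)) atTop (𝓝 0) := by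
    refine squeeze_zero_norm (a := fun i => B * ‖y (n - i)‖) (fun i => ?_) ?_
    · rw [norm_mul]
      gcongr
      exact hx _
    · have hsub : Tendsto (fun i : ℤ => n - i) atTop atBot :=
        tendsto_atBot_add_const_left _ n tendsto_neg_atTop_atBot
      simpa only [norm_zero, mul_zero, Function.comp_def] using (hy0.norm.comp hsub).const_mul B
  rw [Int.cofinite_eq]
  exact hnull.sup hnull'

end NullAtBot

/-- `Γ` is the `p`-adic completion of `𝒪((u))`, presented as a ring of bidirectional series
`∑ xᵢ uⁱ` with `xᵢ → 0` as `i → -∞`, and `coeff i` reads off the coefficient of `uⁱ`. -/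
structure IsBilateralSeriesRing {𝒪 Γ : Type*} [CommRing 𝒪] [CommRing Γ]
    [Algebra (LaurentSeries 𝒪) Γ] (p : ℕ) (coeff : ℤ → Γ →+ 𝒪) : Prop where
  coeff_algebraMap (g : LaurentSeries 𝒪) (i : ℤ) : coeff i (algebraMap _ Γ g) = g.coeff i
  eq_zero_of_coeff_eq_zero (x : Γ) : (∀ i, coeff i x = 0) → x = 0
  exists_coeff_eq (a : ℤ → 𝒪) : (∀ j : ℕ, ∃ N : ℤ, ∀ i ≤ N, (p : 𝒪) ^ j ∣ a i) →
    ∃ x, ∀ i, coeff i x = a i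
  exists_pow_dvd_sub_algebraMap (x : Γ) (j : ℕ) :
    ∃ g : LaurentSeries 𝒪, (p : Γ) ^ j ∣ x - algebraMap _ Γ g
  isAdicComplete : IsAdicComplete (Ideal.span {(p : Γ)}) Γ

namespace IsBilateralSeriesRing

theorem coeff_natCast_pow_mul {𝒪 Γ : Type*} [CommRing 𝒪] [CommRing Γ] (coeff : ℤ → Γ →+ 𝒪)
    (p j : ℕ) (x : Γ) (i : ℤ) : coeff i ((p : Γ) ^ j * x) = (p : 𝒪) ^ j * coeff i x := by
  rw [← Nat.cast_pow, ← nsmul_eq_mul, map_nsmul, nsmul_eq_mul, Nat.cast_pow]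

variable {𝒪 Γ : Type*} [CommRing 𝒪] [CommRing Γ] [Algebra (LaurentSeries 𝒪) Γ] {p : ℕ}
  {coeff : ℤ → Γ →+ 𝒪} (h : IsBilateralSeriesRing p coeff)
include h

protected theorem ext {x y : Γ} (hxy : ∀ i, coeff i x = coeff i y) : x = y :=
  sub_eq_zero.1 <| h.eq_zero_of_coeff_eq_zero _ fun i => by rw [map_sub, hxy, sub_self]

theorem exists_eq_algebraMap_add (x : Γ) (j : ℕ) :
    ∃ (g : LaurentSeries 𝒪) (y : Γ), x = algebraMap _ Γ g + (p : Γ) ^ j * y := by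
  obtain ⟨g, y, hy⟩ := h.exists_pow_dvd_sub_algebraMap x j
  exact ⟨g, y, eq_add_of_sub_eq' hy⟩

theorem exists_forall_le_pow_dvd_coeff (x : Γ) (j : ℕ) :
    ∃ N : ℤ, ∀ i ≤ N, (p : 𝒪) ^ j ∣ coeff i x := by
  obtain ⟨g, y, rfl⟩ := h.exists_eq_algebraMap_add x j
  refine ⟨g.order - 1, fun i hi => ⟨coeff i y, ?_⟩⟩
  rw [map_add, h.coeff_algebraMap, HahnSeries.coeff_eq_zero_of_lt_order (by omega), zero_add,
    coeff_natCast_pow_mul]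

section Domain

variable [IsDomain 𝒪] (hp : (p : 𝒪) ≠ 0)
include hp

theorem natCast_pow_dvd_iff (x : Γ) (j : ℕ) :
    (p : Γ) ^ j ∣ x ↔ ∀ i, (p : 𝒪) ^ j ∣ coeff i x := by
  constructor
  · rintro ⟨y, rfl⟩ i
    exact ⟨coeff i y, coeff_natCast_pow_mul coeff p j y i⟩
  · intro hx
    choose b hb using hx
    obtain ⟨y, hy⟩ := h.exists_coeff_eq b fun j' => by
      obtain ⟨N, hN⟩ := h.exists_forall_le_pow_dvd_coeff x (j + j')
      refine ⟨N, fun i hi => ?_⟩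
      have hdvd := hN i hi
      rwa [hb, pow_add, mul_dvd_mul_iff_left (pow_ne_zero j hp)] at hdvd
    exact ⟨y, h.ext fun i => by rw [coeff_natCast_pow_mul, hy, hb]⟩

theorem eq_zero_of_natCast_pow_mul_eq_zero {x : Γ} {j : ℕ} (hx : (p : Γ) ^ j * x = 0) : x = 0 :=
  h.eq_zero_of_coeff_eq_zero x fun i => by
    refine (mul_eq_zero.1 ?_).resolve_left (pow_ne_zero j hp)
    rw [← coeff_natCast_pow_mul, hx, map_zero]

end Domain

section Irreducible

variable [IsDomain 𝒪] (hp : Irreducible (p : 𝒪))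
include hp

theorem not_isUnit_natCast : ¬IsUnit (p : Γ) := fun hu =>
  hp.not_isUnit <| isUnit_of_dvd_one <| by
    have hdvd := (h.natCast_pow_dvd_iff hp.ne_zero 1 1).1 (by rw [pow_one]; exact hu.dvd) 0
    rwa [pow_one, ← map_one (algebraMap (LaurentSeries 𝒪) Γ), h.coeff_algebraMap,
      HahnSeries.coeff_one, if_pos rfl] at hdvd

theorem natCast_ne_zero : (p : Γ) ≠ 0 := fun h0 => by
  have hone := h.eq_zero_of_natCast_pow_mul_eq_zero hp.ne_zero (x := 1) (j := 1) (by
    rw [h0, pow_one, zero_mul])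
  exact h.not_isUnit_natCast hp (.of_mul_eq_one 1 (by simp only [hone, mul_zero]))

variable [IsDiscreteValuationRing 𝒪]

theorem exists_powerSeries_isUnit_dvd_sub {x : Γ} (hx : ¬(p : Γ) ∣ x) :
    ∃ (a : ℤ) (g : PowerSeries 𝒪), IsUnit g ∧
      (p : Γ) ∣ x - algebraMap _ Γ (HahnSeries.single a 1 * HahnSeries.ofPowerSeries ℤ 𝒪 g) := by
  have hex : ∃ i, ¬(p : 𝒪) ∣ coeff i x := by
    simpa only [pow_one, not_forall] using
      (h.natCast_pow_dvd_iff hp.ne_zero x 1).not.1 (by rwa [pow_one])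
  obtain ⟨N, hN⟩ := h.exists_forall_le_pow_dvd_coeff x 1
  obtain ⟨a, ha, hmin⟩ := Int.exists_least_of_bdd
    ⟨N, fun z hz => le_of_not_ge fun hzN => hz (pow_one (p : 𝒪) ▸ hN z hzN)⟩ hex
  refine ⟨a, PowerSeries.mk fun n => coeff (a + n) x, ?_, ?_⟩
  · rwa [PowerSeries.isUnit_iff_constantCoeff, ← PowerSeries.coeff_zero_eq_constantCoeff_apply,
      PowerSeries.coeff_mk, Nat.cast_zero, add_zero, ← IsLocalRing.notMem_maximalIdeal,
      hp.maximalIdeal_eq, Ideal.mem_span_singleton]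
  · refine pow_one (p : Γ) ▸ (h.natCast_pow_dvd_iff hp.ne_zero _ 1).2 fun i => ?_
    rw [map_sub, h.coeff_algebraMap, HahnSeries.coeff_single_mul, one_mul, pow_one]
    have hcoe := PowerSeries.coeff_coe (R := 𝒪) (PowerSeries.mk fun n => coeff (a + n) x) (i - a)
    rw [hcoe]
    split_ifs with hi
    · rw [sub_zero]
      exact not_not.1 fun hdvd => (hmin i hdvd).not_gt (by omega)
    · rw [PowerSeries.coeff_mk, show a + ((i - a).natAbs : ℤ) = i by omega, sub_self]
      exact dvd_zero _

theorem isUnit_of_not_dvd {x : Γ} (hx : ¬(p : Γ) ∣ x) : IsUnit x := by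
  have := h.isAdicComplete
  obtain ⟨a, g, hg, y, hy⟩ := h.exists_powerSeries_isUnit_dvd_sub hp hx
  have hunit : IsUnit (algebraMap (LaurentSeries 𝒪) Γ
      (HahnSeries.single a 1 * HahnSeries.ofPowerSeries ℤ 𝒪 g)) := by
    refine (IsUnit.mul (.of_mul_eq_one (HahnSeries.single (-a) 1) ?_) (hg.map _)).map _
    rw [HahnSeries.single_mul_single, add_neg_cancel, one_mul, HahnSeries.single_zero_one]
  obtain ⟨w, hw⟩ := hunit
  have hpy : (p : Γ) * y ∈ Ideal.jacobson ⊥ :=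
    IsAdicComplete.le_jacobson_bot _ (Ideal.mul_mem_right _ _ (Ideal.mem_span_singleton_self _))
  rw [eq_add_of_sub_eq hy, ← hw]
  convert (Ideal.mem_jacobson_bot.1 hpy ↑w⁻¹).mul w.isUnit using 1
  rw [add_mul, one_mul, mul_assoc, Units.inv_mul, mul_one]

theorem exists_eq_natCast_pow_mul_isUnit {x : Γ} (hx : x ≠ 0) :
    ∃ (n : ℕ) (w : Γ), IsUnit w ∧ x = (p : Γ) ^ n * w := by
  have hfin : FiniteMultiplicity (p : Γ) x := by
    obtain ⟨i, hi⟩ := not_forall.1 (mt (h.eq_zero_of_coeff_eq_zero x) hx)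
    obtain ⟨n, hn⟩ := FiniteMultiplicity.of_not_isUnit hp.not_isUnit hi
    exact ⟨n, fun hdvd => hn ((h.natCast_pow_dvd_iff hp.ne_zero x _).1 hdvd i)⟩
  obtain ⟨w, hw, hdvd⟩ := hfin.exists_eq_pow_mul_and_not_dvd
  exact ⟨_, w, h.isUnit_of_not_dvd hp hdvd, hw⟩

theorem isDomain : IsDomain Γ := by
  have : Nontrivial Γ := ⟨p, 0, h.natCast_ne_zero hp⟩
  have : NoZeroDivisors Γ := ⟨fun {x y} hxy => or_iff_not_imp_left.2 fun hx => by
    obtain ⟨n, w, hw, rfl⟩ := h.exists_eq_natCast_pow_mul_isUnit hp hx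
    rw [mul_assoc] at hxy
    exact (hw.mul_right_eq_zero).1 (h.eq_zero_of_natCast_pow_mul_eq_zero hp.ne_zero hxy)⟩
  exact NoZeroDivisors.to_isDomain Γ

theorem irreducible_natCast : Irreducible (p : Γ) := by
  refine ⟨h.not_isUnit_natCast hp, fun x y hxy => ?_⟩
  by_contra! hnot
  have hdvd {z : Γ} (hz : ¬IsUnit z) : (p : Γ) ∣ z :=
    not_not.1 fun hz' => hz (h.isUnit_of_not_dvd hp hz')
  obtain ⟨⟨x', rfl⟩, ⟨y', rfl⟩⟩ := And.intro (hdvd hnot.1) (hdvd hnot.2)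
  have hone : (1 : Γ) - p * (x' * y') = 0 :=
    h.eq_zero_of_natCast_pow_mul_eq_zero hp.ne_zero (j := 1) (by linear_combination hxy)
  exact h.not_isUnit_natCast hp (.of_mul_eq_one _ (sub_eq_zero.1 hone).symm)

theorem isDiscreteValuationRing [IsDomain Γ] : IsDiscreteValuationRing Γ :=
  .ofHasUnitMulPowIrreducibleFactorization ⟨p, h.irreducible_natCast hp, fun hx => by
    obtain ⟨n, w, hw, rfl⟩ := h.exists_eq_natCast_pow_mul_isUnit hp hx
    exact ⟨n, hw.unit, rfl⟩⟩

end Irreducible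

end IsBilateralSeriesRing

section ConvolutionOfNull

variable {K : Type*} [NormedField K]

theorem add_convolution_apply {x x' y : ℤ → K} {n : ℤ} (hx : Summable fun i => x i * y (n - i))
    (hx' : Summable fun i => x' i * y (n - i)) :
    convolution (x + x') y n = convolution x y n + convolution x' y n := by
  simp only [convolution, Pi.add_apply, add_mul, hx.tsum_add hx']

theorem convolution_smul_smul (a b : K) (x y : ℤ → K) :
    convolution (a • x) (b • y) = (a * b) • convolution x y := by
  ext n
  simp only [convolution, Pi.smul_apply, smul_eq_mul, mul_mul_mul_comm, tsum_mul_left]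

theorem algebraMap_coeff_mul {R : Type*} [CommRing R] [Algebra R K] (g g' : LaurentSeries R) :
    (fun n => algebraMap R K ((g * g').coeff n)) =
      convolution (fun i => algebraMap R K (g.coeff i)) fun i => algebraMap R K (g'.coeff i) := by
  ext n
  have hinj : Set.InjOn Prod.fst
      (Finset.antidiagonal g.isPWO_support g'.isPWO_support n : Set (ℤ × ℤ)) := by
    rintro ⟨a, b⟩ hab ⟨a', b'⟩ hab' rfl
    have hb := (Finset.mem_antidiagonal.1 hab).2.2
    have hb' := (Finset.mem_antidiagonal.1 hab').2.2
    exact Prod.ext rfl (by simp only at *; omega)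
  rw [HahnSeries.coeff_mul, map_sum, convolution,
    tsum_eq_sum (s := (Finset.antidiagonal g.isPWO_support g'.isPWO_support n).image Prod.fst),
    Finset.sum_image hinj]
  · refine Finset.sum_congr rfl fun ij hij => ?_
    rw [map_mul, ← (Finset.mem_antidiagonal.1 hij).2.2, add_sub_cancel_left]
  · intro i hi
    by_contra h0
    refine hi (Finset.mem_image.2 ⟨(i, n - i), Finset.mem_antidiagonal.2
      ⟨fun hg => h0 ?_, fun hg => h0 ?_, add_sub_cancel i n⟩, rfl⟩)
    · rw [hg, map_zero, zero_mul]
    · rw [hg, map_zero, mul_zero]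

end ConvolutionOfNull

namespace IsBilateralSeriesRing

variable {𝒪 Γ : Type*} [CommRing 𝒪] [CommRing Γ] [Algebra (LaurentSeries 𝒪) Γ] {p : ℕ}
  {coeff : ℤ → Γ →+ 𝒪} (h : IsBilateralSeriesRing p coeff) [IsDomain 𝒪] [IsDiscreteValuationRing 𝒪]
  (hp : Irreducible (p : 𝒪))

/-- The coefficients of an element of `Γ`, viewed in the fraction field of `𝒪`. -/
def fracCoeff (coeff : ℤ → Γ →+ 𝒪) : Γ →+ (ℤ → FractionRing 𝒪) where
  toFun x i := algebraMap 𝒪 (FractionRing 𝒪) (coeff i x)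
  map_zero' := by ext; simp only [map_zero, Pi.zero_apply]
  map_add' x y := by ext; simp only [map_add, Pi.add_apply]

omit [Algebra (LaurentSeries 𝒪) Γ] [IsDomain 𝒪] [IsDiscreteValuationRing 𝒪] in
theorem fracCoeff_natCast_pow_mul (j : ℕ) (x : Γ) :
    fracCoeff coeff ((p : Γ) ^ j * x) = (p : FractionRing 𝒪) ^ j • fracCoeff coeff x := by
  ext i
  simp only [fracCoeff, AddMonoidHom.coe_mk, ZeroHom.coe_mk, coeff_natCast_pow_mul, map_mul,
    map_pow, map_natCast, Pi.smul_apply, smul_eq_mul]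

omit [Algebra (LaurentSeries 𝒪) Γ] in
theorem norm_fracCoeff_le_one (x : Γ) (i : ℤ) : ‖fracCoeff coeff x i‖ ≤ 1 :=
  norm_algebraMap_le_one _

omit [IsDomain 𝒪] [IsDiscreteValuationRing 𝒪] in
include h in
theorem fracCoeff_injective : Function.Injective (fracCoeff coeff) := fun _ _ hxy =>
  h.ext fun i => IsFractionRing.injective 𝒪 (FractionRing 𝒪) (congrFun hxy i)

include h hp

theorem tendsto_fracCoeff_atBot (x : Γ) : Tendsto (fracCoeff coeff x) atBot (𝓝 0) := by
  refine NormedAddGroup.tendsto_nhds_zero.2 fun ε hε => ?_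
  obtain ⟨j, hj⟩ := ((tendsto_norm_uniformizer_pow hp).eventually_lt_const hε).exists
  obtain ⟨N, hN⟩ := h.exists_forall_le_pow_dvd_coeff x j
  exact (eventually_le_atBot N).mono fun i hi =>
    ((norm_algebraMap_le_pow_iff hp _ j).2 (hN i hi)).trans_lt hj

variable [CompleteSpace (FractionRing 𝒪)]

theorem summable_fracCoeff_mul (x y : Γ) (n : ℤ) :
    Summable fun i => fracCoeff coeff x i * fracCoeff coeff y (n - i) :=
  summable_mul_sub_of_tendsto_atBot (norm_fracCoeff_le_one x) (norm_fracCoeff_le_one y)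
    (h.tendsto_fracCoeff_atBot hp x) (h.tendsto_fracCoeff_atBot hp y) n

/-- The failure of `fracCoeff` to be multiplicative is biadditive and vanishes on Laurent series,
so it is divisible by every power of `p`. -/
theorem fracCoeff_mul (x y : Γ) :
    fracCoeff coeff (x * y) = convolution (fracCoeff coeff x) (fracCoeff coeff y) := by
  let defect (x y : Γ) : ℤ → FractionRing 𝒪 :=
    fracCoeff coeff (x * y) - convolution (fracCoeff coeff x) (fracCoeff coeff y)
  have defect_comm (x y : Γ) : defect x y = defect y x := by
    simp only [defect, mul_comm x, convolution_comm (fracCoeff coeff x)]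
  have defect_add (x x' y : Γ) : defect (x + x') y = defect x y + defect x' y := by
    ext n
    simp only [defect, add_mul, map_add, Pi.sub_apply, Pi.add_apply, add_convolution_apply
      (h.summable_fracCoeff_mul hp x y n) (h.summable_fracCoeff_mul hp x' y n)]
    ring
  have defect_pow_mul (j : ℕ) (x y : Γ) :
      defect (p ^ j * x) y = (p : FractionRing 𝒪) ^ j • defect x y := by
    have hconv := convolution_smul_smul ((p : FractionRing 𝒪) ^ j) 1
      (fracCoeff coeff x) (fracCoeff coeff y)
    rw [one_smul, mul_one] at hconv
    simp only [defect, mul_assoc, fracCoeff_natCast_pow_mul, hconv, smul_sub]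
  have defect_algebraMap (g g' : LaurentSeries 𝒪) :
      defect (algebraMap _ Γ g) (algebraMap _ Γ g') = 0 := by
    refine sub_eq_zero.2 ?_
    rw [← map_mul]
    simpa only [← h.coeff_algebraMap] using! algebraMap_coeff_mul (K := FractionRing 𝒪) g g'
  have norm_defect_le_one (x y : Γ) (n : ℤ) : ‖defect x y n‖ ≤ 1 := by
    rw [show defect x y n = fracCoeff coeff (x * y) n + -convolution _ _ n from sub_eq_add_neg _ _]
    refine (IsUltrametricDist.norm_add_le_max _ _).trans
      (max_le (norm_fracCoeff_le_one _ _) ((norm_neg _).trans_le ?_))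
    refine IsUltrametricDist.norm_tsum_le_of_forall_le_of_nonneg zero_le_one fun i => ?_
    rw [norm_mul]
    exact mul_le_one₀ (norm_fracCoeff_le_one _ _) (norm_nonneg _) (norm_fracCoeff_le_one _ _)
  ext n
  refine sub_eq_zero.1 (eq_zero_of_forall_norm_le_pow hp fun j => ?_)
  obtain ⟨g, x', rfl⟩ := h.exists_eq_algebraMap_add x j
  obtain ⟨g', y', rfl⟩ := h.exists_eq_algebraMap_add y j
  change ‖defect _ _ n‖ ≤ _
  rw [defect_add, defect_pow_mul, defect_comm (algebraMap _ Γ g), defect_add, defect_algebraMap,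
    defect_pow_mul, zero_add, ← smul_add, Pi.smul_apply, smul_eq_mul, norm_mul, norm_pow,
    ← map_natCast (algebraMap 𝒪 (FractionRing 𝒪))]
  exact mul_le_of_le_one_right (pow_nonneg (norm_nonneg _) j) <|
    (IsUltrametricDist.norm_add_le_max _ _).trans
      (max_le (norm_defect_le_one _ _ _) (norm_defect_le_one _ _ _))

end IsBilateralSeriesRing

theorem IsOverconvergent.const_smul {K : Type*} [NormedField K] {x : ℤ → K}
    (hx : IsOverconvergent x) (a : K) : IsOverconvergent (a • x) := by
  have hax : convolution (Pi.single 0 a) x = a • x := by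
    ext n
    rw [single_convolution, sub_zero, Pi.smul_apply, smul_eq_mul]
  exact hax ▸ (isOverconvergent_single 0 a).convolution hx

theorem isOverconvergent_const_smul_iff {K : Type*} [NormedField K] {x : ℤ → K} {a : K}
    (ha : a ≠ 0) : IsOverconvergent (a • x) ↔ IsOverconvergent x :=
  ⟨fun h => inv_smul_smul₀ ha x ▸ h.const_smul a⁻¹, fun h => h.const_smul a⟩

namespace IsBilateralSeriesRing

variable {𝒪 Γ E : Type*} [CommRing 𝒪] [IsDomain 𝒪] [IsDiscreteValuationRing 𝒪] [CommRing Γ]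
  [Algebra (LaurentSeries 𝒪) Γ] [Field E] [Algebra Γ E]

/-- The canonical map from Laurent series over `𝒪` to `𝓔 = Γ[1/p]`. -/
def ofLaurent (𝒪 Γ E : Type*) [CommRing 𝒪] [CommRing Γ] [Algebra (LaurentSeries 𝒪) Γ] [Field E]
    [Algebra Γ E] : LaurentSeries 𝒪 →+* E :=
  (algebraMap Γ E).comp (algebraMap (LaurentSeries 𝒪) Γ)

variable [IsFractionRing Γ E] {p : ℕ} {coeff : ℤ → Γ →+ 𝒪} (h : IsBilateralSeriesRing p coeff)
  (hp : Irreducible (p : 𝒪))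

include hp in
omit [IsDomain 𝒪] [IsDiscreteValuationRing 𝒪] in
theorem natCast_fractionRing_ne_zero : (p : FractionRing 𝒪) ≠ 0 := by
  rw [← map_natCast (algebraMap 𝒪 (FractionRing 𝒪))]
  exact (map_ne_zero_iff _ (IsFractionRing.injective _ _)).2 hp.ne_zero

include h hp

omit [IsDiscreteValuationRing 𝒪] in
theorem natCast_field_ne_zero : (p : E) ≠ 0 := by
  rw [← map_natCast (algebraMap Γ E)]
  exact (map_ne_zero_iff _ (IsFractionRing.injective Γ E)).2 (h.natCast_ne_zero hp)

theorem exists_natCast_pow_mul_eq (x : E) :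
    ∃ (j : ℕ) (y : Γ), (p : E) ^ j * x = algebraMap Γ E y := by
  obtain ⟨⟨y, s⟩, hs⟩ := IsLocalization.surj (nonZeroDivisors Γ) x
  have := h.isDomain hp
  obtain ⟨j, w, hw, hsw⟩ := h.exists_eq_natCast_pow_mul_isUnit hp (nonZeroDivisors.ne_zero s.2)
  obtain ⟨w', hw'⟩ := hw.exists_right_inv
  have hw'E : algebraMap Γ E w * algebraMap Γ E w' = 1 := by rw [← map_mul, hw', map_one]
  refine ⟨j, y * w', ?_⟩
  rw [map_mul, ← hs, hsw, map_mul, map_pow, map_natCast]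
  linear_combination -((p : E) ^ j * x) * hw'E

theorem exists_natCast_pow_mul_eq₂ (x x' : E) : ∃ (j : ℕ) (y y' : Γ),
    (p : E) ^ j * x = algebraMap Γ E y ∧ (p : E) ^ j * x' = algebraMap Γ E y' := by
  obtain ⟨j, y, hy⟩ := h.exists_natCast_pow_mul_eq hp x
  obtain ⟨j', y', hy'⟩ := h.exists_natCast_pow_mul_eq hp x'
  refine ⟨j + j', p ^ j' * y, p ^ j * y', ?_, ?_⟩
  · rw [map_mul, map_pow, map_natCast, ← hy]
    ring
  · rw [map_mul, map_pow, map_natCast, ← hy']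
    ring

theorem exists_expansion (x : E) : ∃ a : ℤ → FractionRing 𝒪, ∀ (j : ℕ) (y : Γ),
    (p : E) ^ j * x = algebraMap Γ E y →
      (p : FractionRing 𝒪) ^ j • a = fracCoeff coeff y := by
  obtain ⟨j, y, hy⟩ := h.exists_natCast_pow_mul_eq hp x
  have hpj := pow_ne_zero j (natCast_fractionRing_ne_zero hp)
  refine ⟨((p : FractionRing 𝒪) ^ j)⁻¹ • fracCoeff coeff y, fun j' y' hy' => ?_⟩
  have hyy' : (p : Γ) ^ j' * y = p ^ j * y' := IsFractionRing.injective Γ E <| by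
    rw [map_mul, map_mul, map_pow, map_pow, map_natCast, ← hy, ← hy']
    ring
  rw [smul_comm, ← fracCoeff_natCast_pow_mul, hyy', fracCoeff_natCast_pow_mul,
    inv_smul_smul₀ hpj]

/-- The coefficients in `𝒪[1/p]` of an element of `𝓔 = Γ[1/p]`. -/
def expansion : E →+ (ℤ → FractionRing 𝒪) :=
  AddMonoidHom.mk' (fun x => (h.exists_expansion hp x).choose) fun x x' => by
    obtain ⟨j, y, y', hy, hy'⟩ := h.exists_natCast_pow_mul_eq₂ hp x x'
    refine smul_right_injective _ (pow_ne_zero j (natCast_fractionRing_ne_zero hp)) ?_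
    beta_reduce
    rw [(h.exists_expansion hp (x + x')).choose_spec j (y + y') (by rw [mul_add, hy, hy', map_add]),
      smul_add, (h.exists_expansion hp x).choose_spec j y hy,
      (h.exists_expansion hp x').choose_spec j y' hy', map_add]

theorem pow_smul_expansion {x : E} {j : ℕ} {y : Γ} (hy : (p : E) ^ j * x = algebraMap Γ E y) :
    (p : FractionRing 𝒪) ^ j • h.expansion hp x = fracCoeff coeff y :=
  (h.exists_expansion hp x).choose_spec j y hy

theorem expansion_algebraMap (y : Γ) :
    h.expansion hp (algebraMap Γ E y) = fracCoeff coeff y := by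
  rw [← h.pow_smul_expansion hp (x := algebraMap Γ E y) (j := 0) (by rw [pow_zero, one_mul]),
    pow_zero, one_smul]

theorem expansion_ofLaurent (g : LaurentSeries 𝒪) (i : ℤ) :
    h.expansion hp (ofLaurent 𝒪 Γ E g) i = algebraMap 𝒪 (FractionRing 𝒪) (g.coeff i) := by
  rw [ofLaurent, RingHom.comp_apply, expansion_algebraMap, ← h.coeff_algebraMap]
  rfl

theorem expansion_ofLaurent_single (m : ℤ) (a : 𝒪) :
    h.expansion hp (ofLaurent 𝒪 Γ E (HahnSeries.single m a)) =
      Pi.single m (algebraMap 𝒪 (FractionRing 𝒪) a) := by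
  ext i
  rw [expansion_ofLaurent, HahnSeries.coeff_single, Pi.single_apply]
  split_ifs with hi
  · rfl
  · exact map_zero _

theorem expansion_injective : Function.Injective (h.expansion (E := E) hp) := by
  refine (injective_iff_map_eq_zero _).2 fun x hx => ?_
  obtain ⟨j, y, hy⟩ := h.exists_natCast_pow_mul_eq hp x
  have hy0 : y = 0 := h.fracCoeff_injective <| by
    rw [← h.pow_smul_expansion hp hy, hx, smul_zero, map_zero]
  rw [hy0, map_zero] at hy
  exact (mul_eq_zero.1 hy).resolve_left (pow_ne_zero j (h.natCast_field_ne_zero hp))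

theorem exists_forall_norm_expansion_le (x : E) : ∃ B, ∀ i, ‖h.expansion hp x i‖ ≤ B := by
  obtain ⟨j, y, hy⟩ := h.exists_natCast_pow_mul_eq hp x
  have hpj := pow_ne_zero j (natCast_fractionRing_ne_zero hp)
  refine ⟨‖((p : FractionRing 𝒪) ^ j)⁻¹‖, fun i => ?_⟩
  rw [← inv_smul_smul₀ hpj (h.expansion hp x), h.pow_smul_expansion hp hy, Pi.smul_apply,
    smul_eq_mul, norm_mul]
  exact mul_le_of_le_one_right (norm_nonneg _) (norm_fracCoeff_le_one y i)

theorem isOverconvergent_expansion_iff (x : E) :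
    IsOverconvergent (h.expansion hp x) ↔ ∃ (y : Γ) (j : ℕ),
      (∃ m : ℕ, 0 < m ∧ ∃ N : ℤ, ∀ i ≤ N, (p : 𝒪) ^ ((-i).toNat / m) ∣ coeff i y) ∧
        (p : E) ^ j * x = algebraMap Γ E y := by
  have hiff {j : ℕ} {y : Γ} (hy : (p : E) ^ j * x = algebraMap Γ E y) :
      IsOverconvergent (h.expansion hp x) ↔
        ∃ m : ℕ, 0 < m ∧ ∃ N : ℤ, ∀ i ≤ N, (p : 𝒪) ^ ((-i).toNat / m) ∣ coeff i y := by
    rw [← isOverconvergent_const_smul_iff (pow_ne_zero j (natCast_fractionRing_ne_zero hp)),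
      h.pow_smul_expansion hp hy]
    exact isOverconvergent_algebraMap_iff hp _
  constructor
  · intro hx
    obtain ⟨j, y, hy⟩ := h.exists_natCast_pow_mul_eq hp x
    exact ⟨y, j, (hiff hy).1 hx, hy⟩
  · rintro ⟨y, j, hyd, hy⟩
    exact (hiff hy).2 hyd

theorem exists_expansion_eq {a : ℤ → FractionRing 𝒪} (ha : IsOverconvergent a) {B : ℝ}
    (hB : ∀ i, ‖a i‖ ≤ B) : ∃ x : E, h.expansion hp x = a := by
  obtain ⟨j, hj⟩ := exists_algebraMap_eq_uniformizer_pow_mul hp B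
  choose b hb using fun i => hj (a i) (hB i)
  rw [map_natCast] at hb
  have hba : (fun i => algebraMap 𝒪 (FractionRing 𝒪) (b i)) = (p : FractionRing 𝒪) ^ j • a :=
    funext hb
  obtain ⟨m, hm, N, hN⟩ := (isOverconvergent_algebraMap_iff hp b).1 (hba ▸ ha.const_smul _)
  obtain ⟨y, hy⟩ := h.exists_coeff_eq b fun j' =>
    ⟨min N (-(m * j')), fun i hi => (pow_dvd_pow _ ((Nat.le_div_iff_mul_le hm).2 (by
      rw [mul_comm]; zify; omega))).trans (hN i (by omega))⟩
  refine ⟨((p : E) ^ j)⁻¹ * algebraMap Γ E y,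
    smul_right_injective _ (pow_ne_zero j (natCast_fractionRing_ne_zero hp)) ?_⟩
  beta_reduce
  rw [← hba, h.pow_smul_expansion hp
    (mul_inv_cancel_left₀ (pow_ne_zero j (h.natCast_field_ne_zero hp)) _)]
  exact funext fun i => congrArg (algebraMap 𝒪 (FractionRing 𝒪)) (hy i)

theorem expansion_one : h.expansion hp (1 : E) = Pi.single 0 1 := by
  rw [← map_one (ofLaurent 𝒪 Γ E), ← HahnSeries.single_zero_one, expansion_ofLaurent_single,
    map_one]

section Complete

variable [CompleteSpace (FractionRing 𝒪)]

theorem expansion_mul (x x' : E) :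
    h.expansion hp (x * x') = convolution (h.expansion hp x) (h.expansion hp x') := by
  obtain ⟨j, y, y', hy, hy'⟩ := h.exists_natCast_pow_mul_eq₂ hp x x'
  refine smul_right_injective _
    (pow_ne_zero (j + j) (natCast_fractionRing_ne_zero hp)) ?_
  beta_reduce
  rw [h.pow_smul_expansion hp (y := y * y') (by rw [map_mul, ← hy, ← hy']; ring),
    h.fracCoeff_mul hp, ← h.pow_smul_expansion hp hy, ← h.pow_smul_expansion hp hy',
    convolution_smul_smul, pow_add]

theorem expansion_ofLaurent_single_mul (m : ℤ) (a : 𝒪) (x : E) (i : ℤ) :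
    h.expansion hp (ofLaurent 𝒪 Γ E (HahnSeries.single m a) * x) i =
      algebraMap 𝒪 (FractionRing 𝒪) a * h.expansion hp x (i - m) := by
  rw [expansion_mul, expansion_ofLaurent_single, single_convolution]

end Complete

end IsBilateralSeriesRing

namespace IsBilateralSeriesRing

section Subrings

variable {𝒪 Γ E : Type*} [CommRing 𝒪] [IsDomain 𝒪] [IsDiscreteValuationRing 𝒪] [CommRing Γ]
  [Algebra (LaurentSeries 𝒪) Γ] [Field E] [Algebra Γ E]

/-- The subring `𝓔₊ = 𝒪⟦u⟧[1/p]` of `𝓔 = Γ[1/p]`. -/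
def plusPart (p : ℕ) (𝒪 Γ E : Type*) [CommRing 𝒪] [CommRing Γ] [Algebra (LaurentSeries 𝒪) Γ]
    [Field E] [Algebra Γ E] : Subring E where
  carrier := {x | ∃ (g : PowerSeries 𝒪) (j : ℕ),
    (p : E) ^ j * x = ofLaurent 𝒪 Γ E (HahnSeries.ofPowerSeries ℤ 𝒪 g)}
  zero_mem' := ⟨0, 0, by rw [map_zero, map_zero, mul_zero]⟩
  one_mem' := ⟨1, 0, by rw [map_one, map_one, mul_one, pow_zero]⟩
  neg_mem' := by
    rintro x ⟨g, j, hg⟩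
    exact ⟨-g, j, by rw [map_neg, map_neg, ← hg, mul_neg]⟩
  add_mem' := by
    rintro x x' ⟨g, j, hg⟩ ⟨g', j', hg'⟩
    refine ⟨p ^ j' * g + p ^ j * g', j + j', ?_⟩
    simp only [map_add, map_mul, map_pow, map_natCast, ← hg, ← hg']
    ring
  mul_mem' := by
    rintro x x' ⟨g, j, hg⟩ ⟨g', j', hg'⟩
    refine ⟨g * g', j + j', ?_⟩
    rw [map_mul, map_mul, ← hg, ← hg']
    ring

variable [IsFractionRing Γ E] {p : ℕ} {coeff : ℤ → Γ →+ 𝒪} (h : IsBilateralSeriesRing p coeff)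
  (hp : Irreducible (p : 𝒪))
include h hp

theorem mem_plusPart_iff {x : E} :
    x ∈ plusPart p 𝒪 Γ E ↔ ∀ i < 0, h.expansion hp x i = 0 := by
  have hiff {j : ℕ} {y : Γ} (hy : (p : E) ^ j * x = algebraMap Γ E y) (i : ℤ) :
      h.expansion hp x i = 0 ↔ coeff i y = 0 := by
    have hsmul := congrFun (h.pow_smul_expansion hp hy) i
    rw [Pi.smul_apply, smul_eq_mul] at hsmul
    rw [← mul_eq_zero_iff_left (pow_ne_zero j (natCast_fractionRing_ne_zero hp)), hsmul]
    exact map_eq_zero_iff _ (IsFractionRing.injective 𝒪 (FractionRing 𝒪))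
  constructor
  · rintro ⟨g, j, hg⟩ i hi
    rw [hiff hg, h.coeff_algebraMap]
    exact (PowerSeries.coeff_coe g i).trans (if_pos hi)
  · intro hx
    obtain ⟨j, y, hy⟩ := h.exists_natCast_pow_mul_eq hp x
    refine ⟨PowerSeries.mk fun n => coeff n y, j, hy.trans (congrArg _ (h.ext fun i => ?_))⟩
    rw [h.coeff_algebraMap]
    refine .trans ?_ (PowerSeries.coeff_coe _ i).symm
    split_ifs with hi
    · exact (hiff hy i).1 (hx i hi)
    · rw [PowerSeries.coeff_mk, Int.natAbs_of_nonneg (not_lt.1 hi)]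

variable [CompleteSpace (FractionRing 𝒪)]

/-- The subring `𝓔^† = Γ^†[1/p]` of `𝓔`, where `Γ^†` is formed by the series `∑ xᵢ uⁱ` with
`liminf_{i → -∞} vₚ(xᵢ) / (-i) > 0`. -/
def overconvergentPart : Subring E where
  carrier := {x | ∃ (y : Γ) (j : ℕ), (∃ m : ℕ, 0 < m ∧ ∃ N : ℤ, ∀ i ≤ N,
    (p : 𝒪) ^ ((-i).toNat / m) ∣ coeff i y) ∧ (p : E) ^ j * x = algebraMap Γ E y}
  zero_mem' := by
    rw [Set.mem_ofPred_eq, ← h.isOverconvergent_expansion_iff hp, map_zero]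
    exact (overconvergentSubgroup _).zero_mem
  one_mem' := by
    rw [Set.mem_ofPred_eq, ← h.isOverconvergent_expansion_iff hp, expansion_one]
    exact isOverconvergent_single 0 1
  neg_mem' {x} hx := by
    rw [Set.mem_ofPred_eq, ← h.isOverconvergent_expansion_iff hp] at hx ⊢
    rw [map_neg]
    exact (overconvergentSubgroup _).neg_mem hx
  add_mem' hx hy := by
    rw [Set.mem_ofPred_eq, ← h.isOverconvergent_expansion_iff hp] at hx hy ⊢
    rw [map_add]
    exact hx.add hy
  mul_mem' hx hy := by
    rw [Set.mem_ofPred_eq, ← h.isOverconvergent_expansion_iff hp] at hx hy ⊢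
    rw [expansion_mul]
    exact hx.convolution hy

theorem mem_overconvergentPart_iff {x : E} :
    x ∈ h.overconvergentPart hp ↔ IsOverconvergent (h.expansion hp x) :=
  (h.isOverconvergent_expansion_iff hp x).symm

/-- The inclusion of `𝓔^†` into the Robba ring over `𝒪[1/p]`. -/
def toRobba : h.overconvergentPart (E := E) hp →+* RobbaRing (FractionRing 𝒪) where
  toFun x := Robba.mk (h.expansion hp (x : E)) ((h.mem_overconvergentPart_iff hp).1 x.2)
  map_zero' := coeff_injective (map_zero (h.expansion (E := E) hp))
  map_one' := coeff_injective (h.expansion_one hp)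
  map_add' x y := coeff_injective (map_add (h.expansion hp) (x : E) y)
  map_mul' x y := coeff_injective (h.expansion_mul hp (x : E) y)

theorem toRobba_injective : Function.Injective (h.toRobba (E := E) hp) := fun _ _ hxy =>
  Subtype.ext (h.expansion_injective hp (congrArg Robba.coeff hxy))

theorem range_toRobba : (h.toRobba (E := E) hp).range = boundedSubring (FractionRing 𝒪) := by
  ext z
  constructor
  · rintro ⟨x, rfl⟩
    exact h.exists_forall_norm_expansion_le hp (x : E)
  · rintro ⟨B, hB⟩
    obtain ⟨x, hx⟩ := h.exists_expansion_eq (E := E) hp (isOverconvergent_coeff z) hB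
    exact ⟨⟨x, (h.mem_overconvergentPart_iff hp).2 (hx ▸ isOverconvergent_coeff z)⟩,
      coeff_injective hx⟩

theorem toRobba_mem_plusSubring_iff {x : h.overconvergentPart (E := E) hp} :
    h.toRobba hp x ∈ plusSubring (FractionRing 𝒪) ↔ (x : E) ∈ plusPart p 𝒪 Γ E := by
  rw [h.mem_plusPart_iff hp]
  exact forall_congr' fun i => imp_congr_left ((not_congr AddSubmonoid.mem_nonneg).trans not_le)

theorem plusPart_le_overconvergentPart : plusPart p 𝒪 Γ E ≤ h.overconvergentPart hp := by
  rintro x ⟨g, j, hg⟩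
  refine ⟨_, j, ⟨1, one_pos, -1, fun i hi => ?_⟩, hg⟩
  rw [h.coeff_algebraMap]
  exact (PowerSeries.coeff_coe g i).trans (if_pos (by omega)) ▸ dvd_zero _

end Subrings

section Frobenius

variable {𝒪 Γ E : Type*} [CommRing 𝒪] [CommRing Γ] [Algebra (LaurentSeries 𝒪) Γ] [Field E]
  [Algebra Γ E]

/-- `σ` is a Frobenius lift on `𝓔`: it sends `u` to `u ^ q`, extends the endomorphism `τ` of `𝒪`,
and preserves `𝓔₊`. -/
structure IsFrobenius (p q : ℕ) (𝒪 Γ : Type*) {E : Type*} [CommRing 𝒪] [CommRing Γ]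
    [Algebra (LaurentSeries 𝒪) Γ] [Field E] [Algebra Γ E] (τ : 𝒪 →+* 𝒪) (σ : E →+* E) : Prop where
  map_u : σ (ofLaurent 𝒪 Γ E (HahnSeries.single 1 1)) = ofLaurent 𝒪 Γ E (HahnSeries.single 1 1) ^ q
  map_C (a : 𝒪) : σ (ofLaurent 𝒪 Γ E (HahnSeries.C a)) = ofLaurent 𝒪 Γ E (HahnSeries.C (τ a))
  mapsTo_plusPart : Set.MapsTo σ (plusPart p 𝒪 Γ E) (plusPart p 𝒪 Γ E)

theorem ofLaurent_single_one (m : ℤ) : ofLaurent 𝒪 Γ E (HahnSeries.single m 1) =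
    ofLaurent 𝒪 Γ E (HahnSeries.single 1 1) ^ m := by
  have hnat (n : ℕ) : ofLaurent 𝒪 Γ E (HahnSeries.single (n : ℤ) 1) =
      ofLaurent 𝒪 Γ E (HahnSeries.single 1 1) ^ n := by
    rw [← map_pow, HahnSeries.single_pow, one_pow, nsmul_one]
  obtain ⟨n, rfl | rfl⟩ := m.eq_nat_or_neg
  · rw [hnat, zpow_natCast]
  · rw [zpow_neg, zpow_natCast, ← hnat]
    refine eq_inv_of_mul_eq_one_left ?_
    rw [← map_mul, HahnSeries.single_mul_single, neg_add_cancel, one_mul,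
      HahnSeries.single_zero_one, map_one]

variable {p q : ℕ} {τ : 𝒪 →+* 𝒪} {σ : E →+* E} (hσ : IsFrobenius p q 𝒪 Γ τ σ)

include hσ in
theorem IsFrobenius.map_single (m : ℤ) : σ (ofLaurent 𝒪 Γ E (HahnSeries.single m 1)) =
    ofLaurent 𝒪 Γ E (HahnSeries.single (q * m) 1) := by
  rw [ofLaurent_single_one m, map_zpow₀, hσ.map_u, ofLaurent_single_one (q * m), zpow_mul,
    zpow_natCast]

variable [IsDomain 𝒪] [IsDiscreteValuationRing 𝒪] [NeZero q] [IsFractionRing Γ E]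
  {coeff : ℤ → Γ →+ 𝒪} (h : IsBilateralSeriesRing p coeff) (hp : Irreducible (p : 𝒪))

/-- The difference of the expansion of `σ x` and the one obtained by applying `τ` to the
coefficients of `x` and multiplying the exponents by `q`. -/
def frobeniusDefect (q : ℕ) [NeZero q] (τ : 𝒪 →+* 𝒪) (σ : E →+* E) : E →+ (ℤ → FractionRing 𝒪) :=
  AddMonoidHom.mk' (fun x => h.expansion hp (σ x) -
    expand (fractionRingMap hp (map_natCast τ p)) q (h.expansion hp x)) fun x y => by
      rw [map_add, map_add, map_add, expand_add, add_sub_add_comm]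

theorem frobeniusDefect_apply (x : E) : h.frobeniusDefect hp q τ σ x = h.expansion hp (σ x) -
    expand (fractionRingMap hp (map_natCast τ p)) q (h.expansion hp x) := rfl

theorem frobeniusDefect_natCast_pow_mul (j : ℕ) (x : E) :
    h.frobeniusDefect hp q τ σ ((p : E) ^ j * x) =
      (p : FractionRing 𝒪) ^ j • h.frobeniusDefect hp q τ σ x := by
  ext i
  rw [← Nat.cast_pow, ← nsmul_eq_mul, map_nsmul, Pi.smul_apply, nsmul_eq_mul, Nat.cast_pow,
    Pi.smul_apply, smul_eq_mul]

include hσ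

theorem frobeniusDefect_C (a : 𝒪) :
    h.frobeniusDefect hp q τ σ (ofLaurent 𝒪 Γ E (HahnSeries.C a)) = 0 := by
  rw [frobeniusDefect_apply, hσ.map_C, HahnSeries.C_apply, HahnSeries.C_apply,
    expansion_ofLaurent_single, expansion_ofLaurent_single, expand_single,
    fractionRingMap_algebraMap, mul_zero, sub_self]

theorem frobeniusDefect_of_neg {x : E} (hx : x ∈ plusPart p 𝒪 Γ E) {i : ℤ} (hi : i < 0) :
    h.frobeniusDefect hp q τ σ x i = 0 := by
  rw [frobeniusDefect_apply, Pi.sub_apply,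
    (h.mem_plusPart_iff hp).1 (hσ.mapsTo_plusPart hx) i hi,
    expand_of_neg _ ((h.mem_plusPart_iff hp).1 hx) hi, sub_self]

variable [CompleteSpace (FractionRing 𝒪)]

theorem frobeniusDefect_single_mul (m : ℤ) (x : E) (i : ℤ) :
    h.frobeniusDefect hp q τ σ (ofLaurent 𝒪 Γ E (HahnSeries.single m 1) * x) i =
      h.frobeniusDefect hp q τ σ x (i - q * m) := by
  have hshift : h.expansion hp (ofLaurent 𝒪 Γ E (HahnSeries.single m 1) * x) =
      fun j => h.expansion hp x (j - m) := by
    ext j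
    rw [expansion_ofLaurent_single_mul, map_one, one_mul]
  rw [frobeniusDefect_apply, hshift, expand_comp_sub, map_mul, hσ.map_single, Pi.sub_apply,
    expansion_ofLaurent_single_mul, map_one, one_mul, frobeniusDefect_apply, Pi.sub_apply]

theorem frobeniusDefect_ofPowerSeries (g : PowerSeries 𝒪) :
    h.frobeniusDefect hp q τ σ (ofLaurent 𝒪 Γ E (HahnSeries.ofPowerSeries ℤ 𝒪 g)) = 0 := by
  have hvanish (N : ℕ) : ∀ (g : PowerSeries 𝒪) (i : ℤ), i < N →
      h.frobeniusDefect hp q τ σ (ofLaurent 𝒪 Γ E (HahnSeries.ofPowerSeries ℤ 𝒪 g)) i = 0 := by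
    induction N with
    | zero =>
      exact fun g i hi => frobeniusDefect_of_neg hσ h hp ⟨g, 0, by rw [pow_zero, one_mul]⟩ hi
    | succ N ih =>
      intro g i hi
      have hq : (1 : ℤ) ≤ q := by exact_mod_cast Nat.one_le_iff_ne_zero.2 (NeZero.ne q)
      rw [PowerSeries.eq_X_mul_shift_add_const g, map_add, map_mul, HahnSeries.ofPowerSeries_X,
        HahnSeries.ofPowerSeries_C, map_add, map_mul, map_add, frobeniusDefect_C hσ h hp, add_zero,
        frobeniusDefect_single_mul hσ h hp]
      exact ih _ _ (by push_cast at hi; omega)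
  ext i
  exact hvanish (i + 1).toNat g i (by omega)

theorem frobeniusDefect_ofLaurent (g : LaurentSeries 𝒪) :
    h.frobeniusDefect hp q τ σ (ofLaurent 𝒪 Γ E g) = 0 := by
  ext i
  rw [← LaurentSeries.single_order_mul_powerSeriesPart g, map_mul,
    frobeniusDefect_single_mul hσ h hp]
  exact congrFun (frobeniusDefect_ofPowerSeries hσ h hp _) _

omit [CompleteSpace (FractionRing 𝒪)] hσ in
theorem norm_frobeniusDefect_algebraMap_le_one (y : Γ) (i : ℤ) :
    ‖h.frobeniusDefect hp q τ σ (algebraMap Γ E y) i‖ ≤ 1 := by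
  have := h.isAdicComplete
  have := h.isDomain hp
  have := h.isDiscreteValuationRing hp
  obtain ⟨z, hz⟩ := exists_algebraMap_eq_map (F := E) (h.irreducible_natCast hp) σ y
  rw [frobeniusDefect_apply, Pi.sub_apply, sub_eq_add_neg, ← hz, expansion_algebraMap,
    expansion_algebraMap]
  refine (IsUltrametricDist.norm_add_le_max _ _).trans
    (max_le (norm_fracCoeff_le_one _ _) ((norm_neg _).trans_le ?_))
  by_cases hi : (q : ℤ) ∣ i
  · obtain ⟨j, rfl⟩ := hi
    rw [expand_mul, (AddMonoidHomClass.isometry_iff_norm _).1 (isometry_fractionRingMap hp _)]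
    exact norm_fracCoeff_le_one _ _
  · rw [expand_of_not_dvd _ _ hi, norm_zero]
    exact zero_le_one

theorem frobeniusDefect_eq_zero (x : E) : h.frobeniusDefect hp q τ σ x = 0 := by
  obtain ⟨j, y, hy⟩ := h.exists_natCast_pow_mul_eq hp x
  refine (smul_eq_zero_iff_right (pow_ne_zero j (natCast_fractionRing_ne_zero hp))).1 ?_
  rw [← frobeniusDefect_natCast_pow_mul, hy]
  ext i
  refine eq_zero_of_forall_norm_le_pow hp fun j => ?_
  obtain ⟨g, y', rfl⟩ := h.exists_eq_algebraMap_add y j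
  rw [map_add, map_add, map_mul, map_pow, map_natCast, frobeniusDefect_natCast_pow_mul]
  have hg := frobeniusDefect_ofLaurent hσ h hp g
  rw [ofLaurent, RingHom.comp_apply] at hg
  rw [hg, zero_add, Pi.smul_apply, smul_eq_mul, norm_mul, norm_pow, map_natCast]
  exact mul_le_of_le_one_right (pow_nonneg (norm_nonneg _) j)
    (norm_frobeniusDefect_algebraMap_le_one h hp y' i)

theorem expansion_map (x : E) : h.expansion hp (σ x) =
    expand (fractionRingMap hp (map_natCast τ p)) q (h.expansion hp x) :=
  sub_eq_zero.1 (frobeniusDefect_eq_zero hσ h hp x)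

end Frobenius

end IsBilateralSeriesRing

section PrincipalIdeal

open IsLocalRing PowerSeries

variable {𝒪 : Type*} [CommRing 𝒪] [IsDomain 𝒪] [IsDiscreteValuationRing 𝒪] {ϖ : 𝒪}
  (hϖ : Irreducible ϖ)
include hϖ

theorem map_residue_eq_zero_iff (g : PowerSeries 𝒪) :
    g.map (residue 𝒪) = 0 ↔ C ϖ ∣ g := by
  constructor
  · intro hg
    have hdvd (n : ℕ) : ϖ ∣ PowerSeries.coeff n g := by
      rw [← Ideal.mem_span_singleton, ← hϖ.maximalIdeal_eq, ← residue_eq_zero_iff,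
        ← PowerSeries.coeff_map, hg, map_zero]
    choose a ha using hdvd
    exact ⟨PowerSeries.mk a, ext fun n => by rw [coeff_C_mul, PowerSeries.coeff_mk, ha]⟩
  · rintro ⟨a, rfl⟩
    rw [map_mul, PowerSeries.map_C, (residue_eq_zero_iff ϖ).2 hϖ.not_isUnit, map_zero, zero_mul]

theorem exists_eq_C_pow_mul {g : PowerSeries 𝒪} (hg : g ≠ 0) :
    ∃ (n : ℕ) (a : PowerSeries 𝒪), g = C ϖ ^ n * a ∧ a.map (residue 𝒪) ≠ 0 := by
  have hC : ¬ IsUnit (C ϖ) := fun hunit => hϖ.not_isUnit <| by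
    simpa only [constantCoeff_C] using hunit.map PowerSeries.constantCoeff
  obtain ⟨a, ha, hdvd⟩ := (FiniteMultiplicity.of_not_isUnit hC hg).exists_eq_pow_mul_and_not_dvd
  exact ⟨_, a, ha, (map_residue_eq_zero_iff hϖ a).not.2 hdvd⟩

theorem order_toNat_map_residue_lt {r : Polynomial 𝒪} {a : PowerSeries 𝒪} {n N : ℕ}
    (hr : (r : PowerSeries 𝒪) = C ϖ ^ n * a) (ha : a.map (residue 𝒪) ≠ 0) (hN : r.degree < N) :
    (a.map (residue 𝒪)).order.toNat < N := by
  by_contra! hle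
  refine coeff_order ha ?_
  have hcoeff := Polynomial.coeff_eq_zero_of_degree_lt (hN.trans_le (Nat.cast_le.2 hle))
  rw [← Polynomial.coeff_coe, hr, ← map_pow, coeff_C_mul] at hcoeff
  rw [PowerSeries.coeff_map, (mul_eq_zero_iff_left (pow_ne_zero n hϖ.ne_zero)).1 hcoeff, map_zero]

variable [IsAdicComplete (maximalIdeal 𝒪) 𝒪]

/-- A generator is an element not divisible by `ϖ` whose reduction has minimal order: the remainder
of a Weierstrass division by it would otherwise reduce to smaller order. -/
theorem isPrincipal_of_C_mul_mem_imp_mem {I : Ideal (PowerSeries 𝒪)}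
    (hI : ∀ g, C ϖ * g ∈ I → g ∈ I) : I.IsPrincipal := by
  have hIpow (n : ℕ) (g : PowerSeries 𝒪) (hg : C ϖ ^ n * g ∈ I) : g ∈ I := by
    induction n with
    | zero => simpa only [pow_zero, one_mul] using hg
    | succ n ih => exact ih (hI _ (by rwa [← mul_assoc, ← pow_succ']))
  have hprimitive {g : PowerSeries 𝒪} (hg : g ∈ I) (hg₀ : g ≠ 0) :
      ∃ n, ∃ a ∈ I, g = C ϖ ^ n * a ∧ a.map (residue 𝒪) ≠ 0 := by
    obtain ⟨n, a, rfl, ha⟩ := exists_eq_C_pow_mul hϖ hg₀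
    exact ⟨n, a, hIpow n a hg, rfl, ha⟩
  rcases eq_or_ne I ⊥ with rfl | hbot
  · exact bot_isPrincipal
  obtain ⟨b, hb, hb₀⟩ := Submodule.exists_mem_ne_zero_of_ne_bot hbot
  obtain ⟨-, b', hb', -, hbres⟩ := hprimitive hb hb₀
  obtain ⟨g, ⟨hgI, hgres⟩, hmin⟩ := exists_minimalFor_of_wellFoundedLT
    (fun a => a ∈ I ∧ a.map (residue 𝒪) ≠ 0) (fun a => (a.map (residue 𝒪)).order.toNat)
    ⟨b', hb', hbres⟩
  refine ⟨g, le_antisymm (fun f hf => ?_) ((Ideal.span_singleton_le_iff_mem I).2 hgI)⟩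
  obtain ⟨s, r, hdiv⟩ := exists_isWeierstrassDivision (f := f) hgres
  suffices hr : (r : PowerSeries 𝒪) = 0 from
    Ideal.mem_span_singleton.2 ⟨s, by rw [hdiv.eq_mul_add, hr, add_zero]⟩
  by_contra hr
  have hrI : (r : PowerSeries 𝒪) ∈ I := by
    rw [← sub_eq_of_eq_add' hdiv.eq_mul_add]
    exact I.sub_mem hf (I.mul_mem_right s hgI)
  obtain ⟨n, a, haI, hra, hares⟩ := hprimitive hrI hr
  have hlt := order_toNat_map_residue_lt hϖ hra hares hdiv.degree_lt
  exact hlt.not_ge (hmin ⟨haI, hares⟩ hlt.le)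

theorem isPrincipalIdealRing_of_isUnit_map_C {S : Type*} [CommRing S] (φ : PowerSeries 𝒪 →+* S)
    (hφϖ : IsUnit (φ (C ϖ))) (hφ : ∀ s, ∃ n f, φ (C ϖ) ^ n * s = φ f) :
    IsPrincipalIdealRing S := by
  refine ⟨fun I => ?_⟩
  obtain ⟨g, hg⟩ := isPrincipal_of_C_mul_mem_imp_mem hϖ (I := I.comap φ) fun f hf =>
    (I.unit_mul_mem_iff_mem hφϖ).1 (by rwa [Ideal.mem_comap, map_mul] at hf)
  refine ⟨φ g, le_antisymm (fun s hs => ?_) ((Ideal.span_singleton_le_iff_mem I).2 ?_)⟩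
  · obtain ⟨n, f, hf⟩ := hφ s
    have hfI : f ∈ I.comap φ := Ideal.mem_comap.2 (hf ▸ I.mul_mem_left _ hs)
    rw [← Ideal.unit_mul_mem_iff_mem _ (hφϖ.pow n), hf]
    rw [hg] at hfI
    exact Ideal.mem_span_singleton.2 (map_dvd φ (Ideal.mem_span_singleton.1 hfI))
  · exact Ideal.mem_comap.1 (hg ▸ Ideal.mem_span_singleton_self g)

end PrincipalIdeal

section Saturation

theorem exists_leftInverse_subtype_of_smul_mem_imp_mem {R M : Type*} [CommRing R] [IsDomain R]
    [IsPrincipalIdealRing R] [AddCommGroup M] [Module R M] [Module.Finite R M] {N : Submodule R M}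
    (hN : ∀ (r : R) x, r ≠ 0 → r • x ∈ N → x ∈ N) :
    ∃ π : M →ₗ[R] N, π ∘ₗ N.subtype = LinearMap.id := by
  have htorsionFree : Module.IsTorsionFree R (M ⧸ N) :=
    .of_smul_eq_zero fun r z hz => by
      obtain ⟨x, rfl⟩ := N.mkQ_surjective z
      rw [← map_smul, Submodule.mkQ_apply, Submodule.Quotient.mk_eq_zero] at hz
      rw [or_iff_not_imp_left]
      exact fun hr => (Submodule.Quotient.mk_eq_zero N).2 (hN r x hr hz)
  obtain ⟨s, hs⟩ := Module.projective_lifting_property N.mkQ LinearMap.id N.mkQ_surjective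
  have hmem (x : M) : (LinearMap.id - s ∘ₗ N.mkQ : M →ₗ[R] M) x ∈ N := by
    rw [← Submodule.Quotient.mk_eq_zero, ← Submodule.mkQ_apply, LinearMap.sub_apply, map_sub,
      sub_eq_zero]
    exact (LinearMap.congr_fun hs (N.mkQ x)).symm
  refine ⟨LinearMap.codRestrict N (LinearMap.id - s ∘ₗ N.mkQ) hmem,
    LinearMap.ext fun x => Subtype.ext ?_⟩
  have hx : N.mkQ (x : M) = 0 := (Submodule.Quotient.mk_eq_zero N).2 x.2
  rw [LinearMap.comp_apply, LinearMap.codRestrict_apply, LinearMap.sub_apply,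
    LinearMap.comp_apply, N.subtype_apply, hx, map_zero, sub_zero, LinearMap.id_apply,
    LinearMap.id_apply]

variable {R ι κ B : Type*} [CommRing R] [Fintype ι] [CommRing B]

theorem exists_matrix_of_smul_mem_imp_mem [IsDomain R] [IsPrincipalIdealRing R]
    {N : Submodule R (ι → R)} (hN : ∀ (r : R) x, r ≠ 0 → r • x ∈ N → x ∈ N) :
    ∃ (m : ℕ) (W : Matrix ι (Fin m) R) (W' : Matrix (Fin m) ι R),
      W' * W = 1 ∧ (∀ j, W.col j ∈ N) ∧ ∀ x ∈ N, (W * W').mulVec x = x := by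
  classical
  obtain ⟨π, hπ⟩ := exists_leftInverse_subtype_of_smul_mem_imp_mem hN
  let b := Module.finBasis R N
  refine ⟨_, LinearMap.toMatrix' (N.subtype ∘ₗ b.equivFun.symm.toLinearMap),
    LinearMap.toMatrix' (b.equivFun.toLinearMap ∘ₗ π), ?_, fun j => ?_, fun x hx => ?_⟩
  · rw [← LinearMap.toMatrix'_comp, LinearMap.comp_assoc, ← LinearMap.comp_assoc _ _ π, hπ,
      LinearMap.id_comp, LinearEquiv.comp_coe, LinearEquiv.symm_trans_self,
      LinearEquiv.refl_toLinearMap, LinearMap.toMatrix'_id]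
  · rw [← Matrix.mulVec_single_one, LinearMap.toMatrix'_mulVec]
    exact Submodule.coe_mem _
  · rw [← LinearMap.toMatrix'_comp, LinearMap.toMatrix'_mulVec]
    simpa using congrArg Subtype.val (LinearMap.congr_fun hπ ⟨x, hx⟩)

/-- The vectors over `R` whose image under `φ : R →+* B` is fixed by the matrix `M` over `B`. -/
def fixedSubmodule (φ : R →+* B) (M : Matrix ι ι B) : Submodule R (ι → R) where
  carrier := {x | M.mulVec (φ ∘ x) = φ ∘ x}
  zero_mem' := by
    have hzero : φ ∘ (0 : ι → R) = 0 := funext fun _ => map_zero φ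
    rw [Set.mem_ofPred_eq, hzero, Matrix.mulVec_zero]
  add_mem' {x y} hx hy := by
    have hadd : φ ∘ (x + y) = φ ∘ x + φ ∘ y := funext fun i => map_add φ (x i) (y i)
    rw [Set.mem_ofPred_eq, hadd, Matrix.mulVec_add, hx, hy]
  smul_mem' r x hx := by
    have hsmul : φ ∘ (r • x) = φ r • (φ ∘ x) := funext fun i => map_mul φ r (x i)
    rw [Set.mem_ofPred_eq, hsmul, Matrix.mulVec_smul, hx]

theorem mem_fixedSubmodule_iff {φ : R →+* B} {M : Matrix ι ι B} {x : ι → R} :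
    x ∈ fixedSubmodule φ M ↔ M.mulVec (φ ∘ x) = φ ∘ x := Iff.rfl

theorem forall_col_mem_fixedSubmodule_iff {φ : R →+* B} {M : Matrix ι ι B} {X : Matrix ι κ R} :
    (∀ j, X.col j ∈ fixedSubmodule φ M) ↔ M * X.map φ = X.map φ := by
  rw [← Matrix.ext_iff, forall_comm]
  exact forall_congr' fun j => funext_iff

theorem mem_fixedSubmodule_of_smul_mem [IsDomain B] {φ : R →+* B} (hφ : Function.Injective φ)
    {M : Matrix ι ι B} (r : R) (x : ι → R) (hr : r ≠ 0) (hx : r • x ∈ fixedSubmodule φ M) :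
    x ∈ fixedSubmodule φ M := by
  have hsmul : φ ∘ (r • x) = φ r • (φ ∘ x) := funext fun i => map_mul φ r (x i)
  rw [mem_fixedSubmodule_iff, hsmul, Matrix.mulVec_smul] at hx
  exact smul_right_injective _ ((map_ne_zero_iff φ hφ).2 hr) hx

/-- The columns of `W` form a basis of the intersection of `R ^ ι` with the column space of `V`. -/
theorem exists_matrix_map_mul_eq [IsDomain R] [IsPrincipalIdealRing R] [IsDomain B] [Fintype κ]
    [DecidableEq κ] {φ : R →+* B} (hφ : Function.Injective φ) {V : Matrix ι κ B}
    {L : Matrix κ ι B} (hL : L * V = 1) {P : Matrix ι κ R} (hP : V * (L * P.map φ) = P.map φ)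
    {y : B} (hy : y ≠ 0) {T : Matrix κ κ B} (hT : y • V = P.map φ * T) :
    ∃ (W : Matrix ι κ R) (W' : Matrix κ ι R),
      W' * W = 1 ∧ W.map φ * (W'.map φ * V) = V := by
  obtain ⟨m, W, W', hW, hWcol, hWW'⟩ :=
    exists_matrix_of_smul_mem_imp_mem (mem_fixedSubmodule_of_smul_mem hφ (M := V * L))
  have hVL : V * (L * W.map φ) = W.map φ := by
    rw [← Matrix.mul_assoc]
    exact forall_col_mem_fixedSubmodule_iff.1 hWcol
  have hWP : W * W' * P = P := by
    rw [← Matrix.mul_assoc, ← forall_col_mem_fixedSubmodule_iff] at hP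
    ext i j
    exact congrFun (hWW' _ (hP j)) i
  have hWV : W.map φ * (W'.map φ * V) = V := by
    refine smul_right_injective _ hy ?_
    simp only
    rw [← Matrix.mul_smul, ← Matrix.mul_smul, hT, ← Matrix.mul_assoc, ← Matrix.mul_assoc,
      ← Matrix.map_mul, ← Matrix.map_mul, hWP]
  have hWφ : W'.map φ * W.map φ = 1 := by
    rw [← Matrix.map_mul, hW, Matrix.map_one _ (map_zero φ) (map_one φ)]
  have hcard : Fintype.card κ = Fintype.card (Fin m) :=
    Matrix.square_of_invertible (L * W.map φ) (W'.map φ * V)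
      (by rw [Matrix.mul_assoc, hWV, hL]) (by rw [Matrix.mul_assoc, hVL, hWφ])
  let e := Fintype.equivOfCardEq hcard
  refine ⟨W.submatrix id e, W'.submatrix e id, ?_, ?_⟩
  · rw [← Matrix.submatrix_mul _ _ _ _ _ Function.bijective_id, hW, Matrix.submatrix_one_equiv]
  · rw [← Matrix.mul_assoc, ← Matrix.map_mul, Matrix.submatrix_mul_equiv, Matrix.submatrix_id_id,
      Matrix.map_mul, Matrix.mul_assoc, hWV]

end Saturation

theorem map_mul_map_eq_one_iff {R S m n : Type*} [CommRing R] [CommRing S] [Fintype m]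
    [DecidableEq n] {f : R →+* S} (hf : Function.Injective f) {X : Matrix n m R}
    {Y : Matrix m n R} : X.map f * Y.map f = 1 ↔ X * Y = 1 := by
  rw [← Matrix.map_mul, ← Matrix.map_one f (map_zero f) (map_one f)]
  exact (Matrix.map_injective hf).eq_iff

namespace IsBilateralSeriesRing

variable {𝒪 Γ E : Type*} [CommRing 𝒪] [IsDomain 𝒪] [IsDiscreteValuationRing 𝒪] [CommRing Γ]
  [Algebra (LaurentSeries 𝒪) Γ] [Field E] [Algebra Γ E] [IsFractionRing Γ E]
  [CompleteSpace (FractionRing 𝒪)] {p : ℕ} {coeff : ℤ → Γ →+ 𝒪}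
  (h : IsBilateralSeriesRing p coeff) (hp : Irreducible (p : 𝒪))

/-- The inclusion of `𝓔₊` into the Robba ring over `𝒪[1/p]`. -/
def plusToRobba : plusPart p 𝒪 Γ E →+* RobbaRing (FractionRing 𝒪) :=
  (h.toRobba hp).comp (Subring.inclusion (h.plusPart_le_overconvergentPart hp))

theorem plusToRobba_injective : Function.Injective (h.plusToRobba (E := E) hp) :=
  (h.toRobba_injective hp).comp
    (Subring.inclusion_injective (h.plusPart_le_overconvergentPart hp))

theorem range_plusToRobba : (h.plusToRobba (E := E) hp).range =
    plusSubring (FractionRing 𝒪) ⊓ boundedSubring (FractionRing 𝒪) := by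
  ext z
  rw [Subring.mem_inf, ← h.range_toRobba (E := E) hp]
  constructor
  · rintro ⟨x, rfl⟩
    exact ⟨(h.toRobba_mem_plusSubring_iff hp).2 x.2, _, rfl⟩
  · rintro ⟨hz, x, rfl⟩
    exact ⟨⟨x, (h.toRobba_mem_plusSubring_iff hp).1 hz⟩, rfl⟩

section Frobenius

variable {q : ℕ} {τ : 𝒪 →+* 𝒪} {σ : E →+* E} (hσ : IsFrobenius p q 𝒪 Γ τ σ)

include hσ in
theorem map_mem_overconvergentPart [NeZero q] {x : E} (hx : x ∈ h.overconvergentPart hp) :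
    σ x ∈ h.overconvergentPart hp := by
  rw [mem_overconvergentPart_iff] at hx ⊢
  rw [expansion_map hσ h hp]
  exact hx.expand ((AddMonoidHomClass.isometry_iff_norm _).1
    (isometry_fractionRingMap hp (map_natCast τ p)))

/-- The restriction of `σ` to `𝓔^†`. -/
def overconvergentFrobenius [NeZero q] :
    h.overconvergentPart (E := E) hp →+* h.overconvergentPart (E := E) hp :=
  σ.restrict _ _ fun _ => h.map_mem_overconvergentPart hp hσ

theorem toRobba_overconvergentFrobenius [NeZero q] (x : h.overconvergentPart (E := E) hp) :
    h.toRobba hp (h.overconvergentFrobenius hp hσ x) =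
      frobeniusLift q (isometry_fractionRingMap hp (map_natCast τ p)) (h.toRobba hp x) :=
  coeff_injective (expansion_map hσ h hp (x : E))

variable {ι κ : Type*} [Fintype ι] [DecidableEq ι] [Fintype κ] [DecidableEq κ] [q.AtLeastTwo]
  [IsPrincipalIdealRing (plusPart p 𝒪 Γ E)]

theorem exists_plusPart_matrix_of_overconvergent
    {Φ Ψ : Matrix ι ι (plusPart p 𝒪 Γ E)} {V : Matrix ι κ (h.overconvergentPart (E := E) hp)}
    {L : Matrix κ ι (h.overconvergentPart (E := E) hp)}
    {A A' : Matrix κ κ (h.overconvergentPart (E := E) hp)}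
    (hΦΨ : Φ * Ψ = 1) (hLV : L * V = 1) (hAA' : A * A' = 1)
    (hF : Φ.map (Subring.inclusion (h.plusPart_le_overconvergentPart hp)) *
      V.map (h.overconvergentFrobenius hp hσ) = V * A) :
    ∃ (W : Matrix ι κ (plusPart p 𝒪 Γ E)) (W' : Matrix κ ι (plusPart p 𝒪 Γ E)), W' * W = 1 ∧
      W.map (Subring.inclusion (h.plusPart_le_overconvergentPart hp)) *
        (W'.map (Subring.inclusion (h.plusPart_le_overconvergentPart hp)) * V) = V := by
  have hφ := h.plusToRobba_injective (E := E) hp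
  have hplus {X : Matrix ι ι (plusPart p 𝒪 Γ E)} (i j : ι) : X.map (h.plusToRobba hp) i j ∈
      plusSubring (FractionRing 𝒪) ⊓ boundedSubring (FractionRing 𝒪) :=
    h.range_plusToRobba (E := E) hp ▸ ⟨X i j, rfl⟩
  have hσV : (V.map (h.toRobba hp)).map
      (frobeniusLift q (isometry_fractionRingMap hp (map_natCast τ p))) =
        (V.map (h.overconvergentFrobenius hp hσ)).map (h.toRobba hp) :=
    Matrix.ext fun i j => (h.toRobba_overconvergentFrobenius hp hσ (V i j)).symm
  have hLV' := (map_mul_map_eq_one_iff (h.toRobba_injective hp)).2 hLV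
  obtain ⟨P, y, T, hP, hVP, hy, hT⟩ := exists_plus_mul_eq_smul
    (isometry_fractionRingMap hp (map_natCast τ p)) (Φ := Φ.map (h.plusToRobba hp))
    (Ψ := Ψ.map (h.plusToRobba hp)) (V := V.map (h.toRobba hp)) (L := L.map (h.toRobba hp))
    (A := A.map (h.toRobba hp)) (A' := A'.map (h.toRobba hp)) hplus hplus
    ((map_mul_map_eq_one_iff hφ).2 hΦΨ)
    (fun i j => h.range_toRobba (E := E) hp ▸ ⟨V i j, rfl⟩) hLV'
    ((map_mul_map_eq_one_iff (h.toRobba_injective hp)).2 hAA')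
    (by rw [hσV, ← Matrix.map_mul, ← hF, Matrix.map_mul]; rfl)
  rw [← h.range_plusToRobba (E := E) hp] at hP
  choose P' hP' using hP
  obtain rfl : P = Matrix.map P' (h.plusToRobba hp) := Matrix.ext fun i j => (hP' i j).symm
  obtain ⟨W, W', hW, hWV⟩ := exists_matrix_map_mul_eq hφ hLV' hVP hy hT
  refine ⟨W, W', hW, Matrix.map_injective (h.toRobba_injective hp) ?_⟩
  simp only [Matrix.map_mul]
  exact hWV

include hσ in
theorem exists_plusPart_matrix {Φ Ψ : Matrix ι ι E}
    {V : Matrix ι κ E} {L : Matrix κ ι E} {A A' : Matrix κ κ E}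
    (hΦ : ∀ i j, Φ i j ∈ plusPart p 𝒪 Γ E) (hΨ : ∀ i j, Ψ i j ∈ plusPart p 𝒪 Γ E)
    (hV : ∀ i j, V i j ∈ h.overconvergentPart hp) (hL : ∀ i j, L i j ∈ h.overconvergentPart hp)
    (hA : ∀ i j, A i j ∈ h.overconvergentPart hp) (hA' : ∀ i j, A' i j ∈ h.overconvergentPart hp)
    (hΦΨ : Φ * Ψ = 1) (hLV : L * V = 1) (hAA' : A * A' = 1) (hF : Φ * V.map σ = V * A) :
    ∃ (W : Matrix ι κ E) (W' : Matrix κ ι E),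
      (∀ i j, W i j ∈ plusPart p 𝒪 Γ E) ∧ (∀ i j, W' i j ∈ plusPart p 𝒪 Γ E) ∧
      W' * W = 1 ∧ W * (W' * V) = V := by
  obtain ⟨Φ, rfl⟩ := exists_map_subtype_eq hΦ
  obtain ⟨Ψ, rfl⟩ := exists_map_subtype_eq hΨ
  obtain ⟨V, rfl⟩ := exists_map_subtype_eq hV
  obtain ⟨L, rfl⟩ := exists_map_subtype_eq hL
  obtain ⟨A, rfl⟩ := exists_map_subtype_eq hA
  obtain ⟨A', rfl⟩ := exists_map_subtype_eq hA'
  have hF' : Φ.map (Subring.inclusion (h.plusPart_le_overconvergentPart hp)) *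
      V.map (h.overconvergentFrobenius hp hσ) = V * A := by
    apply Matrix.map_injective (h.overconvergentPart hp).subtype_injective
    simp only [Matrix.map_mul]
    exact hF
  obtain ⟨W, W', hW, hWV⟩ := h.exists_plusPart_matrix_of_overconvergent hp hσ
    ((map_mul_map_eq_one_iff (Subring.subtype_injective _)).1 hΦΨ)
    ((map_mul_map_eq_one_iff (Subring.subtype_injective _)).1 hLV)
    ((map_mul_map_eq_one_iff (Subring.subtype_injective _)).1 hAA') hF'
  refine ⟨W.map (Subring.subtype _), W'.map (Subring.subtype _), fun i j => (W i j).2,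
    fun i j => (W' i j).2, (map_mul_map_eq_one_iff (Subring.subtype_injective _)).2 hW, ?_⟩
  conv_rhs => rw [← hWV, Matrix.map_mul, Matrix.map_mul]
  rfl

end Frobenius

end IsBilateralSeriesRing

section PlusPart

variable {𝒪 Γ E : Type*} [CommRing 𝒪] [CommRing Γ] [Algebra (LaurentSeries 𝒪) Γ] [Field E]
  [Algebra Γ E] {p : ℕ}

theorem inv_natCast_pow_mem_plusPart (hp : (p : E) ≠ 0) (j : ℕ) :
    ((p : E) ^ j)⁻¹ ∈ IsBilateralSeriesRing.plusPart p 𝒪 Γ E :=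
  ⟨1, j, by rw [mul_inv_cancel₀ (pow_ne_zero j hp), map_one, map_one]⟩

theorem isPrincipalIdealRing_plusPart [IsDomain 𝒪] [IsDiscreteValuationRing 𝒪]
    [IsAdicComplete (IsLocalRing.maximalIdeal 𝒪) 𝒪] (hp : Irreducible (p : 𝒪))
    (hpE : (p : E) ≠ 0) :
    IsPrincipalIdealRing (IsBilateralSeriesRing.plusPart p 𝒪 Γ E) := by
  let φ : PowerSeries 𝒪 →+* IsBilateralSeriesRing.plusPart p 𝒪 Γ E :=
    ((IsBilateralSeriesRing.ofLaurent 𝒪 Γ E).comp (HahnSeries.ofPowerSeries ℤ 𝒪)).codRestrict _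
      fun g => ⟨g, 0, by rw [pow_zero, one_mul]; rfl⟩
  have hφp : φ (PowerSeries.C (p : 𝒪)) = p := by rw [map_natCast, map_natCast]
  refine isPrincipalIdealRing_of_isUnit_map_C hp φ ?_ fun s => ?_
  · rw [hφp]
    refine .of_mul_eq_one ⟨_, inv_natCast_pow_mem_plusPart hpE 1⟩ (Subtype.ext ?_)
    change (p : E) * ((p : E) ^ 1)⁻¹ = 1
    rw [pow_one, mul_inv_cancel₀ hpE]
  · obtain ⟨g, j, hg⟩ := s.2
    exact ⟨j, g, Subtype.ext (by rw [hφp]; exact hg)⟩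

end PlusPart

section Descent

variable {E ι κ : Type*} [CommRing E] [Fintype ι] [Fintype κ] [DecidableEq κ]
  {W V : Matrix ι κ E} {W' L : Matrix κ ι E}

theorem mul_mul_eq_one_of_mul_mul_eq (hV : W * (W' * V) = V) (hL : L * V = 1) :
    W' * V * (L * W) = 1 := by
  rw [mul_eq_one_comm, Matrix.mul_assoc, hV, hL]

theorem mul_mul_eq_of_mul_mul_eq (hV : W * (W' * V) = V) (hL : L * V = 1) : V * (L * W) = W := by
  nth_rw 1 [← hV]
  rw [Matrix.mul_assoc, mul_mul_eq_one_of_mul_mul_eq hV hL, Matrix.mul_one]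

theorem eq_mul_mul_of_eq_mul (hW : W' * W = 1) {μ : Type*} {X : Matrix ι μ E}
    {Z : Matrix κ μ E} (hX : X = W * Z) : X = W * (W' * X) := by
  rw [hX, ← Matrix.mul_assoc W', hW, Matrix.one_mul]

omit [Fintype ι] [DecidableEq κ] in
theorem map_mul_of_leibniz {μ : Type*} {d : E →+ E}
    (hd : ∀ x y, d (x * y) = x * d y + y * d x) (X : Matrix ι κ E) (Y : Matrix κ μ E) :
    (X * Y).map d = X.map d * Y + X * Y.map d := by
  ext i j
  simp only [Matrix.map_apply, Matrix.mul_apply, Matrix.add_apply, map_sum, hd,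
    ← Finset.sum_add_distrib]
  exact Finset.sum_congr rfl fun k _ => by ring

variable (hW : W' * W = 1) (hV : W * (W' * V) = V) (hL : L * V = 1)
include hW hV hL

theorem mul_map_eq_mul_of_mul_map_eq_mul (σ : E →+* E) {Φ : Matrix ι ι E} {A : Matrix κ κ E}
    (hF : Φ * V.map σ = V * A) : Φ * W.map σ = W * (W' * (Φ * W.map σ)) := by
  refine eq_mul_mul_of_eq_mul hW (Z := W' * V * (A * (L * W).map σ)) ?_
  rw [← Matrix.mul_assoc W, hV, ← Matrix.mul_assoc V, ← hF, Matrix.mul_assoc, ← Matrix.map_mul,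
    mul_mul_eq_of_mul_mul_eq hV hL]

theorem map_add_mul_eq_mul_of_leibniz {d : E →+ E}
    (hd : ∀ x y, d (x * y) = x * d y + y * d x) {N : Matrix ι ι E} {C : Matrix κ κ E}
    (hN : V.map d + N * V = V * C) : W.map d + N * W = W * (W' * (W.map d + N * W)) := by
  have hVLW : V * (L * W).map d + V * C * (L * W) = W.map d + N * W := by
    rw [← hN, Matrix.add_mul, Matrix.mul_assoc N, ← add_assoc, add_comm (V * _),
      ← map_mul_of_leibniz hd, mul_mul_eq_of_mul_mul_eq hV hL]
  refine eq_mul_mul_of_eq_mul hW (Z := W' * V * ((L * W).map d + C * (L * W))) ?_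
  rw [← Matrix.mul_assoc W, hV, Matrix.mul_add, ← Matrix.mul_assoc V, hVLW]

omit hV hL in
theorem map_mul_mul_mul_eq_smul_one [DecidableEq ι] {σ : E →+* E} {Φ Ψ : Matrix ι ι E} {a : E}
    (hF : Φ * W.map σ = W * (W' * (Φ * W.map σ))) (hΨΦ : Ψ * Φ = a • 1) :
    W'.map σ * (Ψ * W) * (W' * (Φ * W.map σ)) = a • 1 := by
  rw [Matrix.mul_assoc, Matrix.mul_assoc Ψ, ← hF, ← Matrix.mul_assoc Ψ, hΨΦ, Matrix.smul_mul,
    Matrix.one_mul, Matrix.mul_smul, ← Matrix.map_mul, hW,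
    Matrix.map_one σ (map_zero σ) (map_one σ)]

end Descent

section Scalar

variable {E κ : Type*} [Field E] [Fintype κ] [DecidableEq κ] {X Y : Matrix κ κ E} {a : E}

theorem mul_inv_smul_eq_one (ha : a ≠ 0) (h : X * Y = a • 1) : X * (a⁻¹ • Y) = 1 := by
  rw [Matrix.mul_smul, h, inv_smul_smul₀ ha]

theorem mul_eq_smul_one_comm (ha : a ≠ 0) (h : X * Y = a • 1) : Y * X = a • 1 := by
  have hYX := mul_eq_one_comm.1 (mul_inv_smul_eq_one ha h)
  rw [Matrix.smul_mul] at hYX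
  rw [← hYX, smul_inv_smul₀ ha]

end Scalar

section Witt

variable (p : ℕ) [Fact p.Prime] (k : Type*) [Field k] [CharP k p]

variable {p k} in
theorem isBilateralSeriesRing_gammaRing {coeff : ℤ → GammaRing p k →+ WittVector p k}
    (hcoeff : ∀ (g : LaurentSeries (WittVector p k)) (i : ℤ),
      coeff i (laurentToGamma p k g) = g.coeff i)
    (hinj : ∀ x : GammaRing p k, (∀ i, coeff i x = 0) → x = 0)
    (hsurj : ∀ a : ℤ → WittVector p k,
      (∀ j : ℕ, ∃ N : ℤ, ∀ i ≤ N, (p : WittVector p k) ^ j ∣ a i) →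
        ∃ x : GammaRing p k, ∀ i, coeff i x = a i) : IsBilateralSeriesRing p coeff where
  coeff_algebraMap := hcoeff
  eq_zero_of_coeff_eq_zero := hinj
  exists_coeff_eq := hsurj
  exists_pow_dvd_sub_algebraMap x j := by
    simpa only [map_natCast] using
      exists_pow_dvd_sub_algebraMap (r := (p : LaurentSeries (WittVector p k))) x j
  isAdicComplete := by
    simpa only [map_natCast] using
      isAdicComplete_span_algebraMap (r := (p : LaurentSeries (WittVector p k)))

theorem isAdicComplete_maximalIdeal_wittVector [PerfectRing k p] :
    IsAdicComplete (IsLocalRing.maximalIdeal (WittVector p k)) (WittVector p k) :=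
  (WittVector.irreducible p (k := k)).maximalIdeal_eq ▸ inferInstance

end Witt

end Robba

open Robba IsBilateralSeriesRing

theorem statement6_general {𝒪 Γ E : Type*} [CommRing 𝒪] [IsDomain 𝒪] [IsDiscreteValuationRing 𝒪]
    [CommRing Γ] [Algebra (LaurentSeries 𝒪) Γ] [Field E] [Algebra Γ E] [IsFractionRing Γ E]
    {p : ℕ} (hp : Irreducible (p : 𝒪)) [IsAdicComplete (IsLocalRing.maximalIdeal 𝒪) 𝒪]
    {coeff : ℤ → Γ →+ 𝒪} (h : IsBilateralSeriesRing p coeff) {q : ℕ} (hq : 2 ≤ q)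
    {τ : 𝒪 →+* 𝒪} {σ : E →+* E} (hσ : IsFrobenius p q 𝒪 Γ τ σ) {d : E →+ E}
    (hd : ∀ x y, d (x * y) = x * d y + y * d x)
    (hdplus : Set.MapsTo d (plusPart p 𝒪 Γ E) (plusPart p 𝒪 Γ E))
    {ι κ : Type*} [Fintype ι] [DecidableEq ι] [Fintype κ] [DecidableEq κ] {Φ Ψ N : Matrix ι ι E}
    (hΦ : ∀ i j, Φ i j ∈ plusPart p 𝒪 Γ E) (hN : ∀ i j, N i j ∈ plusPart p 𝒪 Γ E)
    (hΨ : ∀ i j, Ψ i j ∈ plusPart p 𝒪 Γ E) {j : ℕ} (hΦΨ : Φ * Ψ = ((p : E) ^ j) • 1)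
    {V : Matrix ι κ E} (hV : ∀ i j, V i j ∈ h.overconvergentPart hp) {L : Matrix κ ι E}
    (hL : ∀ i j, L i j ∈ h.overconvergentPart hp) (hLV : L * V = 1) {A A' : Matrix κ κ E}
    (hA : ∀ i j, A i j ∈ h.overconvergentPart hp) (hA' : ∀ i j, A' i j ∈ h.overconvergentPart hp)
    {j' : ℕ} (hAA' : A * A' = ((p : E) ^ j') • 1) (hF : Φ * V.map σ = V * A)
    {C : Matrix κ κ E} (hC : V.map d + N * V = V * C) :
    ∃ W : Matrix ι κ E, (∀ i j, W i j ∈ plusPart p 𝒪 Γ E) ∧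
      (∃ G G' : Matrix κ κ E, (∀ i j, G i j ∈ h.overconvergentPart hp) ∧
        (∀ i j, G' i j ∈ h.overconvergentPart hp) ∧ G * G' = 1 ∧ G' * G = 1 ∧ V = W * G) ∧
      (∃ A₀ : Matrix κ κ E, (∀ i j, A₀ i j ∈ plusPart p 𝒪 Γ E) ∧ Φ * W.map σ = W * A₀ ∧
        ∃ (A₀' : Matrix κ κ E) (j : ℕ), (∀ a b, A₀' a b ∈ plusPart p 𝒪 Γ E) ∧
          A₀ * A₀' = ((p : E) ^ j) • 1 ∧ A₀' * A₀ = ((p : E) ^ j) • 1) ∧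
      ∃ C₀ : Matrix κ κ E, (∀ i j, C₀ i j ∈ plusPart p 𝒪 Γ E) ∧ W.map d + N * W = W * C₀ := by
  have hpE : (p : E) ≠ 0 := h.natCast_field_ne_zero hp
  have hPID := isPrincipalIdealRing_plusPart (𝒪 := 𝒪) (Γ := Γ) hp hpE
  have : q.AtLeastTwo := ⟨hq⟩
  have hinv := inv_natCast_pow_mem_plusPart (𝒪 := 𝒪) (Γ := Γ) hpE
  have hdag {x : E} (hx : x ∈ plusPart p 𝒪 Γ E) := h.plusPart_le_overconvergentPart hp hx
  obtain ⟨W, W', hW, hW', hWW, hWV⟩ := h.exists_plusPart_matrix hp hσ hΦ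
    (fun a b => mul_mem (hinv j) (hΨ a b)) hV hL hA
    (fun a b => mul_mem (hdag (hinv j')) (hA' a b)) (mul_inv_smul_eq_one (pow_ne_zero j hpE) hΦΨ)
    hLV (mul_inv_smul_eq_one (pow_ne_zero j' hpE) hAA') hF
  have hGG := mul_mul_eq_one_of_mul_mul_eq hWV hLV
  have hFW := mul_map_eq_mul_of_mul_map_eq_mul hWW hWV hLV σ hF
  have hA₀ := map_mul_mul_mul_eq_smul_one hWW hFW (mul_eq_smul_one_comm (pow_ne_zero j hpE) hΦΨ)
  refine ⟨W, hW, ⟨W' * V, L * W, matrix_mul_mem (fun a b => hdag (hW' a b)) hV,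
    matrix_mul_mem hL fun a b => hdag (hW a b), hGG, mul_eq_one_comm.1 hGG, hWV.symm⟩,
    ⟨_, matrix_mul_mem hW' (matrix_mul_mem hΦ fun a b => hσ.mapsTo_plusPart (hW a b)), hFW, _, j,
      matrix_mul_mem (fun a b => hσ.mapsTo_plusPart (hW' a b)) (matrix_mul_mem hΨ hW),
      mul_eq_smul_one_comm (pow_ne_zero j hpE) hA₀, hA₀⟩,
    ⟨_, matrix_mul_mem hW' fun a b => add_mem (hdplus (hW a b)) (matrix_mul_mem hN hW a b),
      map_add_mul_eq_mul_of_leibniz hWW hWV hLV hd hC⟩⟩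

theorem statement6 (p : ℕ) [Fact p.Prime] (k : Type*) [Field k] [CharP k p]
    [PerfectRing k p]
    -- the coefficient structure on `Γ`:
    (coeff : ℤ → GammaRing p k →+ WittVector p k)
    (hcoeff_laurent : ∀ (g : LaurentSeries (WittVector p k)) (i : ℤ),
      coeff i (laurentToGamma p k g) = g.coeff i)
    (hcoeff_inj : ∀ x : GammaRing p k, (∀ i, coeff i x = 0) → x = 0)
    (hcoeff_cont : ∀ (x y : GammaRing p k) (j : ℕ),
      (p : GammaRing p k) ^ j ∣ x - y →
        ∀ i, (p : WittVector p k) ^ j ∣ coeff i x - coeff i y)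
    (hdense : ∀ (x : GammaRing p k) (j : ℕ), ∃ g : LaurentSeries (WittVector p k),
      (p : GammaRing p k) ^ j ∣ x - laurentToGamma p k g)
    (hsurj : ∀ a : ℤ → WittVector p k,
      (∀ j : ℕ, ∃ N : ℤ, ∀ i ≤ N, (p : WittVector p k) ^ j ∣ a i) →
        ∃ x : GammaRing p k, ∀ i, coeff i x = a i)
    -- the Frobenius lift `σ` on `𝓔` (with `q = p^f`):
    (f : ℕ) (hf : 0 < f) (q : ℕ) (hq : q = p ^ f)
    (σ : ERing p k →+* ERing p k)
    (hσu : σ (uE p k) = uE p k ^ q)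
    (hσO : ∀ a : WittVector p k,
      σ (wittToE p k a) = wittToE p k (((WittVector.frobenius : WittVector p k →+* WittVector p k) ^ f) a))
    (hσEp : Set.MapsTo σ (EPlusSet p k) (EPlusSet p k))
    (hσEd : Set.MapsTo σ (EDagSet p k coeff) (EDagSet p k coeff))
    -- the derivation `d = d/du` on `𝓔`:
    (d : Derivation ℤ (ERing p k) (ERing p k))
    (hdu : d (uE p k) = 1)
    (hdO : ∀ a : WittVector p k, d (wittToE p k a) = 0)
    (hdEp : Set.MapsTo d (EPlusSet p k) (EPlusSet p k))
    (hdEd : Set.MapsTo d (EDagSet p k coeff) (EDagSet p k coeff))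
    -- `c = dσ(u)/du = q·u^{q−1}`:
    (c : ERing p k) (hc : c = (q : ERing p k) * uE p k ^ (q - 1))
    -- `M'`, a `(σ,∇)`-module over `𝓔_+` of rank `n`:
    (n : ℕ) (Φ' N' : Matrix (Fin n) (Fin n) (ERing p k))
    (hM'mem : (∀ i j, Φ' i j ∈ EPlusSet p k) ∧ (∀ i j, N' i j ∈ EPlusSet p k))
    (hM'F : ∃ (Ψ : Matrix (Fin n) (Fin n) (ERing p k)) (j : ℕ),
      (∀ a b, Ψ a b ∈ EPlusSet p k) ∧
      Φ' * Ψ = ((p : ERing p k) ^ j) • 1 ∧ Ψ * Φ' = ((p : ERing p k) ^ j) • 1)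
    (hM'compat : Φ'.map ⇑d + N' * Φ' = c • (Φ' * N'.map ⇑σ))
    -- `M`, a sub-`(σ,∇)`-module of `M'⊗_{𝓔_+}𝓔^†` of rank `l`, spanned by the
    -- columns of `V` (a matrix over `𝓔^†` of rank `l`):
    (l : ℕ) (V : Matrix (Fin n) (Fin l) (ERing p k))
    (hVmem : ∀ i j, V i j ∈ EDagSet p k coeff)
    (hVrank : ∃ Vli : Matrix (Fin l) (Fin n) (ERing p k),
      (∀ i j, Vli i j ∈ EDagSet p k coeff) ∧ Vli * V = 1)
    -- `M` is stable under `F` and the restriction of `F` is an isomorphism up to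
    -- a power of `p`:
    (hVF : ∃ A : Matrix (Fin l) (Fin l) (ERing p k),
      (∀ i j, A i j ∈ EDagSet p k coeff) ∧
      Φ' * V.map ⇑σ = V * A ∧
      ∃ (Ai : Matrix (Fin l) (Fin l) (ERing p k)) (j : ℕ),
        (∀ a b, Ai a b ∈ EDagSet p k coeff) ∧
        A * Ai = ((p : ERing p k) ^ j) • 1 ∧ Ai * A = ((p : ERing p k) ^ j) • 1)
    -- `M` is stable under `∇`:
    (hVnabla : ∃ C : Matrix (Fin l) (Fin l) (ERing p k),
      (∀ i j, C i j ∈ EDagSet p k coeff) ∧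
      V.map ⇑d + N' * V = V * C) :
    -- Then there is a sub-`(σ,∇)`-module `M''` of `M'` over `𝓔_+`, spanned by the
    -- columns of a matrix `W` over `𝓔_+`, with `M = M''⊗_{𝓔_+}𝓔^†`:
    ∃ W : Matrix (Fin n) (Fin l) (ERing p k),
      (∀ i j, W i j ∈ EPlusSet p k) ∧
      -- `W` and `V` have the same `𝓔^†`-column span:
      (∃ G Gi : Matrix (Fin l) (Fin l) (ERing p k),
        (∀ i j, G i j ∈ EDagSet p k coeff) ∧ (∀ i j, Gi i j ∈ EDagSet p k coeff) ∧
        G * Gi = 1 ∧ Gi * G = 1 ∧ V = W * G) ∧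
      -- `M''` is stable under `F`, with `F` an isomorphism up to a power of `p`:
      (∃ A₀ : Matrix (Fin l) (Fin l) (ERing p k),
        (∀ i j, A₀ i j ∈ EPlusSet p k) ∧
        Φ' * W.map ⇑σ = W * A₀ ∧
        ∃ (A₀i : Matrix (Fin l) (Fin l) (ERing p k)) (j : ℕ),
          (∀ a b, A₀i a b ∈ EPlusSet p k) ∧
          A₀ * A₀i = ((p : ERing p k) ^ j) • 1 ∧ A₀i * A₀ = ((p : ERing p k) ^ j) • 1) ∧
      -- `M''` is stable under `∇`:
      (∃ C₀ : Matrix (Fin l) (Fin l) (ERing p k),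
        (∀ i j, C₀ i j ∈ EPlusSet p k) ∧
        W.map ⇑d + N' * W = W * C₀) := by
  have hp := WittVector.irreducible p (k := k)
  have h := isBilateralSeriesRing_gammaRing hcoeff_laurent hcoeff_inj hsurj
  have := isAdicComplete_maximalIdeal_wittVector p k
  have := h.isDomain hp
  obtain ⟨Ψ, j, hΨ, hΦΨ, -⟩ := hM'F
  obtain ⟨L, hL, hLV⟩ := hVrank
  obtain ⟨A, hA, hF, A', j', hA', hAA', -⟩ := hVF
  obtain ⟨C, -, hC⟩ := hVnabla
  have hq2 : 2 ≤ q := hq ▸ (Fact.out : p.Prime).two_le.trans (Nat.le_self_pow hf.ne' p)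
  exact statement6_general hp h hq2 ⟨hσu, hσO, hσEp⟩
    (d := d.toLinearMap.toAddMonoidHom) d.leibniz hdEp hM'mem.1 hM'mem.2 hΨ hΦΨ hVmem hL hLV
    hA hA' hAA' hF hC
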